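/- Ramis–Sibuya theorem for asymptotics with respect to a germ (Theorem 7.17): Let d ≥ 1, s > 0, r > 0, and P holomorphic on D(0;r) with P(0) = 0 and P not identically zero. Suppose the P-sectors Π_j = Π_P(a_j,b_j;r), 1 ≤ j ≤ m, cover the set {x ∈ D(0;r) : P(x) ≠ 0 and x_i ≠ 0 for all i}, and let f_j : Π_j → ℂ be bounded holomorphic functions such that there exist constants γ, C > 0 with |f_{j_1}(x) − f_{j_2}(x)| ≤ C·exp(−γ/|P(x)|^{1/s}) for all j_1, j_2 ∈ {1,…,m} and all x ∈ Π_{j_1} ∩ Π_{j_2}. Then there exist ρ > 0, a sequence (g_n) of bounded holomorphic functions on D(0;ρ), and constants K, A > 0 such that sup_{D(0;ρ)}|g_n| ≤ K·A^n·Γ(sn+1) for every n and, for every j ∈ {1,…,m}, every N ∈ ℕ, and every x ∈ Π_j ∩ D(0;ρ), |f_j(x) − Σ_{n<N} g_n(x)·P(x)^n| ≤ K·A^N·Γ(sN+1)·|P(x)|^N; in particular all f_j have a common P-s-Gevrey asymptotic expansion. -/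

import Mathlib

open Set Complex

noncomputable section

/-- Open polydisk of radius `r` centered at `0` in `ℂ^d`. -/
def polydisk (d : ℕ) (r : ℝ) : Set (Fin d → ℂ) :=
  {x | ∀ j, ‖x j‖ < r}

/-- The `P`-sector `Π_P(a,b;r)`. -/
def PSector (d : ℕ) (P : (Fin d → ℂ) → ℂ) (a b r : ℝ) : Set (Fin d → ℂ) :=
  {x | (∀ j, 0 < ‖x j‖ ∧ ‖x j‖ < r) ∧ P x ≠ 0 ∧
    ∃ θ ∈ Set.Ioo a b, P x = (‖P x‖ : ℂ) * Complex.exp (θ * Complex.I)}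

/-!
Choose a partition of unity `φ j` subordinate to the sectors, homogeneous of degree zero, and glue
`F = ∑ j, φ j (P) * f j` on `{P ≠ 0}`. Since `∑ j, ∂̄(φ j (P)) = 0`, the form `∂̄F` only involves
the differences `f j - f k`, so it is `O(exp (-γ / |P| ^ (1 / s)))` and `∂̄F / P ^ n` is bounded
by a Gevrey sequence in `n`. These forms extend by zero to closed forms across `{P = 0}`; solve
`∂̄(u n) = ∂̄F / P ^ n`, `u 0 = F`, by a Cauchy transform along a line on which `P` does not
vanish identically. Then `g n = u n - P * u (n + 1)` is holomorphic and bounded off `{P = 0}`,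
hence extends, and `F - ∑ n < N, g n * P ^ n = P ^ N * u N` by telescoping.

To take the Cauchy transform along the line, `∂̄F / P ^ n` is cut off by a function of the
coordinate along the line; the cut-off form remains closed if, where the cut-off is not constant,
the form vanishes on vectors transverse to the line. This is arranged by composing the `φ j` not
with `P` but with a perturbation of `P` of small relative error which, away from the origin of the
line, depends only on the coordinate along it.
-/

namespace RamisSibuya

open MeasureTheory Metric Topology Filter

/-! ### Osgood's lemma -/

section Osgood

variable {n : ℕ}

lemma cons_mem_closedBall {c : Fin (n + 1) → ℂ} {R : ℝ} {z : ℂ} {y : Fin n → ℂ}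
    (hz : z ∈ closedBall (c 0) R) (hy : y ∈ closedBall (c ∘ Fin.succ) R) :
    (Fin.cons z y : Fin (n + 1) → ℂ) ∈ closedBall c R := by
  rw [mem_closedBall, dist_pi_le_iff (dist_nonneg.trans hz), Fin.forall_fin_succ]
  exact ⟨hz, fun i => (dist_le_pi_dist y (c ∘ Fin.succ) i).trans hy⟩

lemma continuous_torusMap (c : Fin n → ℂ) (R : Fin n → ℝ) : Continuous (torusMap c R) := by
  unfold torusMap
  fun_prop

lemma torusMap_mem_closedBall {R : ℝ} (hR : 0 ≤ R) (c : Fin n → ℂ) (θ : Fin n → ℝ) :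
    torusMap c (fun _ => R) θ ∈ closedBall c R := by
  rw [mem_closedBall, dist_pi_le_iff hR]
  intro i
  simp [torusMap, dist_eq_norm, abs_of_nonneg hR, norm_exp_ofReal_mul_I]

lemma torusMap_sub_ne_zero {c w : Fin n → ℂ} {R : ℝ} (hw : w ∈ ball c R) (θ : Fin n → ℝ)
    (i : Fin n) : torusMap c (fun _ => R) θ i - w i ≠ 0 := by
  intro h
  have hwi : dist (w i) (c i) < R := (dist_le_pi_dist w c i).trans_lt hw
  rw [← sub_eq_zero.1 h, dist_eq_norm] at hwi
  simp [torusMap, abs_of_pos (pos_of_mem_ball hw), norm_exp_ofReal_mul_I] at hwi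

lemma torusIntegrable_prod_sub_inv_mul {f : (Fin n → ℂ) → ℂ} {c w : Fin n → ℂ} {R : ℝ}
    (hf : ContinuousOn f (closedBall c R)) (hw : w ∈ ball c R) :
    TorusIntegrable (fun z => (∏ i, (z i - w i)⁻¹) * f z) c (fun _ => R) := by
  refine Continuous.integrableOn_Icc (.mul (continuous_finsetProd _ fun i _ => ?_) ?_)
  · have hi : Continuous fun θ => torusMap c (fun _ => R) θ i :=
      (continuous_apply i).comp (continuous_torusMap c fun _ => R)
    exact (hi.sub continuous_const).inv₀ fun θ => torusMap_sub_ne_zero hw θ i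
  · exact hf.comp_continuous (continuous_torusMap c fun _ => R)
      (torusMap_mem_closedBall (pos_of_mem_ball hw).le c)

theorem torusIntegral_prod_sub_inv_mul {f : (Fin n → ℂ) → ℂ} {c w : Fin n → ℂ} {R : ℝ}
    (hf : DifferentiableOn ℂ f (closedBall c R)) (hw : w ∈ ball c R) :
    (∯ z in T(c, fun _ => R), (∏ i, (z i - w i)⁻¹) * f z) = (2 * Real.pi * I) ^ n * f w := by
  have hR : 0 < R := pos_of_mem_ball hw
  induction n with
  | zero =>
    rw [torusIntegral_dim0]
    simp [Subsingleton.elim w c]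
  | succ n ih =>
    have hw_head : w 0 ∈ ball (c 0) R := (dist_le_pi_dist w c 0).trans_lt hw
    have hw_tail : w ∘ Fin.succ ∈ ball (c ∘ Fin.succ) R :=
      (dist_pi_lt_iff hR).2 fun i => (dist_le_pi_dist w c i.succ).trans_lt hw
    have inner : ∀ x ∈ sphere (c 0) R,
        (∯ y in T(c ∘ Fin.succ, (fun _ => R) ∘ Fin.succ),
          (∏ i, ((Fin.cons x y : Fin (n + 1) → ℂ) i - w i)⁻¹) * f (Fin.cons x y)) =
        (x - w 0)⁻¹ • ((2 * Real.pi * I) ^ n * f (Fin.cons x (w ∘ Fin.succ))) := by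
      intro x hx
      have hfx : DifferentiableOn ℂ (fun y => f (Fin.cons x y)) (closedBall (c ∘ Fin.succ) R) :=
        hf.comp ((differentiable_const x).finCons differentiable_id).differentiableOn
          fun y hy => cons_mem_closedBall (sphere_subset_closedBall hx) hy
      rw [← ih hfx hw_tail, smul_eq_mul, ← torusIntegral_const_mul]
      simp only [Fin.prod_univ_succ, Fin.cons_zero, Fin.cons_succ, mul_assoc]
      rfl
    have outer : DifferentiableOn ℂ
        (fun x => (2 * Real.pi * I) ^ n * f (Fin.cons x (w ∘ Fin.succ))) (closedBall (c 0) R) :=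
      (hf.comp (differentiable_id.finCons
        (differentiable_const (w ∘ Fin.succ))).differentiableOn
        fun x hx => cons_mem_closedBall hx (ball_subset_closedBall hw_tail)).const_mul _
    rw [torusIntegral_succ (torusIntegrable_prod_sub_inv_mul hf.continuousOn hw),
      circleIntegral.integral_congr hR.le inner, outer.circleIntegral_sub_inv_smul hw_head,
      show (Fin.cons (w 0) (w ∘ Fin.succ) : Fin (n + 1) → ℂ) = w from Fin.cons_self_tail w,
      smul_eq_mul]
    ring

/-- Integration against a finite measure, as a continuous linear functional on `C(X, ℂ)`. -/
def integralCLM {X : Type*} [TopologicalSpace X] [CompactSpace X] [MeasurableSpace X]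
    [BorelSpace X] (μ : Measure X) [IsFiniteMeasure μ] : C(X, ℂ) →L[ℂ] ℂ :=
  LinearMap.mkContinuous
    { toFun g := ∫ x, g x ∂μ
      map_add' g h := integral_add
        (g.continuous.integrable_of_hasCompactSupport (.of_compactSpace _))
        (h.continuous.integrable_of_hasCompactSupport (.of_compactSpace _))
      map_smul' a g := integral_const_mul a _ }
    (μ.real univ) fun g => by
      rw [mul_comm]
      exact norm_integral_le_of_norm_le_const (.of_forall g.norm_coe_le_norm)

/-- The parameter cube of the torus, as a compact space to integrate over. -/
abbrev torusCube (n : ℕ) : Type :=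
  Icc (0 : Fin n → ℝ) fun _ => 2 * Real.pi

lemma isFiniteMeasure_torusCube :
    IsFiniteMeasure (Measure.comap Subtype.val volume : Measure (torusCube n)) := by
  have := IsFiniteMeasureOnCompacts.comap' (volume : Measure (Fin n → ℝ))
    continuous_subtype_val (MeasurableEmbedding.subtype_coe
      (measurableSet_Icc (a := (0 : Fin n → ℝ)) (b := fun _ => 2 * Real.pi)))
  infer_instance

/-- The function `θ ↦ ζ_i(θ) - w_i` on the cube parametrizing the torus of radius `R` about `c`. -/
def torusDiff (c : Fin n → ℂ) (R : ℝ) (i : Fin n) (w : Fin n → ℂ) : C(torusCube n, ℂ) :=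
  ⟨fun θ => torusMap c (fun _ => R) θ i,
    (continuous_apply i).comp ((continuous_torusMap c fun _ => R).comp continuous_subtype_val)⟩ -
  algebraMap ℂ C(torusCube n, ℂ) (w i)

lemma analyticAt_torusDiff (c : Fin n → ℂ) (R : ℝ) (i : Fin n) (w : Fin n → ℂ) :
    AnalyticAt ℂ (torusDiff c R i) w :=
  analyticAt_const.sub (((algebraMapCLM ℂ C(torusCube n, ℂ)).comp
    (ContinuousLinearMap.proj (R := ℂ) (φ := fun _ : Fin n => ℂ) i)).analyticAt w)

lemma torusDiff_apply_ne_zero {c w : Fin n → ℂ} {R : ℝ} (hw : w ∈ ball c R) (i : Fin n)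
    (θ : torusCube n) : torusDiff c R i w θ ≠ 0 :=
  torusMap_sub_ne_zero hw θ i

lemma isUnit_torusDiff {c w : Fin n → ℂ} {R : ℝ} (hw : w ∈ ball c R) (i : Fin n) :
    IsUnit (torusDiff c R i w) :=
  (ContinuousMap.isUnit_iff_forall_ne_zero _).2 (torusDiff_apply_ne_zero hw i)

lemma inverse_torusDiff_apply {c w : Fin n → ℂ} {R : ℝ} (hw : w ∈ ball c R) (i : Fin n)
    (θ : torusCube n) :
    Ring.inverse (torusDiff c R i w) θ = (torusMap c (fun _ => R) θ i - w i)⁻¹ := by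
  refine eq_inv_of_mul_eq_one_left ?_
  change (Ring.inverse (torusDiff c R i w) * torusDiff c R i w) θ = 1
  rw [Ring.inverse_mul_cancel _ (isUnit_torusDiff hw i), ContinuousMap.one_apply]

theorem analyticOnNhd_of_differentiableOn {U : Set (Fin n → ℂ)} (hU : IsOpen U)
    {f : (Fin n → ℂ) → ℂ} (hf : DifferentiableOn ℂ f U) : AnalyticOnNhd ℂ f U := by
  intro c hc
  obtain ⟨R, hR, hRU⟩ := nhds_basis_closedBall.mem_iff.1 (hU.mem_nhds hc)
  have hfR := hf.mono hRU
  have := isFiniteMeasure_torusCube (n := n)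
  have hjac : Continuous fun θ : Fin n → ℝ => ∏ i, (R : ℂ) * exp (θ i * I) * I := by fun_prop
  let density : C(torusCube n, ℂ) :=
    ⟨fun θ => (∏ i, (R : ℂ) * exp ((θ : Fin n → ℝ) i * I) * I) * f (torusMap c (fun _ => R) θ),
      (hjac.comp continuous_subtype_val).mul (hfR.continuousOn.comp_continuous
        ((continuous_torusMap c fun _ => R).comp continuous_subtype_val)
        fun θ => torusMap_mem_closedBall hR.le c θ)⟩
  -- The Cauchy integral is a bounded functional of the kernel, which is analytic in `w`
  -- as a map into the Banach algebra of continuous functions on the torus.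
  let L := integralCLM (Measure.comap Subtype.val volume : Measure (torusCube n))
  have cauchy : ∀ w ∈ ball c R, L (density * ∏ i, Ring.inverse (torusDiff c R i w)) =
      (2 * Real.pi * I) ^ n * f w := by
    intro w hw
    rw [← torusIntegral_prod_sub_inv_mul hfR hw, torusIntegral,
      ← integral_subtype_comap measurableSet_Icc]
    refine integral_congr_ae (.of_forall fun θ => ?_)
    simp only [density, ContinuousMap.mul_apply, ContinuousMap.coe_mk, ContinuousMap.prod_apply,
      inverse_torusDiff_apply hw, smul_eq_mul]
    ring
  have analytic : AnalyticAt ℂ (fun w => ((2 * Real.pi * I) ^ n : ℂ)⁻¹ *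
      L (density * ∏ i, Ring.inverse (torusDiff c R i w))) c := by
    refine analyticAt_const.mul ((L.analyticAt _).comp (analyticAt_const.mul
      (Finset.analyticAt_fun_prod _ fun i _ => ?_)))
    obtain ⟨u, hu⟩ := isUnit_torusDiff (mem_ball_self hR) i
    exact AnalyticAt.fun_comp (hu ▸ analyticAt_inverse u) (analyticAt_torusDiff c R i c)
  refine analytic.congr ?_
  filter_upwards [ball_mem_nhds c hR] with w hw
  rw [cauchy w hw, inv_mul_cancel_left₀ (pow_ne_zero _ (by simp [Real.pi_ne_zero]))]

end Osgood

/-! ### Riemann's extension theorem -/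

section RiemannExtension

variable {E : Type*} [NormedAddCommGroup E] [NormedSpace ℂ E]

lemma eventually_nhdsNE_ne_zero {q : ℂ → ℂ} {S : Set ℂ} {z t : ℂ} (hq : AnalyticOnNhd ℂ q S)
    (hS : IsPreconnected S) (hz : z ∈ S) (hqz : q z ≠ 0) (ht : t ∈ S) :
    ∀ᶠ w in 𝓝[≠] t, q w ≠ 0 :=
  (hq t ht).eventually_eq_zero_or_eventually_ne_zero.resolve_left fun h =>
    hqz (hq.eqOn_zero_of_preconnected_of_eventuallyEq_zero hS ht h hz)

lemma analyticAt_line (x v : E) (t : ℂ) :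
    AnalyticAt ℂ (fun t : ℂ => x + t • v) t :=
  analyticAt_const.add (analyticAt_id.smul analyticAt_const)

lemma eventually_nhdsNE_ne_zero_line {Q : E → ℂ} {p y : E} {R : ℝ}
    (hQ : AnalyticOnNhd ℂ Q (ball p R)) (hy : y ∈ ball p R) (hQy : Q y ≠ 0) :
    ∀ᶠ t in 𝓝[≠] (0 : ℂ), Q (p + t • (y - p)) ≠ 0 := by
  let S : Set ℂ := (fun t : ℂ => t • (y - p)) ⁻¹' ball 0 R
  have hS : Convex ℝ S := (convex_ball (0 : E) R).is_linear_preimage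
    ⟨fun a b => add_smul a b _, fun a b => by simp [mul_smul]⟩
  refine eventually_nhdsNE_ne_zero (S := S) (z := 1) (fun t ht => ?_) hS.isPreconnected ?_ ?_ ?_
  · exact (hQ _ (by simpa [S] using ht)).comp (analyticAt_line p (y - p) t)
  · simpa [S, dist_eq_norm] using hy
  · simpa using hQy
  · simpa [S] using pos_of_mem_ball hy

theorem exists_differentiableOn_extension {q g : ℂ → ℂ} {S : Set ℂ} {z : ℂ} {M : ℝ}
    (hS : IsOpen S) (hS' : IsPreconnected S) (hq : AnalyticOnNhd ℂ q S) (hz : z ∈ S)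
    (hqz : q z ≠ 0) (hg : ∀ t ∈ S, q t ≠ 0 → DifferentiableAt ℂ g t)
    (hM : ∀ t ∈ S, q t ≠ 0 → ‖g t‖ ≤ M) :
    ∃ G : ℂ → ℂ, DifferentiableOn ℂ G S ∧ ∀ t ∈ S, q t ≠ 0 → G t = g t := by
  have heq : ∀ t ∈ S, q t ≠ 0 → limUnder (𝓝[≠] t) g = g t := fun t ht hqt =>
    ((hg t ht hqt).continuousAt.tendsto.mono_left nhdsWithin_le_nhds).limUnder_eq
  refine ⟨fun t => limUnder (𝓝[≠] t) g, fun t ht => ?_, heq⟩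
  obtain ⟨ε, hε, hεS⟩ := Metric.eventually_nhds_iff_ball.1 <|
    (eventually_nhdsWithin_iff.1 (eventually_nhdsNE_ne_zero hq hS' hz hqz ht)).and (hS.mem_nhds ht)
  have hupdate := differentiableOn_update_limUnder_of_bddAbove (f := g) (ball_mem_nhds t hε)
    (fun w hw => (hg w (hεS w hw.1).2 ((hεS w hw.1).1 hw.2)).differentiableWithinAt)
    ⟨M, by rintro _ ⟨w, hw, rfl⟩; exact hM w (hεS w hw.1).2 ((hεS w hw.1).1 hw.2)⟩
  refine (((hupdate t (mem_ball_self hε)).differentiableAt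
    (ball_mem_nhds t hε)).congr_of_eventuallyEq ?_).differentiableWithinAt
  filter_upwards [ball_mem_nhds t hε] with w hw
  rcases eq_or_ne w t with rfl | hwt
  · rw [Function.update_self]
  · rw [Function.update_of_ne hwt]
    exact heq w (hεS w hw).2 ((hεS w hw).1 hwt)

lemma circleAverage_eq_of_bounded_off_zeros {q g : ℂ → ℂ} {δ δ' M : ℝ} (hδ : 0 < δ) (hδ' : δ < δ')
    (hq : AnalyticOnNhd ℂ q (ball 0 δ')) (hqδ : ∀ t ∈ sphere (0 : ℂ) δ, q t ≠ 0)
    (hq0 : q 0 ≠ 0) (hg : ∀ t ∈ ball (0 : ℂ) δ', q t ≠ 0 → DifferentiableAt ℂ g t)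
    (hM : ∀ t ∈ ball (0 : ℂ) δ', q t ≠ 0 → ‖g t‖ ≤ M) :
    Real.circleAverage g 0 δ = g 0 := by
  have h0 : (0 : ℂ) ∈ ball (0 : ℂ) δ' := mem_ball_self (hδ.trans hδ')
  obtain ⟨G, hG, hGg⟩ := exists_differentiableOn_extension isOpen_ball
    (convex_ball _ _).isPreconnected hq h0 hq0 hg hM
  have hsphere : Set.EqOn g G (sphere 0 |δ|) := by
    rw [abs_of_pos hδ]
    exact fun t ht => (hGg t (sphere_subset_closedBall.trans (closedBall_subset_ball hδ') ht)
      (hqδ t ht)).symm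
  rw [Real.circleAverage_congr_sphere hsphere, ← hGg 0 h0 hq0]
  refine DiffContOnCl.circleAverage (DifferentiableOn.diffContOnCl ?_)
  rw [abs_of_pos hδ, closure_ball _ hδ.ne']
  exact hG.mono (closedBall_subset_ball hδ')

lemma exists_isCompact_forall_add_smul_mem [ProperSpace E] {V : Set E} (hV : IsOpen V) {x₀ v : E}
    {K : Set ℂ} (hK : IsCompact K) (hx₀ : ∀ t ∈ K, x₀ + t • v ∈ V) :
    ∃ ε > 0, ∃ L ⊆ V, IsCompact L ∧ ∀ x ∈ ball x₀ ε, ∀ t ∈ K, x + t • v ∈ L := by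
  have hKv : IsCompact ((fun t : ℂ => x₀ + t • v) '' K) := hK.image (by fun_prop)
  obtain ⟨ε, hε, hεV⟩ := hKv.exists_cthickening_subset_open hV (by
    rintro _ ⟨t, ht, rfl⟩
    exact hx₀ t ht)
  refine ⟨ε, hε, _, hεV, hKv.cthickening, fun x hx t ht =>
    mem_cthickening_of_dist_le _ (x₀ + t • v) _ _ ⟨t, ht, rfl⟩ ?_⟩
  simpa using (mem_ball.1 hx).le

lemma differentiableAt_circleAverage [ProperSpace E] {V : Set E} (hV : IsOpen V) {f : E → ℂ}
    (hf : AnalyticOnNhd ℂ f V) {x₀ v : E} {δ : ℝ} (hδ : 0 ≤ δ)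
    (hx₀ : ∀ t ∈ sphere (0 : ℂ) δ, x₀ + t • v ∈ V) :
    DifferentiableAt ℂ (fun x => Real.circleAverage (fun t => f (x + t • v)) 0 δ) x₀ := by
  obtain ⟨ε, hε, L, hLV, hL, hmem⟩ :=
    exists_isCompact_forall_add_smul_mem hV (isCompact_sphere _ _) hx₀
  replace hmem : ∀ x ∈ ball x₀ ε, ∀ θ : ℝ, x + circleMap 0 δ θ • v ∈ L := fun x hx θ =>
    hmem x hx _ (circleMap_mem_sphere _ hδ θ)
  have hf' : ContinuousOn (fderiv ℂ f) V := fun y hy =>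
    (hf y hy).fderiv.continuousAt.continuousWithinAt
  obtain ⟨B, hB⟩ := hL.exists_bound_of_continuousOn (hf'.mono hLV)
  have hcont : ∀ x ∈ ball x₀ ε, Continuous fun θ : ℝ => f (x + circleMap 0 δ θ • v) :=
    fun x hx => hf.continuousOn.comp_continuous (by fun_prop) fun θ => hLV (hmem x hx θ)
  unfold Real.circleAverage
  refine DifferentiableAt.const_smul ?_ ((2 * Real.pi)⁻¹ : ℝ)
  refine (intervalIntegral.hasFDerivAt_integral_of_dominated_of_fderiv_le
    (F' := fun x θ => fderiv ℂ f (x + circleMap 0 δ θ • v)) (bound := fun _ => B)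
    (ball_mem_nhds x₀ hε) ?_ ?_ ?_ ?_ ?_ ?_).differentiableAt
  · filter_upwards [ball_mem_nhds x₀ hε] with x hx
    exact (hcont x hx).aestronglyMeasurable
  · exact (hcont x₀ (mem_ball_self hε)).intervalIntegrable _ _
  · exact (hf'.comp_continuous (by fun_prop)
      fun θ => hLV (hmem x₀ (mem_ball_self hε) θ)).aestronglyMeasurable
  · exact .of_forall fun θ _ x hx => hB _ (hmem x hx θ)
  · exact intervalIntegrable_const
  · exact .of_forall fun θ _ x hx => (hasFDerivAt_comp_add_right _).2
      (hf _ (hLV (hmem x hx θ))).differentiableAt.hasFDerivAt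

lemma exists_transverse_disc {Q : E → ℂ} {p : E} {R : ℝ} (hR : 0 < R)
    (hQ : AnalyticOnNhd ℂ Q (ball p R)) (hQp : ¬ ∀ᶠ x in 𝓝 p, Q x = 0) :
    ∃ v : E, ∃ η > 0, ∀ t ∈ ball (0 : ℂ) η, ‖t • v‖ < R ∧ (t ≠ 0 → Q (p + t • v) ≠ 0) := by
  obtain ⟨y, hyR, hQy⟩ : ∃ y ∈ ball p R, Q y ≠ 0 := by
    by_contra! h
    exact hQp (eventually_of_mem (ball_mem_nhds p hR) h)
  have hsmall : ∀ᶠ t in 𝓝 (0 : ℂ), ‖t • (y - p)‖ < R := by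
    have : Tendsto (fun t : ℂ => ‖t • (y - p)‖) (𝓝 0) (𝓝 ‖(0 : ℂ) • (y - p)‖) :=
      Continuous.tendsto (by fun_prop) 0
    exact this.eventually_lt_const (by simpa using hR)
  obtain ⟨η, hη, h⟩ := Metric.eventually_nhds_iff_ball.1
    (hsmall.and (eventually_nhdsWithin_iff.1 (eventually_nhdsNE_ne_zero_line hQ hyR hQy)))
  exact ⟨y - p, η, hη, h⟩

-- Averaging `f` over small circles transverse to `{Q = 0}` avoids the exceptional set, and where
-- `f` is defined the average returns `f` by the one-variable removable singularity theorem.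
lemma exists_local_extension [ProperSpace E] {U : Set E} (hU : IsOpen U) {Q f : E → ℂ} {M : ℝ}
    (hQ : AnalyticOnNhd ℂ Q U) (hf : AnalyticOnNhd ℂ f (U ∩ {x | Q x ≠ 0}))
    (hM : ∀ x ∈ U, Q x ≠ 0 → ‖f x‖ ≤ M) {p : E} (hp : p ∈ U) (hQp : ¬ ∀ᶠ x in 𝓝 p, Q x = 0) :
    ∃ F : E → ℂ, ∀ᶠ x in 𝓝 p, DifferentiableAt ℂ F x ∧ (Q x ≠ 0 → F x = f x) := by
  have hV : IsOpen (U ∩ {x | Q x ≠ 0}) :=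
    hQ.continuousOn.isOpen_inter_preimage hU isOpen_compl_singleton
  obtain ⟨R, hR, hRU⟩ := Metric.isOpen_iff.1 hU p hp
  obtain ⟨v, η, hη, hv⟩ := exists_transverse_disc (half_pos hR)
    (hQ.mono ((ball_subset_ball (half_le_self hR.le)).trans hRU)) hQp
  have hline : ∀ x ∈ ball p (R / 2), ∀ t ∈ ball (0 : ℂ) η, x + t • v ∈ U := by
    refine fun x hx t ht => hRU ?_
    rw [mem_ball, dist_eq_norm, show x + t • v - p = (x - p) + t • v by abel]
    linarith [norm_add_le (x - p) (t • v), (hv t ht).1, mem_ball_iff_norm.1 hx]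
  have hcircle : ∀ t ∈ sphere (0 : ℂ) (η / 2), p + t • v ∈ U ∩ {x | Q x ≠ 0} := fun t ht =>
    have ht' : t ∈ ball (0 : ℂ) η :=
      sphere_subset_closedBall.trans (closedBall_subset_ball (half_lt_self hη)) ht
    ⟨hline p (mem_ball_self (half_pos hR)) t ht',
      (hv t ht').2 (ne_of_mem_sphere ht (half_pos hη).ne')⟩
  obtain ⟨ε, hε, L, hLV, -, hmem⟩ :=
    exists_isCompact_forall_add_smul_mem hV (isCompact_sphere _ _) hcircle
  refine ⟨fun x => Real.circleAverage (fun t => f (x + t • v)) 0 (η / 2), ?_⟩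
  filter_upwards [ball_mem_nhds p hε, ball_mem_nhds p (half_pos hR)] with x hxε hxR
  refine ⟨differentiableAt_circleAverage hV hf (half_pos hη).le
    fun t ht => hLV (hmem x hxε t ht), fun hQx => ?_⟩
  have haverage := circleAverage_eq_of_bounded_off_zeros (q := fun t => Q (x + t • v))
    (g := fun t => f (x + t • v)) (half_pos hη) (half_lt_self hη)
    (fun t ht => (hQ _ (hline x hxR t ht)).comp_of_eq (analyticAt_line x v t) rfl)
    (fun t ht => (hLV (hmem x hxε t ht)).2) (by simpa using hQx)
    (fun t ht hq => ((hf _ ⟨hline x hxR t ht, hq⟩).comp_of_eq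
      (analyticAt_line x v t) rfl).differentiableAt)
    (fun t ht hq => hM _ (hline x hxR t ht) hq)
  simpa using haverage

theorem exists_analyticOnNhd_extension {n : ℕ} {U : Set (Fin n → ℂ)} (hU : IsOpen U)
    {Q f : (Fin n → ℂ) → ℂ} {M : ℝ} (hQ : AnalyticOnNhd ℂ Q U)
    (hQne : ∀ p ∈ U, ¬ ∀ᶠ x in 𝓝 p, Q x = 0) (hf : AnalyticOnNhd ℂ f (U ∩ {x | Q x ≠ 0}))
    (hM : ∀ x ∈ U, Q x ≠ 0 → ‖f x‖ ≤ M) :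
    ∃ F : (Fin n → ℂ) → ℂ, AnalyticOnNhd ℂ F U ∧ (∀ x ∈ U, Q x ≠ 0 → F x = f x) ∧
      ∀ x ∈ U, ‖F x‖ ≤ M := by
  have hne : ∀ p ∈ U, (𝓝[{x | Q x ≠ 0}] p).NeBot := fun p hp => by
    rw [← mem_closure_iff_nhdsWithin_neBot, mem_closure_iff_frequently]
    exact not_eventually.1 (hQne p hp)
  let F : (Fin n → ℂ) → ℂ := fun x => limUnder (𝓝[{x | Q x ≠ 0}] x) f
  have hF : ∀ p ∈ U, ∀ G : (Fin n → ℂ) → ℂ, ContinuousAt G p →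
      (∀ᶠ x in 𝓝 p, Q x ≠ 0 → G x = f x) → F p = G p := fun p hp G hG hGf =>
    have := hne p hp
    Tendsto.limUnder_eq <| (hG.tendsto.mono_left nhdsWithin_le_nhds).congr' <|
      eventually_nhdsWithin_iff.2 hGf
  have hF_diff : DifferentiableOn ℂ F U := fun p hp => by
    obtain ⟨G, hG⟩ := exists_local_extension hU hQ hf hM hp (hQne p hp)
    refine (hG.self_of_nhds.1.congr_of_eventuallyEq ?_).differentiableWithinAt
    filter_upwards [hG.eventually_nhds, hU.mem_nhds hp] with x hx hxU
    exact hF x hxU G hx.self_of_nhds.1.continuousAt (hx.mono fun _ h => h.2)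
  have hF_eq : ∀ x ∈ U, Q x ≠ 0 → F x = f x := fun x hx hQx =>
    hF x hx f (hf x ⟨hx, hQx⟩).continuousAt (.of_forall fun _ _ => rfl)
  refine ⟨F, analyticOnNhd_of_differentiableOn hU hF_diff, hF_eq, fun x hx => ?_⟩
  have := hne x hx
  have hF_cont : ContinuousAt F x := (hF_diff.differentiableAt (hU.mem_nhds hx)).continuousAt
  refine le_of_tendsto
    (hF_cont.norm.tendsto.mono_left (nhdsWithin_le_nhds (s := {x | Q x ≠ 0})))
    (eventually_nhdsWithin_iff.2 ?_)
  filter_upwards [hU.mem_nhds hx] with y hy hQy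
  exact (hF_eq y hy hQy).symm ▸ hM y hy hQy

end RiemannExtension

/-! ### Gevrey sequences -/

section Gevrey

lemma rpow_mul_exp_neg_le_Gamma {a y : ℝ} (ha : 0 ≤ a) (hy : 0 < y) :
    y ^ a * Real.exp (-y) ≤ Real.Gamma (a + 1) := by
  have hint := Real.GammaIntegral_convergent (s := a + 1) (by linarith)
  calc y ^ a * Real.exp (-y) = ∫ x in Ioi y, Real.exp (-x) * y ^ a := by
        rw [integral_mul_const, integral_exp_neg_Ioi, mul_comm]
    _ ≤ ∫ x in Ioi y, Real.exp (-x) * x ^ (a + 1 - 1) := by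
        refine setIntegral_mono_on ((integrableOn_exp_neg_Ioi y).mul_const _)
          (hint.mono_set (Ioi_subset_Ioi hy.le)) measurableSet_Ioi fun x (hx : y < x) => ?_
        rw [add_sub_cancel_right]
        gcongr
    _ ≤ ∫ x in Ioi 0, Real.exp (-x) * x ^ (a + 1 - 1) := by
        refine setIntegral_mono_set hint ?_ (Ioi_subset_Ioi hy.le).eventuallyLE
        filter_upwards [ae_restrict_mem measurableSet_Ioi] with x (hx : 0 < x)
        exact mul_nonneg (Real.exp_nonneg _) (Real.rpow_nonneg hx.le _)
    _ = Real.Gamma (a + 1) := (Real.Gamma_eq_integral (by linarith)).symm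

lemma integrableOn_rpow_mul_exp_neg_half {a : ℝ} (ha : 0 < a) :
    IntegrableOn (fun t : ℝ => t ^ (a - 1) * Real.exp (-(1 / 2 * t))) (Ioi 0) := by
  simpa using integrableOn_rpow_mul_exp_neg_mul_rpow (s := a - 1) (p := 1) (b := 1 / 2)
    (by linarith) one_pos (by norm_num)

lemma rpow_mul_exp_neg_half_le {s t : ℝ} (hs : 0 ≤ s) (ht : 0 < t) :
    t ^ s * Real.exp (-(1 / 2 * t)) ≤ 2 ^ s * Real.Gamma (s + 1) := by
  have h := rpow_mul_exp_neg_le_Gamma hs (half_pos ht)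
  rw [Real.div_rpow ht.le zero_le_two, div_mul_eq_mul_div, div_le_iff₀ (by positivity)] at h
  rwa [mul_comm (2 ^ s), one_div_mul_eq_div]

-- Half of the factor `exp (-t)` in the integral for `Γ (a + s)` absorbs `t ^ s`.
lemma Gamma_add_le {a s : ℝ} (ha : 0 < a) (hs : 0 ≤ s) :
    Real.Gamma (a + s) ≤ 2 ^ s * Real.Gamma (s + 1) * 2 ^ a * Real.Gamma a := by
  have hhalf := Real.integral_rpow_mul_exp_neg_mul_Ioi ha (r := 1 / 2) (by norm_num)
  rw [one_div_one_div] at hhalf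
  rw [mul_assoc, ← hhalf, ← integral_const_mul, Real.Gamma_eq_integral (by linarith)]
  refine setIntegral_mono_on (Real.GammaIntegral_convergent (by linarith))
    ((integrableOn_rpow_mul_exp_neg_half ha).const_mul _) measurableSet_Ioi fun t ht => ?_
  rw [mem_Ioi] at ht
  calc Real.exp (-t) * t ^ (a + s - 1)
      = t ^ s * Real.exp (-(1 / 2 * t)) * (t ^ (a - 1) * Real.exp (-(1 / 2 * t))) := by
        rw [show a + s - 1 = s + (a - 1) by ring, Real.rpow_add ht,
          show -t = -(1 / 2 * t) + -(1 / 2 * t) by ring, Real.exp_add]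
        ring
    _ ≤ 2 ^ s * Real.Gamma (s + 1) * (t ^ (a - 1) * Real.exp (-(1 / 2 * t))) := by
        gcongr ?_ * _
        exact rpow_mul_exp_neg_half_le hs ht

lemma Gamma_mul_add_one_pos {s : ℝ} (hs : 0 < s) (n : ℕ) : 0 < Real.Gamma (s * n + 1) :=
  Real.Gamma_pos_of_pos (by positivity)

/-- The prototype `exp (-γ / τ ^ (1 / s))` of a function which is flat of Gevrey order `s`. -/
def expFlat (s γ τ : ℝ) : ℝ := Real.exp (-γ / τ ^ (1 / s))

lemma expFlat_nonneg (s γ τ : ℝ) : 0 ≤ expFlat s γ τ := Real.exp_nonneg _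

/-- The constants in the estimates of `expFlat s γ τ` by powers of `τ`. -/
def flatConst (s γ : ℝ) (n : ℕ) : ℝ := ((γ ^ s)⁻¹) ^ n * Real.Gamma (s * n + 1)

lemma flatConst_nonneg {s γ : ℝ} (hs : 0 < s) (hγ : 0 < γ) (n : ℕ) : 0 ≤ flatConst s γ n :=
  mul_nonneg (by positivity) (Gamma_mul_add_one_pos hs n).le

lemma expFlat_le {s γ τ : ℝ} (hs : 0 < s) (hγ : 0 < γ) (hτ : 0 < τ) (n : ℕ) :
    expFlat s γ τ ≤ flatConst s γ n * τ ^ n := by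
  have h := rpow_mul_exp_neg_le_Gamma (a := s * n) (y := γ / τ ^ (1 / s)) (by positivity)
    (by positivity)
  have hpow : (γ / τ ^ (1 / s)) ^ (s * n) = (γ ^ s) ^ n / τ ^ n := by
    rw [Real.div_rpow hγ.le (by positivity), ← Real.rpow_mul hτ.le, Real.rpow_mul hγ.le,
      Real.rpow_natCast, ← mul_assoc, one_div_mul_cancel hs.ne', one_mul, Real.rpow_natCast]
  rw [hpow, div_mul_eq_mul_div, div_le_iff₀ (by positivity)] at h
  rw [expFlat, flatConst, neg_div, inv_pow, mul_assoc, ← div_eq_inv_mul,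
    le_div_iff₀ (by positivity)]
  linarith

lemma expFlat_div_pow_le {s γ τ : ℝ} (hs : 0 < s) (hγ : 0 < γ) (hτ : 0 < τ) (j k : ℕ) :
    expFlat s γ τ / τ ^ j ≤ flatConst s γ (k + j) * τ ^ k := by
  rw [div_le_iff₀ (by positivity), mul_assoc, ← pow_add]
  exact expFlat_le hs hγ hτ (k + j)

lemma expFlat_le_of_le_two_mul {s γ τ τ' : ℝ} (hs : 0 < s) (hγ : 0 < γ) (hτ' : 0 < τ')
    (h : τ' ≤ 2 * τ) : expFlat s γ τ' ≤ expFlat s (γ / 2 ^ (1 / s)) τ := by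
  rw [expFlat, expFlat, Real.exp_le_exp, neg_div, neg_div, neg_le_neg_iff, div_div,
    ← Real.mul_rpow zero_le_two (by linarith)]
  gcongr

/-- The sequence `a` has Gevrey growth of order `s`. -/
def IsGevrey (s : ℝ) (a : ℕ → ℝ) : Prop :=
  ∃ K A : ℝ, 0 < K ∧ 0 < A ∧ ∀ n : ℕ, a n ≤ K * A ^ n * Real.Gamma (s * n + 1)

lemma isGevrey_flatConst (s : ℝ) {γ : ℝ} (hγ : 0 < γ) : IsGevrey s (flatConst s γ) :=
  ⟨1, (γ ^ s)⁻¹, one_pos, by positivity, fun n => by rw [one_mul, flatConst]⟩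

namespace IsGevrey

variable {s : ℝ} {a b : ℕ → ℝ}

lemma add (hs : 0 < s) (ha : IsGevrey s a) (hb : IsGevrey s b) :
    IsGevrey s fun n => a n + b n := by
  obtain ⟨K, A, hK, hA, h⟩ := ha
  obtain ⟨L, B, hL, hB, h'⟩ := hb
  refine ⟨K + L, max A B, by positivity, by positivity, fun n => ?_⟩
  have := (Gamma_mul_add_one_pos hs n).le
  calc a n + b n ≤ K * A ^ n * Real.Gamma (s * n + 1) + L * B ^ n * Real.Gamma (s * n + 1) :=
        add_le_add (h n) (h' n)
    _ ≤ K * max A B ^ n * Real.Gamma (s * n + 1) + L * max A B ^ n * Real.Gamma (s * n + 1) := by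
        gcongr
        exacts [le_max_left A B, le_max_right A B]
    _ = (K + L) * max A B ^ n * Real.Gamma (s * n + 1) := by ring

protected lemma max (hs : 0 < s) (ha : IsGevrey s a) (hb : IsGevrey s b) :
    IsGevrey s fun n => max (a n) (b n) := by
  obtain ⟨K, A, hK, hA, h⟩ := ha
  obtain ⟨L, B, -, hB, h'⟩ := hb
  refine ⟨K ⊔ L, A ⊔ B, lt_sup_of_lt_left hK, lt_sup_of_lt_left hA, fun n => ?_⟩
  have := (Gamma_mul_add_one_pos hs n).le
  refine max_le ((h n).trans ?_) ((h' n).trans ?_) <;> gcongr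
  exacts [le_sup_left, le_sup_left, le_sup_right, le_sup_right]

lemma const (hs : 0 < s) (c : ℝ) : IsGevrey s fun _ => c := by
  refine ⟨(|c| + 1) * Real.exp 1, 1, by positivity, one_pos, fun n => ?_⟩
  have hΓ : Real.exp (-1) ≤ Real.Gamma (s * n + 1) := by
    simpa using rpow_mul_exp_neg_le_Gamma (a := s * n) (by positivity) one_pos
  calc c ≤ |c| + 1 := (le_abs_self c).trans (by linarith)
    _ = (|c| + 1) * Real.exp 1 * 1 ^ n * Real.exp (-1) := by
        rw [one_pow, mul_one, mul_assoc, ← Real.exp_add, add_neg_cancel, Real.exp_zero, mul_one]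
    _ ≤ (|c| + 1) * Real.exp 1 * 1 ^ n * Real.Gamma (s * n + 1) := by gcongr

lemma const_mul (hs : 0 < s) {c : ℝ} (hc : 0 ≤ c) (ha : IsGevrey s a) :
    IsGevrey s fun n => c * a n := by
  obtain ⟨K, A, hK, hA, h⟩ := ha
  refine ⟨c * K + 1, A, by positivity, hA, fun n => ?_⟩
  have := (Gamma_mul_add_one_pos hs n).le
  calc c * a n ≤ c * (K * A ^ n * Real.Gamma (s * n + 1)) := by gcongr; exact h n
    _ = c * K * A ^ n * Real.Gamma (s * n + 1) := by ring
    _ ≤ (c * K + 1) * A ^ n * Real.Gamma (s * n + 1) := by gcongr; linarith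

lemma shift (hs : 0 < s) (ha : IsGevrey s a) (k : ℕ) : IsGevrey s fun n => a (n + k) := by
  obtain ⟨K, A, hK, hA, h⟩ := ha
  have := Gamma_mul_add_one_pos hs k
  refine ⟨K * A ^ k * (2 ^ (s * k) * Real.Gamma (s * k + 1) * 2), A * 2 ^ s, by positivity,
    by positivity, fun n => ?_⟩
  calc a (n + k) ≤ K * A ^ (n + k) * Real.Gamma (s * n + 1 + s * k) := by
        refine (h (n + k)).trans_eq ?_
        push_cast
        ring_nf
    _ ≤ K * A ^ (n + k) * (2 ^ (s * k) * Real.Gamma (s * k + 1) * 2 ^ (s * n + 1) *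
          Real.Gamma (s * n + 1)) := by
        gcongr
        exact Gamma_add_le (by positivity) (by positivity)
    _ = K * A ^ k * (2 ^ (s * k) * Real.Gamma (s * k + 1) * 2) * (A * 2 ^ s) ^ n *
          Real.Gamma (s * n + 1) := by
        rw [Real.rpow_add two_pos, Real.rpow_mul zero_le_two s n, Real.rpow_natCast, Real.rpow_one]
        ring

end IsGevrey

end Gevrey

/-! ### The Cauchy–Riemann operator -/

section Dbar

variable {E : Type*} [NormedAddCommGroup E] [NormedSpace ℂ E]

/-- The `(0,1)`-part, evaluated at `w`, of a real-linear functional: `dbar w (fderiv ℝ f x)` is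
the derivative `∂̄f` of `f` at `x` in the direction `w`. -/
def dbar (w : E) : (E →L[ℝ] ℂ) →L[ℝ] ℂ :=
  (1 / 2 : ℝ) • (ContinuousLinearMap.apply ℝ ℂ w +
    (I • ContinuousLinearMap.id ℝ ℂ).comp (ContinuousLinearMap.apply ℝ ℂ (I • w)))

lemma dbar_apply (w : E) (L : E →L[ℝ] ℂ) : dbar w L = 1 / 2 * (L w + I * L (I • w)) := by
  simp [dbar]
  ring

lemma norm_dbar_le (w : E) (L : E →L[ℝ] ℂ) : ‖dbar w L‖ ≤ ‖L‖ * ‖w‖ := by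
  have hIw : ‖L (I • w)‖ ≤ ‖L‖ * ‖w‖ := by simpa [norm_smul] using L.le_opNorm (I • w)
  calc ‖dbar w L‖ = 1 / 2 * ‖L w + I * L (I • w)‖ := by simp [dbar_apply]
    _ ≤ 1 / 2 * (‖L w‖ + ‖L (I • w)‖) := by
        gcongr
        simpa using norm_add_le (L w) (I * L (I • w))
    _ ≤ ‖L‖ * ‖w‖ := by linarith [L.le_opNorm w]

lemma dbar_smul (w : E) (c : ℂ) (L : E →L[ℝ] ℂ) : dbar w (c • L) = c * dbar w L := by
  simp only [dbar_apply, smul_apply, smul_eq_mul]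
  ring

lemma dbar_add_left (w₁ w₂ : E) (L : E →L[ℝ] ℂ) : dbar (w₁ + w₂) L = dbar w₁ L + dbar w₂ L := by
  simp only [dbar_apply, smul_add, map_add]
  ring

lemma map_complex_smul (L : E →L[ℝ] ℂ) (c : ℂ) (w : E) :
    L (c • w) = c.re * L w + c.im * L (I • w) := by
  have hc : c • w = c.re • w + c.im • I • w := by
    simp only [← coe_smul, smul_smul, ← add_smul, re_add_im]
  simp [hc]

lemma dbar_smul_left (c : ℂ) (w : E) (L : E →L[ℝ] ℂ) :
    dbar (c • w) L = starRingEnd ℂ c * dbar w L := by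
  have hconj : starRingEnd ℂ c = c.re - c.im * I := by apply Complex.ext <;> simp
  rw [dbar_apply, dbar_apply, smul_smul, map_complex_smul L c, map_complex_smul L (I * c), hconj]
  simp only [mul_re, I_re, I_im, mul_im]
  push_cast
  linear_combination (1 / 2 * (c.im : ℂ) * L (I • w)) * I_sq

/-- The `(0,1)`-part of a real-linear functional, as a conjugate-linear functional. -/
def dbarForm (L : E →L[ℝ] ℂ) : E →ₗ⋆[ℂ] ℂ where
  toFun w := dbar w L
  map_add' w₁ w₂ := dbar_add_left w₁ w₂ L
  map_smul' c w := dbar_smul_left c w L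

lemma dbar_restrictScalars (w : E) (L : E →L[ℂ] ℂ) : dbar w (L.restrictScalars ℝ) = 0 := by
  simp [dbar_apply, ← mul_assoc]

lemma dbar_comp_restrictScalars {Λ : E →L[ℂ] ℂ} {w : E} (hw : Λ w = 0) (L : ℂ →L[ℝ] ℂ) :
    dbar w (L.comp (Λ.restrictScalars ℝ)) = 0 := by
  simp [dbar_apply, hw]

lemma dbar_fderiv_eq_zero {f : E → ℂ} {x : E} (hf : DifferentiableAt ℂ f x) (w : E) :
    dbar w (fderiv ℝ f x) = 0 := by
  rw [hf.fderiv_restrictScalars ℝ, dbar_restrictScalars]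

theorem differentiableAt_complex_of_dbar_eq_zero {f : E → ℂ} {x : E}
    (hf : DifferentiableAt ℝ f x) (h : ∀ w, dbar w (fderiv ℝ f x) = 0) :
    DifferentiableAt ℂ f x := by
  rw [differentiableAt_iff_restrictScalars ℝ hf]
  have hI : ∀ w, fderiv ℝ f x (I • w) = I * fderiv ℝ f x w := fun w => by
    have hw := h w
    rw [dbar_apply] at hw
    linear_combination (-2 * I) * hw + fderiv ℝ f x (I • w) * I_sq
  refine ⟨{ toFun := fderiv ℝ f x, map_add' := map_add _, map_smul' := fun c w => ?_,
            cont := (fderiv ℝ f x).continuous }, rfl⟩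
  rw [map_complex_smul, hI, RingHom.id_apply, smul_eq_mul]
  linear_combination fderiv ℝ f x w * re_add_im c

theorem dbar_fderiv_dbar_comm {f : E → ℂ} {x : E} (hf : ContDiffAt ℝ 2 f x) (v w : E) :
    dbar v (fderiv ℝ (fun y => dbar w (fderiv ℝ f y)) x) =
      dbar w (fderiv ℝ (fun y => dbar v (fderiv ℝ f y)) x) := by
  have hf' : DifferentiableAt ℝ (fderiv ℝ f) x :=
    (hf.fderiv_right (m := 1) (by norm_num)).differentiableAt one_ne_zero
  have hsymm : IsSymmSndFDerivAt ℝ f x := hf.isSymmSndFDerivAt (by simp)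
  have hcomp (u : E) : fderiv ℝ (fun y => dbar u (fderiv ℝ f y)) x =
      (dbar u).comp (fderiv ℝ (fderiv ℝ f) x) :=
    ((dbar u).hasFDerivAt.comp x hf'.hasFDerivAt).fderiv
  rw [hcomp, hcomp]
  simp only [dbar_apply, ContinuousLinearMap.comp_apply]
  rw [hsymm v w, hsymm v (I • w), hsymm (I • v) w, hsymm (I • v) (I • w)]
  ring

end Dbar

/-! ### The Cauchy–Pompeiu formula -/

section CauchyPompeiu

variable {g : ℂ → ℂ}

lemma integrableOn_polar {F : ℝ × ℝ → ℂ} (hF : Continuous F) {R : ℝ}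
    (hFR : ∀ p : ℝ × ℝ, R ≤ p.1 → F p = 0) :
    IntegrableOn F (Ioi 0 ×ˢ Ioo (-Real.pi) Real.pi) := by
  have hcompact : IntegrableOn F (Icc 0 R ×ˢ Icc (-Real.pi) Real.pi) :=
    hF.continuousOn.integrableOn_compact (isCompact_Icc.prod isCompact_Icc)
  refine hcompact.of_forall_sdiff_eq_zero (measurableSet_Ioi.prod measurableSet_Ioo) ?_
  rintro ⟨ρ, θ⟩ ⟨⟨hρ, hθ⟩, hn⟩
  exact hFR _ (le_of_not_ge fun h => hn ⟨⟨le_of_lt hρ, h⟩, Ioo_subset_Icc_self hθ⟩)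

/-- Derivative of `g` in the radial direction, in polar coordinates. -/
def radialDeriv (g : ℂ → ℂ) (p : ℝ × ℝ) : ℂ :=
  fderiv ℝ g (p.1 * exp (p.2 * I)) (exp (p.2 * I))

/-- Derivative of `g` in the unit direction orthogonal to the radius, in polar coordinates. -/
def angularDeriv (g : ℂ → ℂ) (p : ℝ × ℝ) : ℂ :=
  fderiv ℝ g (p.1 * exp (p.2 * I)) (I * exp (p.2 * I))

lemma continuous_radialDeriv (hg : ContDiff ℝ 1 g) : Continuous (radialDeriv g) :=
  ((hg.continuous_fderiv one_ne_zero).comp (by fun_prop)).clm_apply (by fun_prop)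

lemma continuous_angularDeriv (hg : ContDiff ℝ 1 g) : Continuous (angularDeriv g) :=
  ((hg.continuous_fderiv one_ne_zero).comp (by fun_prop)).clm_apply (by fun_prop)

lemma hasDerivAt_comp_ray (hg : Differentiable ℝ g) (r θ : ℝ) :
    HasDerivAt (fun r : ℝ => g (r * exp (θ * I))) (radialDeriv g (r, θ)) r := by
  have hray : HasDerivAt (fun r : ℝ => (r : ℂ) * exp (θ * I)) (exp (θ * I)) r := by
    simpa using (ofRealCLM.hasDerivAt (x := r)).mul_const (exp (θ * I))
  exact (hg _).hasFDerivAt.comp_hasDerivAt r hray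

lemma hasDerivAt_comp_circle (hg : Differentiable ℝ g) (r θ : ℝ) :
    HasDerivAt (fun θ : ℝ => g (r * exp (θ * I))) (r * angularDeriv g (r, θ)) θ := by
  have hexp : HasDerivAt (fun θ : ℝ => exp (θ * I)) (I * exp (θ * I)) θ := by
    simpa [mul_comm] using ((ofRealCLM.hasDerivAt (x := θ)).mul_const I).cexp
  convert! (hg _).hasFDerivAt.comp_hasDerivAt θ (hexp.const_mul (r : ℂ)) using 1
  simpa only [angularDeriv, real_smul] using
    ((fderiv ℝ g (r * exp (θ * I))).map_smul r (I * exp (θ * I))).symm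

lemma exists_polar_support (hg : HasCompactSupport g) :
    ∃ R : ℝ, ∀ r θ : ℝ, R ≤ r →
      g (r * exp (θ * I)) = 0 ∧ radialDeriv g (r, θ) = 0 ∧ angularDeriv g (r, θ) = 0 := by
  obtain ⟨R, hR⟩ := hg.isCompact.isBounded.subset_ball 0
  refine ⟨R, fun r θ hr => ?_⟩
  have hout : (r * exp (θ * I) : ℂ) ∉ tsupport g := fun h => by
    have hlt := mem_ball_zero_iff.1 (hR h)
    rw [norm_mul, norm_exp_ofReal_mul_I, mul_one, norm_real] at hlt
    linarith [Real.le_norm_self r]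
  have hderiv : fderiv ℝ g (r * exp (θ * I)) = 0 :=
    by_contra fun h => hout (support_fderiv_subset ℝ h)
  exact ⟨image_eq_zero_of_notMem_tsupport hout, by simp [radialDeriv, hderiv],
    by simp [angularDeriv, hderiv]⟩

lemma integral_Ioi_radialDeriv (hg : ContDiff ℝ 1 g) (hc : HasCompactSupport g) (θ : ℝ) :
    ∫ r in Ioi 0, radialDeriv g (r, θ) = -g 0 := by
  obtain ⟨R, hgR⟩ := exists_polar_support hc
  have hint : IntegrableOn (fun r => radialDeriv g (r, θ)) (Ioi 0) := by
    have hcompact : IntegrableOn (fun r => radialDeriv g (r, θ)) (Icc 0 R) :=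
      ((continuous_radialDeriv hg).comp (.prodMk_left θ)).continuousOn.integrableOn_compact
        isCompact_Icc
    refine hcompact.of_forall_sdiff_eq_zero measurableSet_Ioi fun r ⟨hr, hn⟩ => ?_
    exact (hgR r θ (le_of_not_ge fun h => hn ⟨le_of_lt hr, h⟩)).2.1
  have hlim : Tendsto (fun r : ℝ => g (r * exp (θ * I))) atTop (𝓝 0) :=
    tendsto_const_nhds.congr' (by
      filter_upwards [eventually_ge_atTop R] with r hr using (hgR r θ hr).1.symm)
  rw [integral_Ioi_of_hasDerivAt_of_tendsto'
    (fun r _ => hasDerivAt_comp_ray (hg.differentiable one_ne_zero) r θ) hint hlim]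
  simp

lemma integral_Ioo_angularDeriv (hg : ContDiff ℝ 1 g) {r : ℝ} (hr : r ≠ 0) :
    ∫ θ in Ioo (-Real.pi) Real.pi, angularDeriv g (r, θ) = 0 := by
  have h := intervalIntegral.integral_eq_sub_of_hasDerivAt (a := -Real.pi) (b := Real.pi)
    (fun θ _ => hasDerivAt_comp_circle (hg.differentiable one_ne_zero) r θ)
    (Continuous.intervalIntegrable
      (continuous_const.mul ((continuous_angularDeriv hg).comp (.prodMk_right r))) _ _)
  rw [intervalIntegral.integral_const_mul,
    intervalIntegral.integral_of_le (by linarith [Real.pi_pos]), integral_Ioc_eq_integral_Ioo] at h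
  have hperiod : exp (Real.pi * I) = exp ((-Real.pi : ℝ) * I) := by simp [exp_neg]
  rw [hperiod, sub_self] at h
  exact (mul_eq_zero.1 h).resolve_left (ofReal_ne_zero.2 hr)

lemma setIntegral_radialDeriv (hg : ContDiff ℝ 1 g) (hc : HasCompactSupport g)
    (hint : IntegrableOn (radialDeriv g) (Ioi 0 ×ˢ Ioo (-Real.pi) Real.pi)) :
    ∫ p in Ioi (0 : ℝ) ×ˢ Ioo (-Real.pi) Real.pi, radialDeriv g p = -(2 * Real.pi) * g 0 := by
  rw [Measure.volume_eq_prod] at hint ⊢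
  rw [← setIntegral_prod_swap, setIntegral_prod (fun p : ℝ × ℝ => radialDeriv g p.swap) hint.swap]
  simp only [Prod.swap_prod_mk, integral_Ioi_radialDeriv hg hc, setIntegral_const]
  rw [Real.volume_real_Ioo_of_le (by linarith [Real.pi_pos]), real_smul]
  push_cast
  ring

lemma setIntegral_angularDeriv (hg : ContDiff ℝ 1 g)
    (hint : IntegrableOn (angularDeriv g) (Ioi 0 ×ˢ Ioo (-Real.pi) Real.pi)) :
    ∫ p in Ioi (0 : ℝ) ×ˢ Ioo (-Real.pi) Real.pi, angularDeriv g p = 0 := by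
  rw [Measure.volume_eq_prod] at hint ⊢
  rw [setIntegral_prod _ hint]
  exact setIntegral_eq_zero_of_forall_eq_zero fun r hr => integral_Ioo_angularDeriv hg (ne_of_gt hr)

lemma dbar_one_div_polar {p : ℝ × ℝ} (hp : p.1 ≠ 0) :
    p.1 • (dbar (1 : ℂ) (fderiv ℝ g (Complex.polarCoord.symm p)) / Complex.polarCoord.symm p) =
      1 / 2 * radialDeriv g p + I / 2 * angularDeriv g p := by
  obtain ⟨r, θ⟩ := p
  set e := exp (θ * I) with he
  have hpolar : Complex.polarCoord.symm (r, θ) = r * e := by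
    simp [he, Complex.polarCoord_symm_apply, exp_mul_I]
  have hconj : starRingEnd ℂ e = e⁻¹ := by
    rw [inv_def, normSq_eq_norm_sq, norm_exp_ofReal_mul_I]
    simp
  have hpart : e⁻¹ * dbar 1 (fderiv ℝ g (r * e)) =
      1 / 2 * (radialDeriv g (r, θ) + I * angularDeriv g (r, θ)) := by
    rw [← hconj, ← dbar_smul_left, smul_eq_mul, mul_one, dbar_apply, smul_eq_mul]
    rfl
  rw [hpolar, real_smul, div_eq_mul_inv, mul_inv, mul_comm (dbar _ _), mul_assoc, hpart,
    mul_inv_cancel_left₀ (ofReal_ne_zero.2 hp)]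
  ring

lemma integral_dbar_div_self (hg : ContDiff ℝ 1 g) (hc : HasCompactSupport g) :
    ∫ t : ℂ, dbar 1 (fderiv ℝ g t) / t = -Real.pi * g 0 := by
  obtain ⟨R, hgR⟩ := exists_polar_support hc
  have hrad := integrableOn_polar (continuous_radialDeriv hg) fun p hp => (hgR p.1 p.2 hp).2.1
  have hang := integrableOn_polar (continuous_angularDeriv hg) fun p hp => (hgR p.1 p.2 hp).2.2
  rw [← Complex.integral_comp_polarCoord_symm,
    setIntegral_congr_fun polarCoord.open_target.measurableSet
      fun p hp => dbar_one_div_polar (ne_of_gt hp.1)]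
  change ∫ p in Ioi (0 : ℝ) ×ˢ Ioo (-Real.pi) Real.pi, _ = _
  rw [integral_add (hrad.const_mul _) (hang.const_mul _), integral_const_mul, integral_const_mul,
    setIntegral_radialDeriv hg hc hrad, setIntegral_angularDeriv hg hang]
  ring

theorem integral_dbar_add_div (hg : ContDiff ℝ 1 g) (hc : HasCompactSupport g) (z : ℂ) :
    ∫ t : ℂ, dbar 1 (fderiv ℝ g (z + t)) / t = -Real.pi * g z := by
  have h := integral_dbar_div_self (g := fun t => g (z + t)) (hg.comp (by fun_prop))
    (hc.comp_homeomorph (Homeomorph.addLeft z))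
  simpa only [fderiv_comp_add_left, add_zero] using h

end CauchyPompeiu

/-! ### The Cauchy transform along one direction -/

/-- The kernel `1 / ‖t‖` cut off to `‖t‖ < R`; it dominates the integrands of Cauchy transforms. -/
def cutoffInvNorm (R : ℝ) (t : ℂ) : ℝ := (Iio R).indicator (fun y => y⁻¹) ‖t‖

lemma cutoffInvNorm_nonneg (R : ℝ) (t : ℂ) : 0 ≤ cutoffInvNorm R t :=
  indicator_apply_nonneg fun _ => inv_nonneg.2 (norm_nonneg t)

lemma integrable_cutoffInvNorm (R : ℝ) : Integrable (cutoffInvNorm R) := by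
  have hone : IntegrableOn ((Iio R).indicator fun _ => (1 : ℝ)) (Ioi 0) := by
    rw [IntegrableOn, integrable_indicator_iff measurableSet_Iio, IntegrableOn,
      Measure.restrict_restrict measurableSet_Iio, inter_comm, Ioi_inter_Iio]
    exact integrable_const 1
  refine (integrable_fun_norm_addHaar (E := ℂ) (volume : Measure ℂ)).2
    (hone.congr_fun (fun y hy => ?_) measurableSet_Ioi)
  have hy0 : y ≠ 0 := (mem_Ioi.1 hy).ne'
  by_cases hyR : y ∈ Iio R <;> simp [finrank_real_complex, hyR, hy0]

lemma norm_inv_smul_le_cutoffInvNorm {G : Type*} [NormedAddCommGroup G] [NormedSpace ℂ G]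
    {R B : ℝ} {t : ℂ} {z : G} (hR : R ≤ ‖t‖ → z = 0) (hB : ‖z‖ ≤ B) :
    ‖t⁻¹ • z‖ ≤ B * cutoffInvNorm R t := by
  by_cases ht : ‖t‖ < R
  · rw [norm_smul, norm_inv, mul_comm, cutoffInvNorm, indicator_of_mem (mem_Iio.2 ht)]
    gcongr
  · simp [hR (not_lt.1 ht), cutoffInvNorm, ht]

/-- An open union of complex lines parallel to `dir`, with a linear coordinate `form` along them. -/
structure Cylinder (E : Type*) [NormedAddCommGroup E] [NormedSpace ℂ E] where
  carrier : Set E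
  dir : E
  form : E →L[ℂ] ℂ
  form_dir : form dir = 1
  isOpen : IsOpen carrier
  add_smul_mem : ∀ x ∈ carrier, ∀ t : ℂ, x + t • dir ∈ carrier

namespace Cylinder

variable {E : Type*} [NormedAddCommGroup E] [NormedSpace ℂ E] {Z : Cylinder E}
  {V W : E → ℂ} {a : ℝ} {x : E}

lemma form_add_smul_dir (x : E) (t : ℂ) : Z.form (x + t • Z.dir) = Z.form x + t := by
  simp [Z.form_dir]

lemma le_norm_form_add_smul_dir {b : ℝ} (hx : ‖Z.form x‖ ≤ b) {t : ℂ} (ht : a + b ≤ ‖t‖) :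
    a ≤ ‖Z.form (x + t • Z.dir)‖ := by
  have h := norm_sub_le (Z.form x + t) (Z.form x)
  rw [add_sub_cancel_left] at h
  rw [form_add_smul_dir]
  linarith

variable (Z) in
/-- The solution `-π⁻¹ ∫ W(x + t • dir) dt / t` of `∂̄u = W` in the direction `dir`. -/
def cauchyTransform (W : E → ℂ) (x : E) : ℂ :=
  -(1 / Real.pi : ℂ) * ∫ t : ℂ, t⁻¹ • W (x + t • Z.dir)

variable (Z) in
/-- `C¹` functions on a cylinder which vanish where the coordinate has modulus at least `a`. -/
structure IsTestFunction (a : ℝ) (W : E → ℂ) : Prop where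
  contDiffOn : ContDiffOn ℝ 1 W Z.carrier
  eq_zero : ∀ x ∈ Z.carrier, a ≤ ‖Z.form x‖ → W x = 0

namespace IsTestFunction

lemma continuousOn_fderiv (hW : Z.IsTestFunction a W) : ContinuousOn (fderiv ℝ W) Z.carrier :=
  hW.contDiffOn.continuousOn_fderiv_of_isOpen Z.isOpen le_rfl

lemma hasFDerivAt (hW : Z.IsTestFunction a W) (hx : x ∈ Z.carrier) :
    HasFDerivAt W (fderiv ℝ W x) x :=
  ((hW.contDiffOn.differentiableOn one_ne_zero).differentiableAt
    (Z.isOpen.mem_nhds hx)).hasFDerivAt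

lemma fderiv_eq_zero (hW : Z.IsTestFunction a W) (hx : x ∈ Z.carrier) (hax : a < ‖Z.form x‖) :
    fderiv ℝ W x = 0 := by
  have hzero : W =ᶠ[𝓝 x] fun _ => 0 := by
    filter_upwards [Z.form.continuous.norm.continuousAt.eventually_const_lt hax,
      Z.isOpen.mem_nhds hx] with y hay hy using hW.eq_zero y hy hay.le
  rw [hzero.fderiv_eq, fderiv_const_apply]

end IsTestFunction

theorem norm_cauchyTransform_le (hW : ∀ x ∈ Z.carrier, a ≤ ‖Z.form x‖ → W x = 0)
    {M : ℝ} (hM : ∀ x ∈ Z.carrier, ‖W x‖ ≤ M) {b : ℝ} (hx : x ∈ Z.carrier)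
    (hxb : ‖Z.form x‖ ≤ b) :
    ‖Z.cauchyTransform W x‖ ≤ (∫ t, cutoffInvNorm (a + b) t) * M := by
  have : 0 ≤ M := (norm_nonneg _).trans (hM x hx)
  have : 0 ≤ ∫ t, cutoffInvNorm (a + b) t := integral_nonneg (cutoffInvNorm_nonneg _)
  have hint : ‖∫ t : ℂ, t⁻¹ • W (x + t • Z.dir)‖ ≤ ∫ t : ℂ, M * cutoffInvNorm (a + b) t :=
    norm_integral_le_of_norm_le ((integrable_cutoffInvNorm _).const_mul M) <|
      Eventually.of_forall fun t => norm_inv_smul_le_cutoffInvNorm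
        (fun ht => hW _ (Z.add_smul_mem x hx t) (le_norm_form_add_smul_dir hxb ht))
        (hM _ (Z.add_smul_mem x hx t))
  have hpi : ‖-(1 / Real.pi : ℂ)‖ ≤ 1 := by
    rw [norm_neg, norm_div, norm_one, norm_real, Real.norm_of_nonneg Real.pi_pos.le,
      div_le_one Real.pi_pos]
    linarith [Real.pi_gt_three]
  rw [integral_const_mul] at hint
  calc ‖Z.cauchyTransform W x‖ ≤ 1 * (M * ∫ t, cutoffInvNorm (a + b) t) := by
        rw [cauchyTransform, norm_mul]
        gcongr
    _ = _ := by ring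

lemma integral_inv_smul_dbar_dir (hV : Z.IsTestFunction a V) (hx : x ∈ Z.carrier) :
    ∫ t : ℂ, t⁻¹ * dbar Z.dir (fderiv ℝ V (x + t • Z.dir)) = -Real.pi * V x := by
  have hcontDiff : ContDiff ℝ 1 (fun t : ℂ => V (x + t • Z.dir)) :=
    contDiffOn_univ.1 (hV.contDiffOn.comp (t := Z.carrier) (by fun_prop)
      fun t _ => Z.add_smul_mem x hx t)
  have hsupp : HasCompactSupport (fun t : ℂ => V (x + t • Z.dir)) :=
    HasCompactSupport.intro (isCompact_closedBall (0 : ℂ) (a + ‖Z.form x‖)) fun t ht =>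
      hV.eq_zero _ (Z.add_smul_mem x hx t) (le_norm_form_add_smul_dir le_rfl (by
        rw [mem_closedBall_zero_iff, not_le] at ht
        exact ht.le))
  have hline (t : ℂ) : dbar 1 (fderiv ℝ (fun t : ℂ => V (x + t • Z.dir)) t) =
      dbar Z.dir (fderiv ℝ V (x + t • Z.dir)) := by
    have hd : HasFDerivAt (fun t : ℂ => x + t • Z.dir)
        ((ContinuousLinearMap.toSpanSingleton ℂ Z.dir).restrictScalars ℝ) t := by
      simpa using ((ContinuousLinearMap.toSpanSingleton ℂ Z.dir).restrictScalars ℝ).hasFDerivAt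
        (x := t) |>.const_add x
    have hVd := (hV.hasFDerivAt (Z.add_smul_mem x hx t)).comp t hd
    rw [show fderiv ℝ (fun t : ℂ => V (x + t • Z.dir)) t = _ from hVd.fderiv]
    simp [dbar_apply]
  simpa [hline, div_eq_inv_mul] using integral_dbar_add_div hcontDiff hsupp 0

section FiniteDimensional

variable {G : Type*} [NormedAddCommGroup G] [NormedSpace ℂ G] {H : E → G}

lemma aestronglyMeasurable_inv_smul (hH : ContinuousOn H Z.carrier) (hx : x ∈ Z.carrier) :
    AEStronglyMeasurable (fun t : ℂ => t⁻¹ • H (x + t • Z.dir)) volume :=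
  measurable_inv.aestronglyMeasurable.smul
    (hH.comp_continuous (by fun_prop) (Z.add_smul_mem x hx)).aestronglyMeasurable

variable [FiniteDimensional ℂ E]

lemma exists_norm_inv_smul_le (hH : ContinuousOn H Z.carrier)
    (hHa : ∀ y ∈ Z.carrier, a < ‖Z.form y‖ → H y = 0) (hx : x ∈ Z.carrier) :
    ∃ R B : ℝ, ∀ᶠ y in 𝓝 x, y ∈ Z.carrier ∧
      ∀ t : ℂ, ‖t⁻¹ • H (y + t • Z.dir)‖ ≤ B * cutoffInvNorm R t := by
  have : ProperSpace E := FiniteDimensional.proper ℂ E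
  obtain ⟨ε, hε, hεZ⟩ := nhds_basis_closedBall.mem_iff.1 (Z.isOpen.mem_nhds hx)
  obtain ⟨b, hb⟩ := (isCompact_closedBall x ε).exists_bound_of_continuousOn
    Z.form.continuous.continuousOn
  set R : ℝ := a + 1 + b
  have hout : ∀ y ∈ closedBall x ε, ∀ t : ℂ, R ≤ ‖t‖ → H (y + t • Z.dir) = 0 :=
    fun y hy t ht => hHa _ (Z.add_smul_mem y (hεZ hy) t)
      ((lt_add_one a).trans_le (le_norm_form_add_smul_dir (hb y hy) ht))
  set L := (fun p : E × ℂ => p.1 + p.2 • Z.dir) '' (closedBall x ε ×ˢ closedBall 0 R)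
  have hL : IsCompact L :=
    ((isCompact_closedBall _ _).prod (isCompact_closedBall _ _)).image (by fun_prop)
  have hLZ : L ⊆ Z.carrier := by
    rintro _ ⟨⟨y, t⟩, ⟨hy, -⟩, rfl⟩
    exact Z.add_smul_mem y (hεZ hy) t
  obtain ⟨B, hB⟩ := hL.exists_bound_of_continuousOn (hH.mono hLZ)
  refine ⟨R, max B 0, ?_⟩
  filter_upwards [closedBall_mem_nhds x hε] with y hy
  refine ⟨hεZ hy, fun t => norm_inv_smul_le_cutoffInvNorm (hout y hy t) ?_⟩
  by_cases ht : R ≤ ‖t‖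
  · simp [hout y hy t ht]
  · exact (hB _ ⟨(y, t), ⟨hy, by simpa using (not_le.1 ht).le⟩, rfl⟩).trans (le_max_left _ _)

lemma integrable_inv_smul (hH : ContinuousOn H Z.carrier)
    (hHa : ∀ y ∈ Z.carrier, a < ‖Z.form y‖ → H y = 0) (hx : x ∈ Z.carrier) :
    Integrable fun t : ℂ => t⁻¹ • H (x + t • Z.dir) := by
  obtain ⟨R, B, hB⟩ := exists_norm_inv_smul_le hH hHa hx
  exact ((integrable_cutoffInvNorm R).const_mul B).mono' (aestronglyMeasurable_inv_smul hH hx)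
    (Eventually.of_forall hB.self_of_nhds.2)

theorem hasFDerivAt_cauchyTransform (hW : Z.IsTestFunction a W) (hx : x ∈ Z.carrier) :
    HasFDerivAt (Z.cauchyTransform W)
      (-(1 / Real.pi : ℂ) • ∫ t : ℂ, t⁻¹ • fderiv ℝ W (x + t • Z.dir)) x := by
  obtain ⟨R, B, hB⟩ := exists_norm_inv_smul_le hW.continuousOn_fderiv
    (fun y hy => hW.fderiv_eq_zero hy) hx
  refine HasFDerivAt.const_mul (hasFDerivAt_integral_of_dominated_of_fderiv_le
    (bound := fun t => B * cutoffInvNorm R t) (F' := fun y t => t⁻¹ • fderiv ℝ W (y + t • Z.dir))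
    hB ?_ ?_ ?_ ?_ ((integrable_cutoffInvNorm R).const_mul B) ?_) _
  · filter_upwards [hB] with y hy using
      aestronglyMeasurable_inv_smul hW.contDiffOn.continuousOn hy.1
  · exact integrable_inv_smul hW.contDiffOn.continuousOn
      (fun y hy h => hW.eq_zero y hy h.le) hx
  · exact aestronglyMeasurable_inv_smul hW.continuousOn_fderiv hx
  · exact Eventually.of_forall fun t y hy => hy.2 t
  · exact Eventually.of_forall fun t y hy =>
      ((hasFDerivAt_comp_add_right _).2 (hW.hasFDerivAt (Z.add_smul_mem y hy.1 t))).const_smul t⁻¹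

theorem dbar_cauchyTransform (hW : Z.IsTestFunction a W) (hV : Z.IsTestFunction a V)
    (hx : x ∈ Z.carrier) {w : E}
    (hWV : ∀ y ∈ Z.carrier, dbar w (fderiv ℝ W y) = dbar Z.dir (fderiv ℝ V y)) :
    dbar w (fderiv ℝ (Z.cauchyTransform W) x) = V x := by
  rw [(hasFDerivAt_cauchyTransform hW hx).fderiv, dbar_smul,
    ← ContinuousLinearMap.integral_comp_comm _
      (integrable_inv_smul hW.continuousOn_fderiv (fun y hy => hW.fderiv_eq_zero hy) hx)]
  simp only [dbar_smul, fun t => hWV _ (Z.add_smul_mem x hx t), integral_inv_smul_dbar_dir hV hx]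
  have hpi : (Real.pi : ℂ) ≠ 0 := ofReal_ne_zero.2 Real.pi_ne_zero
  field_simp

end FiniteDimensional

end Cylinder

/-! ### The `∂̄`-equation on a cylinder -/

/-- Bump function on `ℂ` equal to `1` for `‖z‖ ≤ 1 / 2` and to `0` for `‖z‖ ≥ 3 / 4`. -/
def halfBump : ContDiffBump (0 : ℂ) := ⟨1 / 2, 3 / 4, by norm_num, by norm_num⟩

lemma contDiff_halfBump {n : ℕ} : ContDiff ℝ n fun z : ℂ => (halfBump z : ℂ) :=
  ofRealCLM.contDiff.comp halfBump.contDiff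

lemma norm_halfBump_le_one (z : ℂ) : ‖(halfBump z : ℂ)‖ ≤ 1 := by
  rw [norm_real, Real.norm_of_nonneg halfBump.nonneg]
  exact halfBump.le_one

lemma halfBump_eq_zero {z : ℂ} (hz : 3 / 4 ≤ ‖z‖) : halfBump z = 0 :=
  halfBump.zero_of_le_dist (by simpa [halfBump] using hz)

lemma halfBump_eq_one {z : ℂ} (hz : ‖z‖ ≤ 1 / 2) : halfBump z = 1 :=
  halfBump.one_of_mem_closedBall (by simpa [halfBump] using hz)

lemma fderiv_halfBump_eq_zero {z : ℂ} (hz : ‖z‖ < 1 / 2) :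
    fderiv ℝ (fun z : ℂ => (halfBump z : ℂ)) z = 0 := by
  have hone : (fun z : ℂ => (halfBump z : ℂ)) =ᶠ[𝓝 z] fun _ => 1 := by
    filter_upwards [continuous_norm.continuousAt.eventually_lt_const hz] with y hy
    simp [halfBump_eq_one hy.le]
  rw [hone.fderiv_eq, fderiv_const_apply]

namespace Cylinder

variable {E : Type*} [NormedAddCommGroup E] [NormedSpace ℂ E] {Z : Cylinder E}
  {α : E → E →ₗ⋆[ℂ] ℂ} {x : E}

variable (Z) in
/-- The part of a cylinder where the coordinate has modulus less than `r`. -/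
def tube (r : ℝ) : Set E := {x ∈ Z.carrier | ‖Z.form x‖ < r}

lemma tube_subset_tube {r r' : ℝ} (h : r ≤ r') : Z.tube r ⊆ Z.tube r' :=
  fun _ hx => ⟨hx.1, hx.2.trans_le h⟩

variable (Z) in
lemma isOpen_tube (r : ℝ) : IsOpen (Z.tube r) :=
  Z.isOpen.inter (isOpen_lt Z.form.continuous.norm continuous_const)

variable (Z) in
/-- `∂̄`-closed `(0,1)`-forms `α` of class `C¹` on `Z.tube 1` that, on the collar
`1 / 2 ≤ ‖form‖ < 1`, are multiples of the conjugate of `form`. -/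
structure IsClosedForm (α : E → E →ₗ⋆[ℂ] ℂ) : Prop where
  contDiffAt : ∀ x ∈ Z.tube 1, ∀ w, ContDiffAt ℝ 1 (α · w) x
  dbar_comm : ∀ x ∈ Z.tube 1, ∀ v w,
    dbar v (fderiv ℝ (α · w) x) = dbar w (fderiv ℝ (α · v) x)
  collar : ∀ x ∈ Z.tube 1, 1 / 2 ≤ ‖Z.form x‖ → ∀ w, Z.form w = 0 → α x w = 0

variable (Z) in
/-- The coefficient in the direction `w` of the form `α` cut off to `‖form‖ < 3 / 4`. -/
def cutoffCoeff (α : E → E →ₗ⋆[ℂ] ℂ) (w x : E) : ℂ := (halfBump (Z.form x) : ℂ) * α x w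

lemma cutoffCoeff_eq_zero (w : E) (hx : 3 / 4 ≤ ‖Z.form x‖) : Z.cutoffCoeff α w x = 0 := by
  simp [cutoffCoeff, halfBump_eq_zero hx]

lemma norm_cutoffCoeff_le {w : E} {M : ℝ} (hM0 : 0 ≤ M) (hM : ∀ x ∈ Z.tube 1, ‖α x w‖ ≤ M)
    (hx : x ∈ Z.carrier) : ‖Z.cutoffCoeff α w x‖ ≤ M := by
  by_cases hx1 : ‖Z.form x‖ < 1
  · calc ‖Z.cutoffCoeff α w x‖ ≤ 1 * ‖α x w‖ := by
          rw [cutoffCoeff, norm_mul]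
          gcongr
          exact norm_halfBump_le_one _
      _ ≤ M := by simpa using hM x ⟨hx, hx1⟩
  · rwa [cutoffCoeff_eq_zero w (by linarith), norm_zero]

namespace IsClosedForm

lemma isTestFunction_cutoffCoeff (hα : Z.IsClosedForm α) (w : E) :
    Z.IsTestFunction (3 / 4) (Z.cutoffCoeff α w) where
  contDiffOn x hx := by
    by_cases hx1 : ‖Z.form x‖ < 1
    · exact ((contDiff_halfBump.comp (Z.form.restrictScalars ℝ).contDiff).contDiffAt.mul
        (hα.contDiffAt x ⟨hx, hx1⟩ w)).contDiffWithinAt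
    · have hzero : Z.cutoffCoeff α w =ᶠ[𝓝 x] fun _ => 0 := by
        filter_upwards [Z.form.continuous.norm.continuousAt.eventually_const_lt
          (show 3 / 4 < ‖Z.form x‖ by linarith)] with y hy using cutoffCoeff_eq_zero w hy.le
      exact (contDiffAt_const.congr_of_eventuallyEq hzero).contDiffWithinAt
  eq_zero _ _ := cutoffCoeff_eq_zero w

lemma dbar_fderiv_cutoffCoeff (hα : Z.IsClosedForm α) (hx : x ∈ Z.tube 1) (v w : E) :
    dbar v (fderiv ℝ (Z.cutoffCoeff α w) x) =
      halfBump (Z.form x) * dbar v (fderiv ℝ (α · w) x) + α x w *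
        dbar v ((fderiv ℝ (fun z : ℂ => (halfBump z : ℂ)) (Z.form x)).comp
          (Z.form.restrictScalars ℝ)) := by
  have hbump := ((contDiff_halfBump (n := 1)).differentiable
    (by simp) (Z.form x)).hasFDerivAt.comp x (Z.form.restrictScalars ℝ).hasFDerivAt
  have hd := hbump.mul ((hα.contDiffAt x hx w).differentiableAt one_ne_zero).hasFDerivAt
  rw [show fderiv ℝ (Z.cutoffCoeff α w) x = _ from hd.fderiv, map_add, dbar_smul, dbar_smul]
  rfl

lemma dbar_fderiv_cutoffCoeff_comm (hα : Z.IsClosedForm α) {w : E} (hw : Z.form w = 0)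
    (hx : x ∈ Z.carrier) :
    dbar w (fderiv ℝ (Z.cutoffCoeff α Z.dir) x) =
      dbar Z.dir (fderiv ℝ (Z.cutoffCoeff α w) x) := by
  by_cases hx1 : ‖Z.form x‖ < 1
  · have hcut : α x w * dbar Z.dir ((fderiv ℝ (fun z : ℂ => (halfBump z : ℂ)) (Z.form x)).comp
        (Z.form.restrictScalars ℝ)) = 0 := by
      by_cases hx2 : ‖Z.form x‖ < 1 / 2
      · simp [fderiv_halfBump_eq_zero hx2]
      · simp [hα.collar x ⟨hx, hx1⟩ (not_lt.1 hx2) w hw]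
    rw [hα.dbar_fderiv_cutoffCoeff ⟨hx, hx1⟩, hα.dbar_fderiv_cutoffCoeff ⟨hx, hx1⟩,
      dbar_comp_restrictScalars hw, hα.dbar_comm x ⟨hx, hx1⟩, hcut, mul_zero]
  · have hx34 : 3 / 4 < ‖Z.form x‖ := by linarith
    rw [(hα.isTestFunction_cutoffCoeff _).fderiv_eq_zero hx hx34,
      (hα.isTestFunction_cutoffCoeff _).fderiv_eq_zero hx hx34, map_zero, map_zero]

/-- The collar condition keeps the cut-off form closed in the directions of the kernel of `form`,
so one Cauchy transform in the direction `dir` solves the equation in all directions. -/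
theorem exists_dbar_eq [FiniteDimensional ℂ E] (hα : Z.IsClosedForm α) {M : ℝ} (hM0 : 0 ≤ M)
    (hM : ∀ x ∈ Z.tube 1, ‖α x Z.dir‖ ≤ M) :
    ∃ u : E → ℂ, (∀ x ∈ Z.tube (1 / 2), DifferentiableAt ℝ u x ∧
        ∀ w, dbar w (fderiv ℝ u x) = α x w) ∧
      ∀ x ∈ Z.tube 1, ‖u x‖ ≤ (∫ t, cutoffInvNorm (3 / 4 + 1) t) * M := by
  have htest := hα.isTestFunction_cutoffCoeff
  refine ⟨Z.cauchyTransform (Z.cutoffCoeff α Z.dir), fun x hx => ?_, fun x hx =>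
    norm_cauchyTransform_le (htest _).eq_zero (fun _ => norm_cutoffCoeff_le hM0 hM) hx.1 hx.2.le⟩
  refine ⟨(hasFDerivAt_cauchyTransform (htest _) hx.1).differentiableAt, fun w => ?_⟩
  have hval (w : E) : Z.cutoffCoeff α w x = α x w := by
    simp [cutoffCoeff, halfBump_eq_one hx.2.le]
  set w₀ := w - Z.form w • Z.dir
  have hw₀ : Z.form w₀ = 0 := by simp [w₀, Z.form_dir]
  have hdir := dbar_cauchyTransform (htest Z.dir) (htest Z.dir) hx.1 fun _ _ => rfl
  have hker := dbar_cauchyTransform (htest Z.dir) (htest w₀) hx.1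
    fun _ => hα.dbar_fderiv_cutoffCoeff_comm hw₀
  have hw : w = w₀ + Z.form w • Z.dir := by simp [w₀]
  rw [hw, dbar_add_left, dbar_smul_left, hdir, hker, hval, hval, map_add, LinearMap.map_smulₛₗ,
    smul_eq_mul]

end IsClosedForm

end Cylinder

/-! ### Flat functions along the zero set of a holomorphic function -/

section Flat

variable {E F : Type*} [NormedAddCommGroup E] [NormedSpace ℝ E]
  [NormedAddCommGroup F] [NormedSpace ℝ F] {P : E → ℂ} {h : E → F} {T : Set E} {C : ℝ} {x : E}

lemma hasFDerivAt_zero_of_norm_le_sq (hP : DifferentiableAt ℝ P x) (hPx : P x = 0)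
    (hb : ∀ᶠ y in 𝓝 x, ‖h y‖ ≤ C * ‖P y‖ ^ 2) : HasFDerivAt h (0 : E →L[ℝ] F) x := by
  have hhx : h x = 0 := by simpa [hPx] using hb.self_of_nhds
  have hPO : P =O[𝓝 x] fun y => y - x := by simpa [hPx] using hP.isBigO_sub
  have hPo : P =o[𝓝 x] fun _ => (1 : ℝ) :=
    (Asymptotics.isLittleO_one_iff ℝ).2 (hPx ▸ hP.continuousAt.tendsto)
  have hhP : h =O[𝓝 x] fun y => P y * P y :=
    .of_bound C (by filter_upwards [hb] with y hy using by simpa [pow_two] using hy)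
  have hPP : (fun y => P y * P y) =o[𝓝 x] fun y => y - x := by
    have hmul := hPo.mul_isBigO hPO.norm_right
    simp only [one_mul] at hmul
    exact hmul.of_norm_right
  exact .of_isLittleO (by simpa [hhx] using hhP.trans_isLittleO hPP)

lemma contDiffOn_one_of_norm_le_sq (hT : IsOpen T) (hP : ∀ x ∈ T, DifferentiableAt ℝ P x)
    (hh : ∀ x ∈ T, P x ≠ 0 → ContDiffAt ℝ 1 h x) (hb : ∀ x ∈ T, ‖h x‖ ≤ C * ‖P x‖ ^ 2)
    (hb' : ∀ x ∈ T, P x ≠ 0 → ‖fderiv ℝ h x‖ ≤ C * ‖P x‖) : ContDiffOn ℝ 1 h T := by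
  have hzero : ∀ x ∈ T, P x = 0 → HasFDerivAt h (0 : E →L[ℝ] F) x := fun x hx hPx =>
    hasFDerivAt_zero_of_norm_le_sq (hP x hx) hPx (by filter_upwards [hT.mem_nhds hx] using hb)
  rw [show (1 : WithTop ℕ∞) = 0 + 1 by norm_num, contDiffOn_succ_iff_fderiv_of_isOpen hT,
    contDiffOn_zero]
  refine ⟨fun x hx => ?_, by simp, fun x hx => ContinuousAt.continuousWithinAt ?_⟩ <;>
    by_cases hPx : P x = 0
  · exact (hzero x hx hPx).differentiableAt.differentiableWithinAt
  · exact ((hh x hx hPx).differentiableAt one_ne_zero).differentiableWithinAt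
  · have hlim : Tendsto (fun y => C * ‖P y‖) (𝓝 x) (𝓝 0) := by
      simpa [hPx] using (hP x hx).continuousAt.norm.tendsto.const_mul C
    rw [ContinuousAt, (hzero x hx hPx).fderiv]
    refine squeeze_zero_norm' ?_ hlim
    filter_upwards [hT.mem_nhds hx] with y hy
    by_cases hPy : P y = 0
    · simp [(hzero y hy hPy).fderiv, hPy]
    · exact hb' y hy hPy
  · exact ((hh x hx hPx).fderiv_right (m := 0) (by norm_num)).continuousAt

end Flat

section FlatDbar

variable {E : Type*} [NormedAddCommGroup E] [NormedSpace ℂ E] {Ω : Set E} {P f : E → ℂ}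
  {B : ℝ} {x : E}

lemma hasFDerivAt_inv_pow {P' : E →L[ℝ] ℂ} (hP : HasFDerivAt P P' x) (hPx : P x ≠ 0) (N : ℕ) :
    HasFDerivAt (fun y => (P y ^ N)⁻¹) ((-(N : ℂ) * (P x ^ (N + 1))⁻¹) • P') x := by
  have hd : HasDerivAt (fun z : ℂ => (z ^ N)⁻¹) (-(N : ℂ) * (P x ^ (N + 1))⁻¹) (P x) := by
    convert! HasDerivAt.fun_inv (hasDerivAt_pow N (P x)) (pow_ne_zero N hPx) using 1
    rcases N with _ | n
    · simp
    · rw [Nat.add_sub_cancel]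
      field_simp
      ring
  exact hd.comp_hasFDerivAt_of_eq x hP rfl

/-- `f` is `C²` on `Ω` off the zeros of `P`, where `∂̄f` vanishes to infinite order together with
its first derivatives. -/
structure HasFlatDbar (Ω : Set E) (P f : E → ℂ) : Prop where
  contDiffAt : ∀ x ∈ Ω, P x ≠ 0 → ContDiffAt ℝ 2 f x
  flat : ∀ (w : E) (k : ℕ), ∃ C, ∀ x ∈ Ω, P x ≠ 0 →
    ‖dbar w (fderiv ℝ f x)‖ ≤ C * ‖P x‖ ^ k ∧
      ‖fderiv ℝ (fun y => dbar w (fderiv ℝ f y)) x‖ ≤ C * ‖P x‖ ^ k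

/-- The form `∂̄f / P ^ (N + 1)`, which is zero at the zeros of `P` because `0⁻¹ = 0`. -/
def dividedDbar (P f : E → ℂ) (N : ℕ) (x : E) : E →ₗ⋆[ℂ] ℂ :=
  (P x ^ (N + 1))⁻¹ • dbarForm (fderiv ℝ f x)

lemma dividedDbar_apply (P f : E → ℂ) (N : ℕ) (x w : E) :
    dividedDbar P f N x w = (P x ^ (N + 1))⁻¹ * dbar w (fderiv ℝ f x) := rfl

lemma dividedDbar_eq_zero (f : E → ℂ) (N : ℕ) (hPx : P x = 0) : dividedDbar P f N x = 0 := by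
  simp [dividedDbar, hPx]

lemma norm_dividedDbar_le {N k : ℕ} {M : ℝ} {w : E}
    (hM : P x ≠ 0 → ‖dbar w (fderiv ℝ f x)‖ ≤ M * ‖P x‖ ^ (N + 1 + k)) (hM0 : 0 ≤ M) :
    ‖dividedDbar P f N x w‖ ≤ M * ‖P x‖ ^ k := by
  by_cases hPx : P x = 0
  · rw [dividedDbar_eq_zero f N hPx, LinearMap.zero_apply, norm_zero]
    positivity
  · have := norm_pos_iff.2 hPx
    rw [dividedDbar_apply, norm_mul, norm_inv, norm_pow, inv_mul_le_iff₀ (by positivity)]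
    exact (hM hPx).trans_eq (by ring)

namespace HasFlatDbar

lemma contDiffAt_dbar (hf : HasFlatDbar Ω P f) (hx : x ∈ Ω) (hPx : P x ≠ 0) (w : E) :
    ContDiffAt ℝ 1 (fun y => dbar w (fderiv ℝ f y)) x :=
  (dbar w).contDiff.contDiffAt.comp x ((hf.contDiffAt x hx hPx).fderiv_right (by norm_num))

lemma exists_nonneg_bound (hf : HasFlatDbar Ω P f) (w : E) (k : ℕ) :
    ∃ C, 0 ≤ C ∧ ∀ x ∈ Ω, P x ≠ 0 → ‖dbar w (fderiv ℝ f x)‖ ≤ C * ‖P x‖ ^ k ∧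
      ‖fderiv ℝ (fun y => dbar w (fderiv ℝ f y)) x‖ ≤ C * ‖P x‖ ^ k := by
  obtain ⟨C, hC⟩ := hf.flat w k
  have hle (x : E) : C * ‖P x‖ ^ k ≤ max C 0 * ‖P x‖ ^ k := by
    gcongr
    exact le_max_left C 0
  exact ⟨max C 0, le_max_right C 0, fun x hx hPx =>
    ⟨(hC x hx hPx).1.trans (hle x), (hC x hx hPx).2.trans (hle x)⟩⟩

lemma hasFDerivAt_dividedDbar (hf : HasFlatDbar Ω P f) (hP : DifferentiableAt ℝ P x)
    (hx : x ∈ Ω) (hPx : P x ≠ 0) (N : ℕ) (w : E) :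
    HasFDerivAt (dividedDbar P f N · w)
      ((P x ^ (N + 1))⁻¹ • fderiv ℝ (fun y => dbar w (fderiv ℝ f y)) x +
        dbar w (fderiv ℝ f x) •
          ((-((N + 1 : ℕ) : ℂ) * (P x ^ (N + 1 + 1))⁻¹) • fderiv ℝ P x)) x :=
  (hasFDerivAt_inv_pow hP.hasFDerivAt hPx (N + 1)).mul
    ((hf.contDiffAt_dbar hx hPx w).differentiableAt one_ne_zero).hasFDerivAt

lemma norm_fderiv_dividedDbar_le (hf : HasFlatDbar Ω P f) (hP : DifferentiableAt ℝ P x)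
    (hx : x ∈ Ω) (hPx : P x ≠ 0) (hPB : ‖P x‖ ≤ B) (hPB' : ‖fderiv ℝ P x‖ ≤ B) {N : ℕ} {w : E}
    {C : ℝ} (hC : ‖dbar w (fderiv ℝ f x)‖ ≤ C * ‖P x‖ ^ (N + 3))
    (hC' : ‖fderiv ℝ (fun y => dbar w (fderiv ℝ f y)) x‖ ≤ C * ‖P x‖ ^ (N + 3)) (hC0 : 0 ≤ C) :
    ‖fderiv ℝ (dividedDbar P f N · w) x‖ ≤ C * (N + 2) * B * ‖P x‖ := by
  have := norm_pos_iff.2 hPx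
  rw [(hf.hasFDerivAt_dividedDbar hP hx hPx N w).fderiv]
  calc _ ≤ (‖P x‖ ^ (N + 1))⁻¹ * (C * ‖P x‖ ^ (N + 3)) +
        C * ‖P x‖ ^ (N + 3) * ((N + 1 : ℕ) * (‖P x‖ ^ (N + 1 + 1))⁻¹ * B) := by
        refine (norm_add_le _ _).trans ?_
        simp only [norm_smul, norm_mul, norm_neg, norm_inv, norm_pow, norm_natCast]
        gcongr
    _ = C * (‖P x‖ + (N + 1) * B) * ‖P x‖ := by
        push_cast
        field_simp
        ring
    _ ≤ C * (B + (N + 1) * B) * ‖P x‖ := by gcongr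
    _ = C * (N + 2) * B * ‖P x‖ := by ring

lemma contDiffOn_dividedDbar (hf : HasFlatDbar Ω P f) (hΩ : IsOpen Ω) (hP : AnalyticOnNhd ℂ P Ω)
    (hPB : ∀ x ∈ Ω, ‖P x‖ ≤ B) (hPB' : ∀ x ∈ Ω, ‖fderiv ℝ P x‖ ≤ B) (N : ℕ) (w : E) :
    ContDiffOn ℝ 1 (dividedDbar P f N · w) Ω := by
  obtain ⟨C, hC0, hC⟩ := hf.exists_nonneg_bound w (N + 3)
  have hPd : ∀ x ∈ Ω, DifferentiableAt ℝ P x := fun x hx =>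
    (hP x hx).differentiableAt.restrictScalars ℝ
  refine contDiffOn_one_of_norm_le_sq (C := max C (C * (N + 2) * B)) hΩ hPd
    (fun x hx hPx => ?_) (fun x hx => ?_) fun x hx hPx => ?_
  · exact ((((hP x hx).contDiffAt.restrict_scalars ℝ).pow _).inv (pow_ne_zero _ hPx)).mul
      (hf.contDiffAt_dbar hx hPx w)
  · refine (norm_dividedDbar_le (k := 2) (fun hPx => (hC x hx hPx).1) hC0).trans ?_
    gcongr
    exact le_max_left _ _
  · refine (hf.norm_fderiv_dividedDbar_le (hPd x hx) hx hPx (hPB x hx) (hPB' x hx)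
      (hC x hx hPx).1 (hC x hx hPx).2 hC0).trans ?_
    gcongr
    exact le_max_right _ _

lemma fderiv_dividedDbar_eq_zero (hf : HasFlatDbar Ω P f) (hΩ : IsOpen Ω)
    (hP : DifferentiableAt ℝ P x) (hx : x ∈ Ω) (hPx : P x = 0) (N : ℕ) (w : E) :
    fderiv ℝ (dividedDbar P f N · w) x = 0 := by
  obtain ⟨C, hC0, hC⟩ := hf.exists_nonneg_bound w (N + 1 + 2)
  refine (hasFDerivAt_zero_of_norm_le_sq (C := C) hP hPx ?_).fderiv
  filter_upwards [hΩ.mem_nhds hx] with y hy using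
    norm_dividedDbar_le (fun hPy => (hC y hy hPy).1) hC0

lemma dbar_fderiv_dividedDbar_comm (hf : HasFlatDbar Ω P f) (hΩ : IsOpen Ω)
    (hP : DifferentiableAt ℂ P x) (hx : x ∈ Ω) (N : ℕ) (v w : E) :
    dbar v (fderiv ℝ (dividedDbar P f N · w) x) =
      dbar w (fderiv ℝ (dividedDbar P f N · v) x) := by
  have hPd : DifferentiableAt ℝ P x := hP.restrictScalars ℝ
  by_cases hPx : P x = 0
  · rw [hf.fderiv_dividedDbar_eq_zero hΩ hPd hx hPx, hf.fderiv_dividedDbar_eq_zero hΩ hPd hx hPx,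
      map_zero, map_zero]
  · rw [(hf.hasFDerivAt_dividedDbar hPd hx hPx N w).fderiv,
      (hf.hasFDerivAt_dividedDbar hPd hx hPx N v).fderiv]
    simp only [map_add, dbar_smul, dbar_fderiv_eq_zero hP, mul_zero, add_zero,
      dbar_fderiv_dbar_comm (hf.contDiffAt x hx hPx) v w]

theorem isClosedForm_dividedDbar {Z : Cylinder E} (hf : HasFlatDbar Ω P f) (hΩ : IsOpen Ω)
    (hP : AnalyticOnNhd ℂ P Ω) (hPB : ∀ x ∈ Ω, ‖P x‖ ≤ B) (hPB' : ∀ x ∈ Ω, ‖fderiv ℝ P x‖ ≤ B)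
    (hZ : Z.tube 1 ⊆ Ω)
    (hcollar : ∀ x ∈ Z.tube 1, 1 / 2 ≤ ‖Z.form x‖ → P x ≠ 0 → ∀ w, Z.form w = 0 →
      dbar w (fderiv ℝ f x) = 0) (N : ℕ) :
    Z.IsClosedForm (dividedDbar P f N) where
  contDiffAt x hx w :=
    (hf.contDiffOn_dividedDbar hΩ hP hPB hPB' N w).contDiffAt (hΩ.mem_nhds (hZ hx))
  dbar_comm x hx :=
    hf.dbar_fderiv_dividedDbar_comm hΩ (hP x (hZ hx)).differentiableAt (hZ hx) N
  collar x hx hx2 w hw := by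
    by_cases hPx : P x = 0
    · rw [dividedDbar_eq_zero f N hPx, LinearMap.zero_apply]
    · rw [dividedDbar_apply, hcollar x hx hx2 hPx w hw, mul_zero]

end HasFlatDbar

end FlatDbar

/-! ### Homogeneous partitions of unity on the punctured plane -/

section Homogeneous

variable {E F : Type*} [NormedAddCommGroup E] [NormedSpace ℝ E] [NormedAddCommGroup F]
  [NormedSpace ℝ F] {g : E → F} {k : ℕ}

/-- `g` is positively homogeneous of degree `-k`. -/
def IsHomogeneousNeg (k : ℕ) (g : E → F) : Prop :=
  ∀ c : ℝ, 0 < c → ∀ x, g x = c ^ k • g (c • x)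

namespace IsHomogeneousNeg

lemma fderiv (hg : IsHomogeneousNeg k g) : IsHomogeneousNeg (k + 1) (fderiv ℝ g) :=
  fun c hc x => by
    have hg' : g = c ^ k • fun x => g (c • x) := funext (hg c hc)
    conv_lhs => rw [hg']
    rw [fderiv_const_smul_field, Pi.smul_apply, fderiv_comp_smul, smul_smul, pow_succ]

lemma eventually_norm_le [ProperSpace E] (hg : IsHomogeneousNeg k g)
    (hgc : ContinuousOn g (sphere 0 1)) :
    ∀ᶠ D in atTop, ∀ x ≠ 0, ‖g x‖ ≤ D / ‖x‖ ^ k := by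
  obtain ⟨D₀, hD₀⟩ := (isCompact_sphere (0 : E) 1).exists_bound_of_continuousOn hgc
  filter_upwards [eventually_ge_atTop D₀] with D hD x hx
  have hxpos := norm_pos_iff.2 hx
  have hmem : ‖x‖⁻¹ • x ∈ sphere (0 : E) 1 := by simp [norm_smul, hxpos.ne']
  rw [hg ‖x‖⁻¹ (by positivity) x, norm_smul, norm_pow, norm_inv, norm_norm, inv_pow,
    div_eq_inv_mul]
  gcongr
  exact (hD₀ _ hmem).trans hD

end IsHomogeneousNeg

end Homogeneous

section ConicPartition

variable {ι : Type*} {U : ι → Set ℂ}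

set_option maxSynthPendingDepth 3 in
/-- A `C²` partition of unity on `ℂ ∖ {0}` subordinate to the cones `U i`, with the scale invariant
estimates satisfied by functions homogeneous of degree zero: `margin` is the angular distance
between the support of `toFun i` and the complement of `U i`, and `bound` controls the first two
derivatives. -/
structure ConicPartition [Fintype ι] (U : ι → Set ℂ) where
  toFun : ι → ℂ → ℂ
  margin : ℝ
  bound : ℝ
  margin_pos : 0 < margin
  bound_nonneg : 0 ≤ bound
  contDiffAt : ∀ i, ∀ τ ≠ 0, ContDiffAt ℝ 2 (toFun i) τ
  norm_le_one : ∀ i τ, ‖toFun i τ‖ ≤ 1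
  sum_eq_one : ∀ τ ≠ 0, ∑ i, toFun i τ = 1
  eventuallyEq_zero_or_ball_subset : ∀ i, ∀ τ ≠ 0,
    toFun i =ᶠ[𝓝 τ] 0 ∨ ball τ (margin * ‖τ‖) ⊆ U i
  norm_fderiv_le : ∀ i, ∀ τ ≠ 0, ‖fderiv ℝ (toFun i) τ‖ ≤ bound / ‖τ‖
  norm_fderiv_fderiv_le : ∀ i, ∀ τ ≠ 0, ‖fderiv ℝ (fderiv ℝ (toFun i)) τ‖ ≤ bound / ‖τ‖ ^ 2

lemma inv_norm_smul_mem_sphere {τ : ℂ} (hτ : τ ≠ 0) : ‖τ‖⁻¹ • τ ∈ sphere (0 : ℂ) 1 := by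
  simp [norm_ne_zero_iff.2 hτ]

lemma contDiffAt_inv_norm_smul {τ : ℂ} (hτ : τ ≠ 0) :
    ContDiffAt ℝ 2 (fun τ : ℂ => ‖τ‖⁻¹ • τ) τ :=
  ((contDiffAt_norm ℝ hτ).inv (norm_ne_zero_iff.2 hτ)).smul contDiffAt_id

/-- The extension of a partition of unity of the unit circle to `ℂ`, constant along rays. -/
def radialExtension
    (ρ : SmoothPartitionOfUnity ι (modelWithCornersSelf ℝ ℂ) ℂ (sphere 0 1)) (i : ι) (τ : ℂ) : ℂ :=
  (ρ i (‖τ‖⁻¹ • τ) : ℝ)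

section radialExtension

variable {ρ : SmoothPartitionOfUnity ι (modelWithCornersSelf ℝ ℂ) ℂ (sphere 0 1)} {i : ι} {τ : ℂ}

lemma contDiffAt_radialExtension (hτ : τ ≠ 0) : ContDiffAt ℝ 2 (radialExtension ρ i) τ := by
  have hρ : ContDiff ℝ 2 (ρ i) := (ρ i).contMDiff.contDiff.of_le (WithTop.coe_le_coe.2 le_top)
  exact ofRealCLM.contDiff.contDiffAt.comp τ
    (hρ.contDiffAt.comp τ (contDiffAt_inv_norm_smul hτ))

lemma norm_radialExtension_le_one : ‖radialExtension ρ i τ‖ ≤ 1 := by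
  rw [radialExtension, norm_real, Real.norm_of_nonneg (ρ.nonneg i _)]
  exact ρ.le_one i _

lemma sum_radialExtension [Fintype ι] (hτ : τ ≠ 0) : ∑ i, radialExtension ρ i τ = 1 := by
  have hsum := ρ.sum_eq_one (inv_norm_smul_mem_sphere hτ)
  rw [finsum_eq_sum_of_fintype] at hsum
  simp only [radialExtension]
  exact_mod_cast hsum

lemma isHomogeneousNeg_radialExtension : IsHomogeneousNeg 0 (radialExtension ρ i) := by
  intro c hc τ
  have hproj : ‖c • τ‖⁻¹ • c • τ = ‖τ‖⁻¹ • τ := by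
    rw [norm_smul, Real.norm_of_nonneg hc.le, smul_smul, mul_inv_rev, mul_assoc,
      inv_mul_cancel₀ hc.ne', mul_one]
  simp only [radialExtension, hproj, pow_zero, one_smul]

set_option maxSynthPendingDepth 3 in
lemma eventually_norm_fderiv_radialExtension_le :
    ∀ᶠ D in atTop, ∀ τ ≠ 0, ‖fderiv ℝ (radialExtension ρ i) τ‖ ≤ D / ‖τ‖ ∧
      ‖fderiv ℝ (fderiv ℝ (radialExtension ρ i)) τ‖ ≤ D / ‖τ‖ ^ 2 := by
  have hhom := (isHomogeneousNeg_radialExtension (ρ := ρ) (i := i)).fderiv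
  have hfderiv (τ : ℂ) (hτ : τ ∈ sphere (0 : ℂ) 1) :
      ContDiffAt ℝ 1 (fderiv ℝ (radialExtension ρ i)) τ :=
    (contDiffAt_radialExtension (Metric.ne_of_mem_sphere hτ one_ne_zero)).fderiv_right
      (by norm_num)
  filter_upwards [hhom.eventually_norm_le fun τ hτ =>
      (hfderiv τ hτ).continuousAt.continuousWithinAt,
    hhom.fderiv.eventually_norm_le fun τ hτ =>
      ((hfderiv τ hτ).fderiv_right (m := 0) (by norm_num)).continuousAt.continuousWithinAt]
    with D hD hD' τ hτ
  exact ⟨by simpa using hD τ hτ, hD' τ hτ⟩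

lemma eventually_thickening_tsupport_subset {U : Set ℂ} (hU : IsOpen U) (hρU : tsupport (ρ i) ⊆ U) :
    ∀ᶠ ε in 𝓝[>] (0 : ℝ), thickening ε (tsupport (ρ i) ∩ sphere (0 : ℂ) 1) ⊆ U := by
  have hK : IsCompact (tsupport (ρ i) ∩ sphere (0 : ℂ) 1) :=
    (isCompact_sphere _ _).inter_left (isClosed_tsupport _)
  obtain ⟨δ, hδ, hδU⟩ := hK.exists_thickening_subset_open hU (inter_subset_left.trans hρU)
  filter_upwards [Ioo_mem_nhdsGT hδ] with ε hε using (thickening_mono hε.2.le _).trans hδU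

lemma radialExtension_eventuallyEq_zero_or_ball_subset {U : Set ℂ}
    (hU : ∀ c : ℝ, 0 < c → ∀ τ ∈ U, c • τ ∈ U) {ε : ℝ}
    (hε : thickening ε (tsupport (ρ i) ∩ sphere (0 : ℂ) 1) ⊆ U) (hτ : τ ≠ 0) :
    radialExtension ρ i =ᶠ[𝓝 τ] 0 ∨ ball τ (ε * ‖τ‖) ⊆ U := by
  by_cases hsupp : ‖τ‖⁻¹ • τ ∈ tsupport (ρ i)
  · refine .inr fun y hy => ?_
    have hτpos := norm_pos_iff.2 hτ
    have hyU : ‖τ‖⁻¹ • y ∈ U := by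
      refine hε (mem_thickening_iff.2 ⟨_, ⟨hsupp, inv_norm_smul_mem_sphere hτ⟩, ?_⟩)
      rw [dist_smul₀, norm_inv, norm_norm, inv_mul_lt_iff₀ hτpos, mul_comm]
      exact hy
    simpa only [smul_inv_smul₀ hτpos.ne'] using hU ‖τ‖ hτpos _ hyU
  · refine .inl ?_
    filter_upwards [(contDiffAt_inv_norm_smul hτ).continuousAt.eventually
      (notMem_tsupport_iff_eventuallyEq.1 hsupp)] with y hy
    simp only [radialExtension, hy, Pi.zero_apply, ofReal_zero]

end radialExtension

theorem nonempty_conicPartition [Fintype ι] (hU : ∀ i, IsOpen (U i))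
    (hcone : ∀ i, ∀ c : ℝ, 0 < c → ∀ τ ∈ U i, c • τ ∈ U i) (hcover : ∀ τ ≠ 0, ∃ i, τ ∈ U i) :
    Nonempty (ConicPartition U) := by
  obtain ⟨ρ, hρ⟩ := SmoothPartitionOfUnity.exists_isSubordinate (modelWithCornersSelf ℝ ℂ)
    (isClosed_sphere (x := (0 : ℂ)) (ε := 1)) U hU fun τ hτ =>
      mem_iUnion.2 (hcover τ (Metric.ne_of_mem_sphere hτ one_ne_zero))
  obtain ⟨ε, hε, hεpos⟩ := ((eventually_all.2 fun i =>
    eventually_thickening_tsupport_subset (hU i) (hρ i)).and self_mem_nhdsWithin).exists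
  obtain ⟨D, hD, hD0⟩ := ((eventually_all.2 fun i =>
    eventually_norm_fderiv_radialExtension_le (ρ := ρ) (i := i)).and (eventually_ge_atTop 0)).exists
  exact ⟨{
    toFun := radialExtension ρ
    margin := ε
    bound := D
    margin_pos := hεpos
    bound_nonneg := hD0
    contDiffAt := fun _ _ => contDiffAt_radialExtension
    norm_le_one := fun _ _ => norm_radialExtension_le_one
    sum_eq_one := fun _ => sum_radialExtension
    eventuallyEq_zero_or_ball_subset := fun i _ =>
      radialExtension_eventuallyEq_zero_or_ball_subset (hcone i) (hε i)
    norm_fderiv_le := fun i τ hτ => (hD i τ hτ).1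
    norm_fderiv_fderiv_le := fun i τ hτ => (hD i τ hτ).2 }⟩

end ConicPartition

/-! ### Gluing with respect to a partition of unity at the scale of `P` -/

lemma norm_fderiv_real_le_of_norm_le {E : Type*} [NormedAddCommGroup E] [NormedSpace ℂ E]
    {g : E → ℂ} {x : E} {r K : ℝ} (hr : 0 < r) (hg : DifferentiableOn ℂ g (ball x r))
    (hK : ∀ y ∈ ball x r, ‖g y‖ ≤ K) : ‖fderiv ℝ g x‖ ≤ 2 * K / r := by
  rw [(hg.differentiableAt (ball_mem_nhds x hr)).fderiv_restrictScalars ℝ,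
    ContinuousLinearMap.norm_restrictScalars]
  refine Complex.norm_fderiv_le_div_of_mapsTo_ball hg (fun y hy => ?_) hr
  rw [mem_closedBall, dist_eq_norm]
  linarith [norm_sub_le (g y) (g x), hK y hy, hK x (mem_ball_self hr)]

lemma eventually_mem_and_ne_zero {X : Type*} [TopologicalSpace X] {P : X → ℂ} {Ω : Set X} {x : X}
    (hΩ : IsOpen Ω) (hP : ContinuousOn P Ω) (hx : x ∈ Ω) (hPx : P x ≠ 0) :
    ∀ᶠ y in 𝓝 x, y ∈ Ω ∧ P y ≠ 0 :=
  (hΩ.eventually_mem hx).and ((hP.continuousAt (hΩ.mem_nhds hx)).eventually_ne hPx)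

lemma norm_sum_le_card_mul {ι F : Type*} [Fintype ι] [SeminormedAddCommGroup F] {g : ι → F} {K : ℝ}
    (hg : ∀ i, ‖g i‖ ≤ K) : ‖∑ i, g i‖ ≤ Fintype.card ι * K := by
  simpa using norm_sum_le_of_le Finset.univ fun i _ => hg i

section Gluing

variable {E ι : Type*} [NormedAddCommGroup E] [NormedSpace ℂ E] {P : E → ℂ} {Ω : Set E}
  {S : ι → Set E} {f : ι → E → ℂ} {s γ C M K : ℝ} {x : E} {i j : ι}

/-- Bounded holomorphic functions `f i` on the sets `S i` whose differences on the intersections are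
flat of Gevrey order `s` with respect to `P`. -/
structure ExpCompatible (P : E → ℂ) (S : ι → Set E) (f : ι → E → ℂ) (s γ C M : ℝ) : Prop where
  order_pos : 0 < s
  rate_pos : 0 < γ
  const_pos : 0 < C
  bound_pos : 0 < M
  analyticOnNhd : ∀ i, AnalyticOnNhd ℂ (f i) (S i)
  norm_le : ∀ i, ∀ x ∈ S i, ‖f i x‖ ≤ M
  norm_sub_le : ∀ i j, ∀ x ∈ S i ∩ S j, ‖f i x - f j x‖ ≤ C * expFlat s γ ‖P x‖

set_option maxSynthPendingDepth 3 in
/-- A `C²` partition of unity on `Ω ∖ {P = 0}` subordinate to the sets `S i` and adapted to the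
scale `‖P x‖`: near `x` the weight `i` vanishes or the ball of radius `radius * ‖P x‖` is contained
in `S i`, and derivatives of order `k ≤ 2` are bounded by `bound / ‖P x‖ ^ k`. -/
structure ScaledPartition [Fintype ι] (P : E → ℂ) (Ω : Set E) (S : ι → Set E) where
  weight : ι → E → ℂ
  radius : ℝ
  bound : ℝ
  radius_pos : 0 < radius
  bound_nonneg : 0 ≤ bound
  contDiffAt : ∀ i, ∀ x ∈ Ω, P x ≠ 0 → ContDiffAt ℝ 2 (weight i) x
  norm_le_one : ∀ i x, ‖weight i x‖ ≤ 1
  sum_eq_one : ∀ x ∈ Ω, P x ≠ 0 → ∑ i, weight i x = 1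
  eventuallyEq_zero_or_ball_subset : ∀ i, ∀ x ∈ Ω, P x ≠ 0 →
    weight i =ᶠ[𝓝 x] 0 ∨ ball x (radius * ‖P x‖) ⊆ S i
  norm_fderiv_le : ∀ i, ∀ x ∈ Ω, P x ≠ 0 → ‖fderiv ℝ (weight i) x‖ ≤ bound / ‖P x‖
  norm_fderiv_fderiv_le : ∀ i, ∀ x ∈ Ω, P x ≠ 0 →
    ‖fderiv ℝ (fderiv ℝ (weight i)) x‖ ≤ bound / ‖P x‖ ^ 2
  norm_pos_and_le_of_mem_ball : ∀ x ∈ Ω, P x ≠ 0 → ∀ y ∈ ball x (radius * ‖P x‖),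
    0 < ‖P y‖ ∧ ‖P y‖ ≤ 2 * ‖P x‖

namespace ScaledPartition

variable [Fintype ι] (ψ : ScaledPartition P Ω S)

/-- The sum of the `f i` weighted by the partition of unity. -/
def glue (f : ι → E → ℂ) (x : E) : ℂ := ∑ i, ψ.weight i x * f i x

/-- The weight `i` does not vanish identically near `x`. -/
def Active (x : E) (i : ι) : Prop := ¬ ψ.weight i =ᶠ[𝓝 x] 0

variable {ψ}

lemma Active.ball_subset (hi : ψ.Active x i) (hx : x ∈ Ω) (hPx : P x ≠ 0) :
    ball x (ψ.radius * ‖P x‖) ⊆ S i :=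
  (ψ.eventuallyEq_zero_or_ball_subset i x hx hPx).resolve_left hi

lemma radius_mul_norm_pos (hPx : P x ≠ 0) : 0 < ψ.radius * ‖P x‖ :=
  mul_pos ψ.radius_pos (norm_pos_iff.2 hPx)

lemma Active.mem (hi : ψ.Active x i) (hx : x ∈ Ω) (hPx : P x ≠ 0) : x ∈ S i :=
  hi.ball_subset hx hPx (mem_ball_self (radius_mul_norm_pos hPx))

lemma exists_active (hx : x ∈ Ω) (hPx : P x ≠ 0) : ∃ i, ψ.Active x i := by
  by_contra! h
  have hsum := ψ.sum_eq_one x hx hPx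
  rw [Finset.sum_eq_zero fun i _ => (not_not.1 (h i)).self_of_nhds] at hsum
  exact zero_ne_one hsum

lemma norm_weight_mul_le {z : ℂ} (hK : 0 ≤ K) (hz : ψ.Active x i → ‖z‖ ≤ K) :
    ‖ψ.weight i x * z‖ ≤ K := by
  by_cases hi : ψ.Active x i
  · calc ‖ψ.weight i x * z‖ ≤ 1 * K := by
          rw [norm_mul]
          gcongr
          exacts [ψ.norm_le_one i x, hz hi]
      _ = K := one_mul K
  · simpa [(not_not.1 hi).self_of_nhds] using hK

lemma norm_glue_le (hf : ExpCompatible P S f s γ C M) (hx : x ∈ Ω) (hPx : P x ≠ 0) :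
    ‖ψ.glue f x‖ ≤ Fintype.card ι * M :=
  norm_sum_le_card_mul fun i => norm_weight_mul_le hf.bound_pos.le fun hi =>
    hf.norm_le i x (hi.mem hx hPx)

lemma norm_sub_glue_le (hf : ExpCompatible P S f s γ C M) (hx : x ∈ Ω) (hPx : P x ≠ 0)
    (hj : x ∈ S j) : ‖f j x - ψ.glue f x‖ ≤ Fintype.card ι * (C * expFlat s γ ‖P x‖) := by
  have hsum : f j x - ψ.glue f x = ∑ i, ψ.weight i x * (f j x - f i x) := by
    simp only [mul_sub, Finset.sum_sub_distrib, ← Finset.sum_mul, ψ.sum_eq_one x hx hPx, one_mul,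
      glue]
  rw [hsum]
  exact norm_sum_le_card_mul fun i => norm_weight_mul_le
    (mul_nonneg hf.const_pos.le (expFlat_nonneg _ _ _)) fun hi =>
      hf.norm_sub_le j i x ⟨hj, hi.mem hx hPx⟩

lemma contDiffAt_weight_mul {g : E → ℂ} (hg : AnalyticOnNhd ℂ g (S i)) (hx : x ∈ Ω)
    (hPx : P x ≠ 0) : ContDiffAt ℝ 2 (fun y => ψ.weight i y * g y) x := by
  by_cases hi : ψ.Active x i
  · exact (ψ.contDiffAt i x hx hPx).mul ((hg x (hi.mem hx hPx)).contDiffAt.restrict_scalars ℝ)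
  · refine (contDiffAt_const (c := 0)).congr_of_eventuallyEq ?_
    filter_upwards [not_not.1 hi] with y hy
    rw [hy, Pi.zero_apply, zero_mul]

lemma dbar_fderiv_weight_mul {g : E → ℂ} (hg : AnalyticOnNhd ℂ g (S i)) (hx : x ∈ Ω)
    (hPx : P x ≠ 0) (w : E) :
    dbar w (fderiv ℝ (fun y => ψ.weight i y * g y) x) =
      g x * dbar w (fderiv ℝ (ψ.weight i) x) := by
  by_cases hi : ψ.Active x i
  · have hgx := (hg x (hi.mem hx hPx)).differentiableAt
    rw [fderiv_fun_mul ((ψ.contDiffAt i x hx hPx).differentiableAt two_ne_zero)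
      (hgx.restrictScalars ℝ), map_add, dbar_smul, dbar_smul, dbar_fderiv_eq_zero hgx, mul_zero,
      zero_add]
  · have hzero : (fun y => ψ.weight i y * g y) =ᶠ[𝓝 x] 0 := by
      filter_upwards [not_not.1 hi] with y hy
      rw [hy, Pi.zero_apply, zero_mul]
    rw [hzero.fderiv_eq, (not_not.1 hi).fderiv_eq, fderiv_zero, Pi.zero_apply, map_zero, mul_zero]

lemma contDiffAt_glue (hf : ExpCompatible P S f s γ C M) (hx : x ∈ Ω) (hPx : P x ≠ 0) :
    ContDiffAt ℝ 2 (ψ.glue f) x :=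
  ContDiffAt.sum fun i _ => contDiffAt_weight_mul (hf.analyticOnNhd i) hx hPx

lemma sum_fderiv_weight (hΩ : IsOpen Ω) (hP : ContinuousOn P Ω) (hx : x ∈ Ω) (hPx : P x ≠ 0) :
    ∑ i, fderiv ℝ (ψ.weight i) x = 0 := by
  have hone : (fun y => ∑ i, ψ.weight i y) =ᶠ[𝓝 x] fun _ => 1 := by
    filter_upwards [eventually_mem_and_ne_zero hΩ hP hx hPx] with y hy
      using ψ.sum_eq_one y hy.1 hy.2
  rw [← fderiv_fun_sum fun i _ => (ψ.contDiffAt i x hx hPx).differentiableAt two_ne_zero,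
    hone.fderiv_eq, fderiv_const_apply]

-- The derivatives of the weights sum to zero, so a common value `z` can be subtracted.
lemma dbar_fderiv_glue (hf : ExpCompatible P S f s γ C M) (hΩ : IsOpen Ω) (hP : ContinuousOn P Ω)
    (hx : x ∈ Ω) (hPx : P x ≠ 0) (w : E) (z : ℂ) :
    dbar w (fderiv ℝ (ψ.glue f) x) =
      ∑ i, (f i x - z) * dbar w (fderiv ℝ (ψ.weight i) x) := by
  have hglue : fderiv ℝ (ψ.glue f) x = ∑ i, fderiv ℝ (fun y => ψ.weight i y * f i y) x :=
    fderiv_fun_sum fun i _ =>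
      (contDiffAt_weight_mul (hf.analyticOnNhd i) hx hPx).differentiableAt two_ne_zero
  simp only [sub_mul, Finset.sum_sub_distrib, ← Finset.mul_sum, ← map_sum,
    sum_fderiv_weight hΩ hP hx hPx, map_zero, mul_zero, sub_zero, hglue]
  rw [map_sum]
  exact Finset.sum_congr rfl fun i _ => dbar_fderiv_weight_mul (hf.analyticOnNhd i) hx hPx w

lemma dbar_fderiv_glue_eq_zero (hf : ExpCompatible P S f s γ C M) (hΩ : IsOpen Ω)
    (hP : ContinuousOn P Ω) (hx : x ∈ Ω) (hPx : P x ≠ 0) {w : E}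
    (hw : ∀ i, dbar w (fderiv ℝ (ψ.weight i) x) = 0) : dbar w (fderiv ℝ (ψ.glue f) x) = 0 := by
  simp [dbar_fderiv_glue hf hΩ hP hx hPx w 0, hw]

section TermEstimates

variable {g : E → ℂ}

lemma hasFDerivAt_mul_dbar_weight (hg : DifferentiableAt ℂ g x) (hx : x ∈ Ω) (hPx : P x ≠ 0)
    (w : E) :
    HasFDerivAt (fun y => g y * dbar w (fderiv ℝ (ψ.weight i) y))
      (g x • (dbar w).comp (fderiv ℝ (fderiv ℝ (ψ.weight i)) x) +
        dbar w (fderiv ℝ (ψ.weight i) x) • fderiv ℝ g x) x :=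
  (hg.restrictScalars ℝ).hasFDerivAt.mul ((dbar w).hasFDerivAt.comp x
    (((ψ.contDiffAt i x hx hPx).fderiv_right (m := 1) (by norm_num)).differentiableAt
      one_ne_zero).hasFDerivAt)

lemma norm_dbar_weight_le (hx : x ∈ Ω) (hPx : P x ≠ 0) (w : E) :
    ‖dbar w (fderiv ℝ (ψ.weight i) x)‖ ≤ ψ.bound / ‖P x‖ * ‖w‖ :=
  (norm_dbar_le _ _).trans (by gcongr; exact ψ.norm_fderiv_le i x hx hPx)

set_option maxSynthPendingDepth 3 in
lemma norm_dbar_comp_fderiv_fderiv_weight_le (hx : x ∈ Ω) (hPx : P x ≠ 0) (w : E) :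
    ‖(dbar w).comp (fderiv ℝ (fderiv ℝ (ψ.weight i)) x)‖ ≤ ψ.bound / ‖P x‖ ^ 2 * ‖w‖ := by
  have := ψ.bound_nonneg
  refine ContinuousLinearMap.opNorm_le_bound _ (by positivity) fun h => ?_
  calc _ ≤ ‖fderiv ℝ (fderiv ℝ (ψ.weight i)) x h‖ * ‖w‖ := norm_dbar_le _ _
    _ ≤ ψ.bound / ‖P x‖ ^ 2 * ‖h‖ * ‖w‖ := by
        gcongr
        exact ContinuousLinearMap.le_of_opNorm_le _ (ψ.norm_fderiv_fderiv_le i x hx hPx) h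
    _ = ψ.bound / ‖P x‖ ^ 2 * ‖w‖ * ‖h‖ := by ring

lemma norm_fderiv_mul_dbar_weight_le (hx : x ∈ Ω) (hPx : P x ≠ 0) (hK : 0 ≤ K)
    (hg : DifferentiableOn ℂ g (ball x (ψ.radius * ‖P x‖)))
    (hgK : ∀ y ∈ ball x (ψ.radius * ‖P x‖), ‖g y‖ ≤ K) (w : E) :
    ‖fderiv ℝ (fun y => g y * dbar w (fderiv ℝ (ψ.weight i) y)) x‖ ≤
      K * (1 + 2 / ψ.radius) * ψ.bound * ‖w‖ / ‖P x‖ ^ 2 := by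
  have hr := radius_mul_norm_pos (ψ := ψ) hPx
  have := norm_pos_iff.2 hPx
  have := ψ.radius_pos
  have := ψ.bound_nonneg
  rw [(hasFDerivAt_mul_dbar_weight (hg.differentiableAt (ball_mem_nhds x hr)) hx hPx w).fderiv]
  calc _ ≤ ‖g x‖ * ‖(dbar w).comp (fderiv ℝ (fderiv ℝ (ψ.weight i)) x)‖ +
        ‖dbar w (fderiv ℝ (ψ.weight i) x)‖ * ‖fderiv ℝ g x‖ := by
        refine (norm_add_le _ _).trans_eq ?_
        rw [norm_smul, norm_smul]
    _ ≤ K * (ψ.bound / ‖P x‖ ^ 2 * ‖w‖) +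
        ψ.bound / ‖P x‖ * ‖w‖ * (2 * K / (ψ.radius * ‖P x‖)) := by
        gcongr
        exacts [hgK x (mem_ball_self hr), norm_dbar_comp_fderiv_fderiv_weight_le hx hPx w,
          norm_dbar_weight_le hx hPx w, norm_fderiv_real_le_of_norm_le hr hg hgK]
    _ = K * (1 + 2 / ψ.radius) * ψ.bound * ‖w‖ / ‖P x‖ ^ 2 := by
        field_simp

end TermEstimates

lemma norm_sub_le_of_active (hf : ExpCompatible P S f s γ C M) (hx : x ∈ Ω) (hPx : P x ≠ 0)
    (hi : ψ.Active x i) (hj : ψ.Active x j) :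
    ∀ y ∈ ball x (ψ.radius * ‖P x‖),
      ‖f j y - f i y‖ ≤ C * expFlat s (γ / 2 ^ (1 / s)) ‖P x‖ := fun y hy => by
  obtain ⟨hPy, hPy2⟩ := ψ.norm_pos_and_le_of_mem_ball x hx hPx y hy
  refine (hf.norm_sub_le j i y ⟨hj.ball_subset hx hPx hy, hi.ball_subset hx hPx hy⟩).trans ?_
  exact mul_le_mul_of_nonneg_left
    (expFlat_le_of_le_two_mul hf.order_pos hf.rate_pos hPy hPy2) hf.const_pos.le

lemma norm_dbar_fderiv_glue_le (hf : ExpCompatible P S f s γ C M) (hΩ : IsOpen Ω)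
    (hP : ContinuousOn P Ω) (hx : x ∈ Ω) (hPx : P x ≠ 0) (w : E) :
    ‖dbar w (fderiv ℝ (ψ.glue f) x)‖ ≤ Fintype.card ι *
      (C * expFlat s (γ / 2 ^ (1 / s)) ‖P x‖ * (ψ.bound / ‖P x‖ * ‖w‖)) := by
  obtain ⟨i, hi⟩ := ψ.exists_active hx hPx
  have := ψ.bound_nonneg
  have := hf.const_pos.le
  have := expFlat_nonneg s (γ / 2 ^ (1 / s)) ‖P x‖
  rw [dbar_fderiv_glue hf hΩ hP hx hPx w (f i x)]
  refine norm_sum_le_card_mul fun j => ?_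
  by_cases hj : ψ.Active x j
  · rw [norm_mul]
    gcongr
    exacts [norm_sub_le_of_active hf hx hPx hi hj x (mem_ball_self (radius_mul_norm_pos hPx)),
      norm_dbar_weight_le hx hPx w]
  · rw [(not_not.1 hj).fderiv_eq, fderiv_zero, Pi.zero_apply, map_zero, mul_zero, norm_zero]
    positivity

lemma differentiableAt_mul_dbar_weight_and_norm_fderiv_le (hf : ExpCompatible P S f s γ C M)
    (hx : x ∈ Ω) (hPx : P x ≠ 0) (hi : ψ.Active x i) (j : ι) (w : E) :
    DifferentiableAt ℝ (fun y => (f j y - f i y) * dbar w (fderiv ℝ (ψ.weight j) y)) x ∧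
      ‖fderiv ℝ (fun y => (f j y - f i y) * dbar w (fderiv ℝ (ψ.weight j) y)) x‖ ≤
        C * expFlat s (γ / 2 ^ (1 / s)) ‖P x‖ * (1 + 2 / ψ.radius) * ψ.bound * ‖w‖ /
          ‖P x‖ ^ 2 := by
  have := ψ.bound_nonneg
  have := ψ.radius_pos
  have hK := mul_nonneg hf.const_pos.le (expFlat_nonneg s (γ / 2 ^ (1 / s)) ‖P x‖)
  by_cases hj : ψ.Active x j
  · have hd : DifferentiableOn ℂ (fun y => f j y - f i y) (ball x (ψ.radius * ‖P x‖)) :=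
      ((hf.analyticOnNhd j).differentiableOn.mono (hj.ball_subset hx hPx)).sub
        ((hf.analyticOnNhd i).differentiableOn.mono (hi.ball_subset hx hPx))
    exact ⟨(hasFDerivAt_mul_dbar_weight (hd.differentiableAt
      (ball_mem_nhds x (radius_mul_norm_pos hPx))) hx hPx w).differentiableAt,
      norm_fderiv_mul_dbar_weight_le hx hPx hK hd (norm_sub_le_of_active hf hx hPx hi hj) w⟩
  · have hzero : (fun y => (f j y - f i y) * dbar w (fderiv ℝ (ψ.weight j) y)) =ᶠ[𝓝 x] 0 := by
      filter_upwards [(not_not.1 hj).eventuallyEq_nhds] with y hy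
      rw [hy.fderiv_eq, fderiv_zero, Pi.zero_apply, map_zero, mul_zero, Pi.zero_apply]
    refine ⟨(differentiableAt_const 0).congr_of_eventuallyEq hzero, ?_⟩
    rw [hzero.fderiv_eq, fderiv_zero, Pi.zero_apply, norm_zero]
    positivity

lemma norm_fderiv_dbar_fderiv_glue_le (hf : ExpCompatible P S f s γ C M) (hΩ : IsOpen Ω)
    (hP : ContinuousOn P Ω) (hx : x ∈ Ω) (hPx : P x ≠ 0) (w : E) :
    ‖fderiv ℝ (fun y => dbar w (fderiv ℝ (ψ.glue f) y)) x‖ ≤ Fintype.card ι *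
      (C * expFlat s (γ / 2 ^ (1 / s)) ‖P x‖ * (1 + 2 / ψ.radius) * ψ.bound * ‖w‖ /
        ‖P x‖ ^ 2) := by
  obtain ⟨i, hi⟩ := ψ.exists_active hx hPx
  have hterm := fun j => differentiableAt_mul_dbar_weight_and_norm_fderiv_le hf hx hPx hi j w
  have hsum : (fun y => dbar w (fderiv ℝ (ψ.glue f) y)) =ᶠ[𝓝 x]
      fun y => ∑ j, (f j y - f i y) * dbar w (fderiv ℝ (ψ.weight j) y) := by
    filter_upwards [eventually_mem_and_ne_zero hΩ hP hx hPx] with y hy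
      using dbar_fderiv_glue hf hΩ hP hy.1 hy.2 w (f i y)
  rw [hsum.fderiv_eq, fderiv_fun_sum fun j _ => (hterm j).1]
  exact norm_sum_le_card_mul fun j => (hterm j).2

end ScaledPartition

end Gluing

/-! ### Expansion of a function with flat `∂̄` -/

section Expansion

/-- The functions `f j` on `S j` have a common Gevrey expansion of order `s` in powers of `P`, with
coefficients holomorphic on `V`. -/
def HasCommonGevreyExpansion {E ι : Type*} [NormedAddCommGroup E] [NormedSpace ℂ E] (s : ℝ)
    (P : E → ℂ) (S : ι → Set E) (f : ι → E → ℂ) (V : Set E) : Prop :=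
  ∃ (g : ℕ → E → ℂ) (b : ℕ → ℝ), IsGevrey s b ∧ (∀ n, AnalyticOnNhd ℂ (g n) V) ∧
    (∀ n, ∀ x ∈ V, ‖g n x‖ ≤ b n) ∧
    ∀ j N, ∀ x ∈ S j ∩ V, ‖f j x - ∑ n ∈ Finset.range N, g n x * P x ^ n‖ ≤ b N * ‖P x‖ ^ N

/-- Solutions `u n` on `V ∖ {P = 0}` of the equations `∂̄(u n) = ∂̄F / P ^ n`, starting with `F`,
with `u n` bounded by `b n`. -/
structure IsDbarTower {E : Type*} [NormedAddCommGroup E] [NormedSpace ℂ E] (V : Set E)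
    (P F : E → ℂ) (b : ℕ → ℝ) (u : ℕ → E → ℂ) : Prop where
  zero : u 0 = F
  differentiableAt : ∀ n, ∀ x ∈ V, P x ≠ 0 → DifferentiableAt ℝ (u n) x
  dbar_fderiv : ∀ n, ∀ x ∈ V, P x ≠ 0 → ∀ w,
    dbar w (fderiv ℝ (u n) x) = (P x ^ n)⁻¹ * dbar w (fderiv ℝ F x)
  norm_le : ∀ n, ∀ x ∈ V, P x ≠ 0 → ‖u n x‖ ≤ b n

theorem Cylinder.exists_isDbarTower {E : Type*} [NormedAddCommGroup E] [NormedSpace ℂ E]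
    [FiniteDimensional ℂ E] {Z : Cylinder E} {P F : E → ℂ} {a : ℕ → ℝ} {M : ℝ}
    (hclosed : ∀ n, Z.IsClosedForm (dividedDbar P F n))
    (hF : ∀ x ∈ Z.tube 1, P x ≠ 0 → DifferentiableAt ℝ F x)
    (hM : ∀ x ∈ Z.tube 1, P x ≠ 0 → ‖F x‖ ≤ M) (hM0 : 0 ≤ M) (ha0 : ∀ n, 0 ≤ a n)
    (ha : ∀ n, ∀ x ∈ Z.tube 1, P x ≠ 0 →
      ‖dbar Z.dir (fderiv ℝ F x)‖ ≤ a n * ‖P x‖ ^ n) :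
    ∃ u, IsDbarTower (Z.tube (1 / 2)) P F
      (fun n => M + (∫ t, cutoffInvNorm (3 / 4 + 1) t) * a n) u := by
  have hI : 0 ≤ ∫ t, cutoffInvNorm (3 / 4 + 1) t := integral_nonneg (cutoffInvNorm_nonneg _)
  have hsub : Z.tube (1 / 2) ⊆ Z.tube 1 := tube_subset_tube (by norm_num)
  have hsolve (n : ℕ) := (hclosed n).exists_dbar_eq (ha0 (n + 1)) fun x hx => by
    simpa using norm_dividedDbar_le (k := 0) (ha (n + 1) x hx) (ha0 (n + 1))
  choose u hu hu_le using hsolve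
  refine ⟨fun n => Nat.casesOn n F u, rfl, ?_, ?_, ?_⟩ <;> rintro (_ | n) x hx hPx
  · exact hF x (hsub hx) hPx
  · exact (hu n x hx).1
  · simp
  · exact (hu n x hx).2
  · exact (hM x (hsub hx) hPx).trans (le_add_of_nonneg_right (mul_nonneg hI (ha0 0)))
  · exact (hu_le n x (hsub hx)).trans (le_add_of_nonneg_left hM0)

namespace IsDbarTower

variable {d : ℕ} {V : Set (Fin d → ℂ)} {P F : (Fin d → ℂ) → ℂ} {u : ℕ → (Fin d → ℂ) → ℂ}
  {b : ℕ → ℝ} {B : ℝ}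

lemma mono {W : Set (Fin d → ℂ)} (hu : IsDbarTower V P F b u) (hWV : W ⊆ V) :
    IsDbarTower W P F b u where
  zero := hu.zero
  differentiableAt n x hx := hu.differentiableAt n x (hWV hx)
  dbar_fderiv n x hx := hu.dbar_fderiv n x (hWV hx)
  norm_le n x hx := hu.norm_le n x (hWV hx)

lemma analyticOnNhd_sub (hu : IsDbarTower V P F b u) (hV : IsOpen V) (hP : AnalyticOnNhd ℂ P V)
    (n : ℕ) :
    AnalyticOnNhd ℂ (fun x => u n x - P x * u (n + 1) x) (V ∩ {x | P x ≠ 0}) := by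
  have hopen : IsOpen (V ∩ {x | P x ≠ 0}) := hP.continuousOn.isOpen_inter_preimage hV isOpen_ne
  refine analyticOnNhd_of_differentiableOn hopen fun x ⟨hx, (hPx : P x ≠ 0)⟩ => ?_
  have hPd := (hP x hx).differentiableAt
  have hd := (hu.differentiableAt n x hx hPx).hasFDerivAt.fun_sub
    ((hPd.restrictScalars ℝ).hasFDerivAt.fun_mul
      (hu.differentiableAt (n + 1) x hx hPx).hasFDerivAt)
  refine (differentiableAt_complex_of_dbar_eq_zero hd.differentiableAt
    fun w => ?_).differentiableWithinAt
  rw [hd.fderiv, map_sub, map_add, dbar_smul, dbar_smul, dbar_fderiv_eq_zero hPd,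
    hu.dbar_fderiv n x hx hPx, hu.dbar_fderiv (n + 1) x hx hPx]
  field_simp
  ring

lemma norm_sub_le (hu : IsDbarTower V P F b u) (hPB : ∀ x ∈ V, ‖P x‖ ≤ B) (n : ℕ) :
    ∀ x ∈ V, P x ≠ 0 → ‖u n x - P x * u (n + 1) x‖ ≤ b n + B * b (n + 1) := fun x hx hPx => by
  have := hPB x hx
  refine (_root_.norm_sub_le _ _).trans ?_
  rw [norm_mul]
  gcongr
  exacts [hu.norm_le n x hx hPx, (norm_nonneg _).trans this, hu.norm_le (n + 1) x hx hPx]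

lemma sum_mul_pow_eq (hu : IsDbarTower V P F b u) {g : ℕ → (Fin d → ℂ) → ℂ} {x : Fin d → ℂ}
    (hg : ∀ n, g n x = u n x - P x * u (n + 1) x) (N : ℕ) :
    ∑ n ∈ Finset.range N, g n x * P x ^ n = F x - u N x * P x ^ N := by
  induction N with
  | zero => simp [hu.zero]
  | succ N ih =>
    rw [Finset.sum_range_succ, ih, hg]
    ring

theorem hasCommonGevreyExpansion {ι : Type*} {S : ι → Set (Fin d → ℂ)}
    {f : ι → (Fin d → ℂ) → ℂ} {s : ℝ} {c : ℕ → ℝ}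
    (hu : IsDbarTower V P F b u) (hV : IsOpen V) (hP : AnalyticOnNhd ℂ P V)
    (hPne : ∀ p ∈ V, ¬ ∀ᶠ x in 𝓝 p, P x = 0) (hB : 0 ≤ B) (hPB : ∀ x ∈ V, ‖P x‖ ≤ B)
    (hs : 0 < s) (hb : IsGevrey s b) (hc : IsGevrey s c)
    (hS : ∀ j, ∀ x ∈ S j ∩ V, P x ≠ 0)
    (hf : ∀ j N, ∀ x ∈ S j ∩ V, ‖f j x - F x‖ ≤ c N * ‖P x‖ ^ N) :
    HasCommonGevreyExpansion s P S f V := by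
  choose g hg hgu hg_le using fun n =>
    exists_analyticOnNhd_extension hV hP hPne (hu.analyticOnNhd_sub hV hP n) (hu.norm_sub_le hPB n)
  refine ⟨g, _, (hb.add hs (.const_mul hs hB (hb.shift hs 1))).max hs (hc.add hs hb), hg,
    fun n x hx => (hg_le n x hx).trans (le_max_left _ _), fun j N x hx => ?_⟩
  have hPx := hS j x hx
  have hsplit : f j x - ∑ n ∈ Finset.range N, g n x * P x ^ n =
      (f j x - F x) + u N x * P x ^ N := by
    rw [hu.sum_mul_pow_eq (fun n => hgu n x hx.2 hPx)]
    ring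
  calc ‖f j x - ∑ n ∈ Finset.range N, g n x * P x ^ n‖
      ≤ c N * ‖P x‖ ^ N + b N * ‖P x‖ ^ N := by
        rw [hsplit]
        refine (norm_add_le _ _).trans ?_
        rw [norm_mul, norm_pow]
        gcongr
        exacts [hf j N x hx, hu.norm_le N x hx.2 hPx]
    _ = (c N + b N) * ‖P x‖ ^ N := by ring
    _ ≤ _ := by
        gcongr
        exact le_max_right _ _

end IsDbarTower

end Expansion

namespace ScaledPartition

variable {E ι : Type*} [NormedAddCommGroup E] [NormedSpace ℂ E] [Fintype ι] {P : E → ℂ}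
  {Ω : Set E} {S : ι → Set E} {f : ι → E → ℂ} {s γ C M : ℝ} {ψ : ScaledPartition P Ω S}

lemma exists_isGevrey_norm_dbar_glue_le (hf : ExpCompatible P S f s γ C M) (hΩ : IsOpen Ω)
    (hP : ContinuousOn P Ω) (w : E) :
    ∃ a, IsGevrey s a ∧ (∀ k, 0 ≤ a k) ∧ ∀ k, ∀ x ∈ Ω, P x ≠ 0 →
      ‖dbar w (fderiv ℝ (ψ.glue f) x)‖ ≤ a k * ‖P x‖ ^ k := by
  have hγ : 0 < γ / 2 ^ (1 / s) := div_pos hf.rate_pos (by positivity)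
  have := ψ.bound_nonneg
  have := hf.const_pos
  have hc : 0 ≤ Fintype.card ι * C * ψ.bound * ‖w‖ := by positivity
  refine ⟨_, .const_mul hf.order_pos hc ((isGevrey_flatConst s hγ).shift hf.order_pos 1),
    fun k => mul_nonneg hc (flatConst_nonneg hf.order_pos hγ _), fun k x hx hPx => ?_⟩
  calc _ ≤ _ := norm_dbar_fderiv_glue_le hf hΩ hP hx hPx w
    _ = Fintype.card ι * C * ψ.bound * ‖w‖ *
        (expFlat s (γ / 2 ^ (1 / s)) ‖P x‖ / ‖P x‖ ^ 1) := by ring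
    _ ≤ Fintype.card ι * C * ψ.bound * ‖w‖ *
        (flatConst s (γ / 2 ^ (1 / s)) (k + 1) * ‖P x‖ ^ k) := by
        gcongr
        exact expFlat_div_pow_le hf.order_pos hγ (norm_pos_iff.2 hPx) 1 k
    _ = _ := by ring

lemma exists_norm_fderiv_dbar_glue_le (hf : ExpCompatible P S f s γ C M) (hΩ : IsOpen Ω)
    (hP : ContinuousOn P Ω) (w : E) (k : ℕ) :
    ∃ K, ∀ x ∈ Ω, P x ≠ 0 →
      ‖fderiv ℝ (fun y => dbar w (fderiv ℝ (ψ.glue f) y)) x‖ ≤ K * ‖P x‖ ^ k := by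
  have hγ : 0 < γ / 2 ^ (1 / s) := div_pos hf.rate_pos (by positivity)
  have := ψ.bound_nonneg
  have := ψ.radius_pos
  have := hf.const_pos
  refine ⟨Fintype.card ι * C * (1 + 2 / ψ.radius) * ψ.bound * ‖w‖ *
    flatConst s (γ / 2 ^ (1 / s)) (k + 2), fun x hx hPx => ?_⟩
  calc _ ≤ _ := norm_fderiv_dbar_fderiv_glue_le hf hΩ hP hx hPx w
    _ = Fintype.card ι * C * (1 + 2 / ψ.radius) * ψ.bound * ‖w‖ *
        (expFlat s (γ / 2 ^ (1 / s)) ‖P x‖ / ‖P x‖ ^ 2) := by ring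
    _ ≤ Fintype.card ι * C * (1 + 2 / ψ.radius) * ψ.bound * ‖w‖ *
        (flatConst s (γ / 2 ^ (1 / s)) (k + 2) * ‖P x‖ ^ k) := by
        gcongr
        exact expFlat_div_pow_le hf.order_pos hγ (norm_pos_iff.2 hPx) 2 k
    _ = _ := by ring

lemma hasFlatDbar_glue (hf : ExpCompatible P S f s γ C M) (hΩ : IsOpen Ω)
    (hP : ContinuousOn P Ω) : HasFlatDbar Ω P (ψ.glue f) where
  contDiffAt _ := contDiffAt_glue hf
  flat w k := by
    obtain ⟨a, -, -, ha⟩ := exists_isGevrey_norm_dbar_glue_le (ψ := ψ) hf hΩ hP w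
    obtain ⟨K, hK⟩ := exists_norm_fderiv_dbar_glue_le (ψ := ψ) hf hΩ hP w k
    refine ⟨max (a k) K, fun x hx hPx => ⟨(ha k x hx hPx).trans ?_, (hK x hx hPx).trans ?_⟩⟩ <;>
      gcongr
    exacts [le_max_left _ _, le_max_right _ _]

lemma norm_sub_glue_le_flatConst_mul_pow (hf : ExpCompatible P S f s γ C M) {x : E} {j : ι}
    (hx : x ∈ Ω) (hPx : P x ≠ 0) (hj : x ∈ S j) (N : ℕ) :
    ‖f j x - ψ.glue f x‖ ≤ Fintype.card ι * C * flatConst s γ N * ‖P x‖ ^ N := by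
  refine (norm_sub_glue_le hf hx hPx hj).trans ?_
  rw [mul_assoc, mul_assoc]
  have := hf.const_pos
  gcongr
  exact expFlat_le hf.order_pos hf.rate_pos (norm_pos_iff.2 hPx) N

theorem hasCommonGevreyExpansion {d : ℕ} {P : (Fin d → ℂ) → ℂ} {S : ι → Set (Fin d → ℂ)}
    {f : ι → (Fin d → ℂ) → ℂ} {Z : Cylinder (Fin d → ℂ)} {V : Set (Fin d → ℂ)} {B : ℝ}
    (ψ : ScaledPartition P (Z.tube 1) S) (hf : ExpCompatible P S f s γ C M)
    (hcollar : ∀ i, ∀ x ∈ Z.tube 1, 1 / 2 ≤ ‖Z.form x‖ → P x ≠ 0 → ∀ w, Z.form w = 0 →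
      dbar w (fderiv ℝ (ψ.weight i) x) = 0)
    (hP : AnalyticOnNhd ℂ P (Z.tube 1)) (hB : 0 ≤ B) (hPB : ∀ x ∈ Z.tube 1, ‖P x‖ ≤ B)
    (hPB' : ∀ x ∈ Z.tube 1, ‖fderiv ℝ P x‖ ≤ B) (hS : ∀ i, ∀ x ∈ S i ∩ V, P x ≠ 0)
    (hV : IsOpen V) (hVZ : V ⊆ Z.tube (1 / 2)) (hPne : ∀ p ∈ V, ¬ ∀ᶠ x in 𝓝 p, P x = 0) :
    HasCommonGevreyExpansion s P S f V := by
  have hVZ' : V ⊆ Z.tube 1 := hVZ.trans (Cylinder.tube_subset_tube (by norm_num))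
  have hΩ : IsOpen (Z.tube 1) := Z.isOpen_tube 1
  have hflat := hasFlatDbar_glue (ψ := ψ) hf hΩ hP.continuousOn
  have hclosed := hflat.isClosedForm_dividedDbar hΩ hP hPB hPB' subset_rfl
    fun x hx hx2 hPx w hw => dbar_fderiv_glue_eq_zero hf hΩ hP.continuousOn hx hPx
      fun i => hcollar i x hx hx2 hPx w hw
  obtain ⟨a, ha, ha0, hale⟩ :=
    exists_isGevrey_norm_dbar_glue_le (ψ := ψ) hf hΩ hP.continuousOn Z.dir
  have hM0 : 0 ≤ Fintype.card ι * M := mul_nonneg (Nat.cast_nonneg _) hf.bound_pos.le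
  obtain ⟨u, hu⟩ := Cylinder.exists_isDbarTower hclosed
    (fun x hx hPx => (hflat.contDiffAt x hx hPx).differentiableAt two_ne_zero)
    (fun x => norm_glue_le hf) hM0 ha0 hale
  have hI : 0 ≤ ∫ t, cutoffInvNorm (3 / 4 + 1) t := integral_nonneg (cutoffInvNorm_nonneg _)
  have hcC : 0 ≤ Fintype.card ι * C := mul_nonneg (Nat.cast_nonneg _) hf.const_pos.le
  exact (hu.mono hVZ).hasCommonGevreyExpansion hV (hP.mono hVZ') hPne hB
    (fun x hx => hPB x (hVZ' hx)) hf.order_pos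
    (.add hf.order_pos (.const hf.order_pos _) (.const_mul hf.order_pos hI ha))
    (.const_mul hf.order_pos hcC (isGevrey_flatConst s hf.rate_pos)) hS
    fun j N x hx => norm_sub_glue_le_flatConst_mul_pow hf (hVZ' hx.2) (hS j x hx) hx.1 N

end ScaledPartition

/-! ### Pulling back a conic partition -/

section ChainRule

variable {E F G : Type*} [NormedAddCommGroup E] [NormedSpace ℝ E] [NormedAddCommGroup F]
  [NormedSpace ℝ F] [NormedAddCommGroup G] [NormedSpace ℝ G] {φ : F → G} {p : E → F} {x : E}

lemma norm_fderiv_comp_le (hφ : DifferentiableAt ℝ φ (p x)) (hp : DifferentiableAt ℝ p x) :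
    ‖fderiv ℝ (φ ∘ p) x‖ ≤ ‖fderiv ℝ φ (p x)‖ * ‖fderiv ℝ p x‖ := by
  rw [fderiv_comp x hφ hp]
  exact ContinuousLinearMap.opNorm_comp_le _ _

lemma eventually_fderiv_comp (hφ : ContDiffAt ℝ 2 φ (p x)) (hp : ContDiffAt ℝ 2 p x) :
    fderiv ℝ (φ ∘ p) =ᶠ[𝓝 x] fun y => (fderiv ℝ φ (p y)).comp (fderiv ℝ p y) := by
  filter_upwards [hp.eventually (by simp), hp.continuousAt.eventually (hφ.eventually (by simp))]
    with y hpy hφy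
  exact fderiv_comp y (hφy.differentiableAt two_ne_zero) (hpy.differentiableAt two_ne_zero)

set_option maxSynthPendingDepth 3 in
lemma norm_fderiv_fderiv_comp_le (hφ : ContDiffAt ℝ 2 φ (p x)) (hp : ContDiffAt ℝ 2 p x) :
    ‖fderiv ℝ (fderiv ℝ (φ ∘ p)) x‖ ≤ ‖fderiv ℝ (fderiv ℝ φ) (p x)‖ * ‖fderiv ℝ p x‖ ^ 2 +
      ‖fderiv ℝ φ (p x)‖ * ‖fderiv ℝ (fderiv ℝ p) x‖ := by
  have hDφ : DifferentiableAt ℝ (fderiv ℝ φ) (p x) :=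
    (hφ.fderiv_right (m := 1) (by norm_num)).differentiableAt one_ne_zero
  have hDp : DifferentiableAt ℝ (fderiv ℝ p) x :=
    (hp.fderiv_right (m := 1) (by norm_num)).differentiableAt one_ne_zero
  have hD := (hDφ.hasFDerivAt.comp x (hp.differentiableAt two_ne_zero).hasFDerivAt).clm_comp
    hDp.hasFDerivAt
  rw [(hD.congr_of_eventuallyEq (eventually_fderiv_comp hφ hp)).fderiv]
  refine ContinuousLinearMap.opNorm_le_bound _ (by positivity) fun h => ?_
  calc _ ≤ ‖fderiv ℝ φ (p x)‖ * ‖fderiv ℝ (fderiv ℝ p) x h‖ +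
        ‖fderiv ℝ (fderiv ℝ φ) (p x) (fderiv ℝ p x h)‖ * ‖fderiv ℝ p x‖ :=
        (norm_add_le _ _).trans (add_le_add (ContinuousLinearMap.opNorm_comp_le _ _)
          (ContinuousLinearMap.opNorm_comp_le _ _))
    _ ≤ ‖fderiv ℝ φ (p x)‖ * (‖fderiv ℝ (fderiv ℝ p) x‖ * ‖h‖) +
        ‖fderiv ℝ (fderiv ℝ φ) (p x)‖ * (‖fderiv ℝ p x‖ * ‖h‖) * ‖fderiv ℝ p x‖ := by
        gcongr
        · exact ContinuousLinearMap.le_opNorm _ _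
        · exact (ContinuousLinearMap.le_opNorm _ _).trans
            (by gcongr; exact ContinuousLinearMap.le_opNorm _ _)
    _ = _ := by ring

end ChainRule

section CollapsedGerm

variable {E : Type*} [NormedAddCommGroup E] [NormedSpace ℂ E]

set_option maxSynthPendingDepth 3 in
/-- A `C²` modification `toFun` of the germ `P` on `Z.tube 1`, with relative error at most `ε`,
which on the collar `1 / 2 ≤ ‖form‖ < 1` is constant in the directions annihilated by `form`. -/
structure CollapsedGerm (P : E → ℂ) (W : Set E) (Z : Cylinder E) (ε : ℝ) where
  toFun : E → ℂ
  bound : ℝ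
  radius : ℝ
  bound_pos : 0 < bound
  radius_pos : 0 < radius
  ball_subset : ∀ x ∈ Z.tube 1, ball x radius ⊆ W
  norm_germ_le : ∀ x ∈ Z.tube 1, ‖P x‖ ≤ bound
  norm_fderiv_germ_le : ∀ x ∈ Z.tube 1, ‖fderiv ℝ P x‖ ≤ bound
  norm_germ_sub_le : ∀ x ∈ Z.tube 1, ∀ y ∈ ball x radius, ‖P y - P x‖ ≤ bound * ‖y - x‖
  contDiffAt : ∀ x ∈ Z.tube 1, ContDiffAt ℝ 2 toFun x
  norm_fderiv_le : ∀ x ∈ Z.tube 1, ‖fderiv ℝ toFun x‖ ≤ bound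
  norm_fderiv_fderiv_le : ∀ x ∈ Z.tube 1, ‖fderiv ℝ (fderiv ℝ toFun) x‖ ≤ bound
  norm_sub_le : ∀ x ∈ Z.tube 1, ‖toFun x - P x‖ ≤ ε * ‖P x‖
  collar : ∀ x ∈ Z.tube 1, 1 / 2 ≤ ‖Z.form x‖ → ∀ w, Z.form w = 0 → fderiv ℝ toFun x w = 0

namespace CollapsedGerm

variable {ι : Type*} [Fintype ι] {P : E → ℂ} {W : Set E} {Z : Cylinder E} {U : ι → Set ℂ}
  {ε : ℝ} {x y : E} {i : ι}

lemma norm_germ_le_two_mul (X : CollapsedGerm P W Z ε) (hε : ε ≤ 1 / 2) (hx : x ∈ Z.tube 1) :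
    ‖P x‖ ≤ 2 * ‖X.toFun x‖ := by
  have hsub : ‖X.toFun x - P x‖ ≤ 1 / 2 * ‖P x‖ := (X.norm_sub_le x hx).trans (by gcongr)
  linarith [norm_le_norm_add_norm_sub (X.toFun x) (P x)]

lemma toFun_ne_zero (X : CollapsedGerm P W Z ε) (hε : ε ≤ 1 / 2) (hx : x ∈ Z.tube 1)
    (hPx : P x ≠ 0) : X.toFun x ≠ 0 :=
  norm_pos_iff.1 (by linarith [X.norm_germ_le_two_mul hε hx, norm_pos_iff.2 hPx])

/-- The radius, relative to `‖P x‖`, of balls around `x` on which the relative oscillation of `P` is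
at most `ε`. -/
def relRadius (X : CollapsedGerm P W Z ε) : ℝ := min ε X.radius / X.bound

lemma relRadius_pos (X : CollapsedGerm P W Z ε) (hε0 : 0 < ε) : 0 < X.relRadius :=
  div_pos (lt_min hε0 X.radius_pos) X.bound_pos

lemma ball_relRadius_subset (X : CollapsedGerm P W Z ε) (hε0 : 0 < ε) (hx : x ∈ Z.tube 1) :
    ball x (X.relRadius * ‖P x‖) ⊆ ball x X.radius := by
  refine ball_subset_ball ?_
  have := X.relRadius_pos hε0
  calc X.relRadius * ‖P x‖ ≤ X.relRadius * X.bound := by gcongr; exact X.norm_germ_le x hx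
    _ = min ε X.radius := div_mul_cancel₀ _ X.bound_pos.ne'
    _ ≤ X.radius := min_le_right _ _

lemma norm_germ_sub_le_of_mem_ball (X : CollapsedGerm P W Z ε) (hε0 : 0 < ε) (hx : x ∈ Z.tube 1)
    (hy : y ∈ ball x (X.relRadius * ‖P x‖)) : ‖P y - P x‖ ≤ ε * ‖P x‖ := by
  have := X.bound_pos
  calc ‖P y - P x‖ ≤ X.bound * ‖y - x‖ :=
        X.norm_germ_sub_le x hx y (X.ball_relRadius_subset hε0 hx hy)
    _ ≤ X.bound * (X.relRadius * ‖P x‖) := by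
        gcongr
        exact (mem_ball_iff_norm.1 hy).le
    _ = min ε X.radius * ‖P x‖ := by
        rw [← mul_assoc, relRadius, mul_div_cancel₀ _ X.bound_pos.ne']
    _ ≤ ε * ‖P x‖ := by
        gcongr
        exact min_le_left _ _

lemma mapsTo_ball_relRadius (X : CollapsedGerm P W Z ε) (hε0 : 0 < ε) (hε : ε ≤ 1 / 2) {μ : ℝ}
    (hεμ : 8 * ε ≤ μ) (hx : x ∈ Z.tube 1) (hPx : P x ≠ 0) :
    MapsTo P (ball x (X.relRadius * ‖P x‖)) (ball (X.toFun x) (μ * ‖X.toFun x‖)) := fun y hy => by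
  have := norm_pos_iff.2 hPx
  have := norm_pos_iff.2 (X.toFun_ne_zero hε hx hPx)
  rw [mem_ball_iff_norm]
  calc ‖P y - X.toFun x‖ ≤ ‖P y - P x‖ + ‖X.toFun x - P x‖ := by
        rw [norm_sub_rev (X.toFun x)]
        exact norm_sub_le_norm_sub_add_norm_sub _ _ _
    _ ≤ ε * ‖P x‖ + ε * ‖P x‖ :=
        add_le_add (X.norm_germ_sub_le_of_mem_ball hε0 hx hy) (X.norm_sub_le x hx)
    _ = 2 * ε * ‖P x‖ := by ring
    _ ≤ 2 * ε * (2 * ‖X.toFun x‖) := by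
        gcongr
        exact X.norm_germ_le_two_mul hε hx
    _ < 8 * ε * ‖X.toFun x‖ := by
        linarith [mul_pos hε0 this]
    _ ≤ μ * ‖X.toFun x‖ := by gcongr

lemma contDiffAt_comp (X : CollapsedGerm P W Z ε) (hε : ε ≤ 1 / 2) (φ : ConicPartition U)
    (hx : x ∈ Z.tube 1) (hPx : P x ≠ 0) : ContDiffAt ℝ 2 (φ.toFun i ∘ X.toFun) x :=
  (φ.contDiffAt i _ (X.toFun_ne_zero hε hx hPx)).comp x (X.contDiffAt x hx)

lemma eventuallyEq_zero_or_ball_subset (X : CollapsedGerm P W Z ε) (hε0 : 0 < ε) (hε : ε ≤ 1 / 2)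
    (φ : ConicPartition U) (hεφ : 8 * ε ≤ φ.margin) (hx : x ∈ Z.tube 1) (hPx : P x ≠ 0) :
    φ.toFun i ∘ X.toFun =ᶠ[𝓝 x] 0 ∨ ball x (X.relRadius * ‖P x‖) ⊆ W ∩ P ⁻¹' U i := by
  refine (φ.eventuallyEq_zero_or_ball_subset i _ (X.toFun_ne_zero hε hx hPx)).imp
    (fun h => h.comp_tendsto (X.contDiffAt x hx).continuousAt) fun h y hy => ⟨?_, ?_⟩
  · exact X.ball_subset x hx (X.ball_relRadius_subset hε0 hx hy)
  · exact h (X.mapsTo_ball_relRadius hε0 hε hεφ hx hPx hy)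

lemma div_norm_toFun_pow_le (X : CollapsedGerm P W Z ε) (hε : ε ≤ 1 / 2) (hx : x ∈ Z.tube 1)
    (hPx : P x ≠ 0) {D : ℝ} (hD : 0 ≤ D) (k : ℕ) :
    D / ‖X.toFun x‖ ^ k ≤ D * 2 ^ k / ‖P x‖ ^ k := by
  have := norm_pos_iff.2 hPx
  have := norm_pos_iff.2 (X.toFun_ne_zero hε hx hPx)
  rw [div_le_div_iff₀ (by positivity) (by positivity), mul_assoc, ← mul_pow]
  gcongr
  exact X.norm_germ_le_two_mul hε hx

lemma norm_fderiv_comp_le (X : CollapsedGerm P W Z ε) (hε : ε ≤ 1 / 2) (φ : ConicPartition U)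
    (hx : x ∈ Z.tube 1) (hPx : P x ≠ 0) :
    ‖fderiv ℝ (φ.toFun i ∘ X.toFun) x‖ ≤ 2 * φ.bound * X.bound / ‖P x‖ := by
  have hp := X.toFun_ne_zero hε hx hPx
  have := φ.bound_nonneg
  calc _ ≤ ‖fderiv ℝ (φ.toFun i) (X.toFun x)‖ * ‖fderiv ℝ X.toFun x‖ :=
        RamisSibuya.norm_fderiv_comp_le ((φ.contDiffAt i _ hp).differentiableAt two_ne_zero)
          ((X.contDiffAt x hx).differentiableAt two_ne_zero)
    _ ≤ φ.bound * 2 ^ 1 / ‖P x‖ ^ 1 * X.bound := by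
        gcongr
        · refine (φ.norm_fderiv_le i _ hp).trans ?_
          simpa using X.div_norm_toFun_pow_le hε hx hPx φ.bound_nonneg 1
        · exact X.norm_fderiv_le x hx
    _ = 2 * φ.bound * X.bound / ‖P x‖ := by ring

set_option maxSynthPendingDepth 3 in
lemma norm_fderiv_fderiv_comp_le (X : CollapsedGerm P W Z ε) (hε : ε ≤ 1 / 2)
    (φ : ConicPartition U) (hx : x ∈ Z.tube 1) (hPx : P x ≠ 0) :
    ‖fderiv ℝ (fderiv ℝ (φ.toFun i ∘ X.toFun)) x‖ ≤ 6 * φ.bound * X.bound ^ 2 / ‖P x‖ ^ 2 := by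
  have hp := X.toFun_ne_zero hε hx hPx
  have := φ.bound_nonneg
  have := X.bound_pos
  have := norm_pos_iff.2 hPx
  calc _ ≤ ‖fderiv ℝ (fderiv ℝ (φ.toFun i)) (X.toFun x)‖ * ‖fderiv ℝ X.toFun x‖ ^ 2 +
        ‖fderiv ℝ (φ.toFun i) (X.toFun x)‖ * ‖fderiv ℝ (fderiv ℝ X.toFun) x‖ :=
        RamisSibuya.norm_fderiv_fderiv_comp_le (φ.contDiffAt i _ hp) (X.contDiffAt x hx)
    _ ≤ φ.bound * 2 ^ 2 / ‖P x‖ ^ 2 * X.bound ^ 2 + φ.bound * 2 ^ 1 / ‖P x‖ ^ 1 * X.bound := by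
        gcongr
        · exact (φ.norm_fderiv_fderiv_le i _ hp).trans
            (X.div_norm_toFun_pow_le hε hx hPx φ.bound_nonneg 2)
        · exact X.norm_fderiv_le x hx
        · refine (φ.norm_fderiv_le i _ hp).trans ?_
          simpa using X.div_norm_toFun_pow_le hε hx hPx φ.bound_nonneg 1
        · exact X.norm_fderiv_fderiv_le x hx
    _ = (4 * φ.bound * X.bound ^ 2 + 2 * φ.bound * X.bound * ‖P x‖) / ‖P x‖ ^ 2 := by
        field_simp
        ring
    _ ≤ (4 * φ.bound * X.bound ^ 2 + 2 * φ.bound * X.bound * X.bound) / ‖P x‖ ^ 2 := by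
        gcongr
        exact X.norm_germ_le x hx
    _ = 6 * φ.bound * X.bound ^ 2 / ‖P x‖ ^ 2 := by ring

/-- The pull-back of a conic partition along a collapsed germ. -/
def scaledPartition (X : CollapsedGerm P W Z ε) (φ : ConicPartition U) (hε0 : 0 < ε)
    (hε : ε ≤ 1 / 2) (hεφ : 8 * ε ≤ φ.margin) :
    ScaledPartition P (Z.tube 1) fun i => W ∩ P ⁻¹' U i where
  weight i := φ.toFun i ∘ X.toFun
  radius := X.relRadius
  bound := max (2 * φ.bound * X.bound) (6 * φ.bound * X.bound ^ 2)
  radius_pos := X.relRadius_pos hε0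
  bound_nonneg := le_max_of_le_left
    (mul_nonneg (mul_nonneg zero_le_two φ.bound_nonneg) X.bound_pos.le)
  contDiffAt _ _ := X.contDiffAt_comp hε φ
  norm_le_one i _ := φ.norm_le_one i _
  sum_eq_one _ hx hPx := φ.sum_eq_one _ (X.toFun_ne_zero hε hx hPx)
  eventuallyEq_zero_or_ball_subset _ _ := X.eventuallyEq_zero_or_ball_subset hε0 hε φ hεφ
  norm_fderiv_le _ _ hx hPx := (X.norm_fderiv_comp_le hε φ hx hPx).trans
    (by gcongr; exact le_max_left _ _)
  norm_fderiv_fderiv_le _ _ hx hPx := (X.norm_fderiv_fderiv_comp_le hε φ hx hPx).trans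
    (by gcongr; exact le_max_right _ _)
  norm_pos_and_le_of_mem_ball x hx hPx y hy := by
    have := norm_pos_iff.2 hPx
    have hsub : ‖P y - P x‖ ≤ 1 / 2 * ‖P x‖ :=
      (X.norm_germ_sub_le_of_mem_ball hε0 hx hy).trans (by gcongr)
    constructor
    · linarith [norm_sub_norm_le (P x) (P y), norm_sub_rev (P x) (P y)]
    · linarith [norm_sub_norm_le (P y) (P x)]

lemma dbar_fderiv_comp_eq_zero (X : CollapsedGerm P W Z ε) (hε : ε ≤ 1 / 2) (φ : ConicPartition U)
    (hx : x ∈ Z.tube 1) (hx2 : 1 / 2 ≤ ‖Z.form x‖) (hPx : P x ≠ 0) {w : E} (hw : Z.form w = 0) :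
    dbar w (fderiv ℝ (φ.toFun i ∘ X.toFun) x) = 0 := by
  have hIw : Z.form (I • w) = 0 := by rw [map_smul, hw, smul_zero]
  rw [fderiv_comp x
    ((φ.contDiffAt i _ (X.toFun_ne_zero hε hx hPx)).differentiableAt two_ne_zero)
    ((X.contDiffAt x hx).differentiableAt two_ne_zero), dbar_apply]
  simp [X.collar x hx hx2 w hw, X.collar x hx hx2 _ hIw]

end CollapsedGerm

end CollapsedGerm

/-! ### Collapsing a germ onto a transverse line -/

section TransverseLine

variable {E : Type*} [NormedAddCommGroup E] [NormedSpace ℂ E] {P : E → ℂ} {r : ℝ}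

lemma exists_bound_and_lipschitz [ProperSpace E] (hP : AnalyticOnNhd ℂ P (ball 0 r)) {ρ : ℝ}
    (hρ : ρ < r) : ∃ B > 0, (∀ x ∈ ball (0 : E) ρ, ‖P x‖ ≤ B ∧ ‖fderiv ℝ P x‖ ≤ B) ∧
      ∀ x ∈ ball (0 : E) ρ, ∀ y ∈ ball (0 : E) ρ, ‖P y - P x‖ ≤ B * ‖y - x‖ := by
  have hC : ∀ x ∈ closedBall (0 : E) ρ, ContDiffAt ℝ 1 P x := fun x hx =>
    (hP x (closedBall_subset_ball hρ hx)).contDiffAt.restrict_scalars ℝ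
  obtain ⟨B₁, hB₁⟩ := (isCompact_closedBall (0 : E) ρ).exists_bound_of_continuousOn
    fun x hx => (hC x hx).continuousAt.continuousWithinAt
  obtain ⟨B₂, hB₂⟩ := (isCompact_closedBall (0 : E) ρ).exists_bound_of_continuousOn
    fun x hx => ((hC x hx).fderiv_right (m := 0) (by norm_num)).continuousAt.continuousWithinAt
  have hfderiv : ∀ x ∈ ball (0 : E) ρ, ‖fderiv ℝ P x‖ ≤ max 1 (max B₁ B₂) := fun x hx =>
    (hB₂ x (ball_subset_closedBall hx)).trans (by simp)
  refine ⟨max 1 (max B₁ B₂), lt_max_of_lt_left one_pos, fun x hx => ⟨?_, hfderiv x hx⟩,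
    fun x hx y hy => (convex_ball (0 : E) ρ).norm_image_sub_le_of_norm_fderiv_le (𝕜 := ℝ)
      (fun z hz => (hC z (ball_subset_closedBall hz)).differentiableAt one_ne_zero) hfderiv hx hy⟩
  exact (hB₁ x (ball_subset_closedBall hx)).trans (by simp)

/-- A line through the origin, scaled so that its unit disk lies in `ball 0 (r / 2)` and meets the
zero set of the germ `P` at most at the origin, with a linear form restricting to the coordinate on
the line. -/
structure TransverseLine (P : E → ℂ) (r : ℝ) where
  dir : E
  form : E →L[ℂ] ℂ
  form_dir : form dir = 1
  norm_dir_lt : ‖dir‖ < r / 2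
  apply_smul_dir_ne_zero : ∀ t : ℂ, t ≠ 0 → ‖t‖ ≤ 1 → P (t • dir) ≠ 0

namespace TransverseLine

lemma radius_pos (L : TransverseLine P r) : 0 < r := by
  linarith [L.norm_dir_lt, norm_nonneg L.dir]

variable (L : TransverseLine P r) {x : E}

/-- The projection onto `ker form` along the line. -/
def proj : E →L[ℂ] E := .id ℂ E - L.form.smulRight L.dir

lemma proj_apply (x : E) : L.proj x = x - L.form x • L.dir := rfl

lemma proj_add_form_smul_dir (x : E) : L.proj x + L.form x • L.dir = x :=
  sub_add_cancel _ _

lemma proj_add_smul_dir (x : E) (t : ℂ) : L.proj (x + t • L.dir) = L.proj x := by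
  simp [proj_apply, L.form_dir, add_smul]

/-- A bump function on the coordinate line. -/
def cutoff : ContDiffBump (0 : ℂ) where
  rIn := 1 / 4
  rOut := 3 / 8
  rIn_pos := by norm_num
  rIn_lt_rOut := by norm_num

/-- The smooth map which is the identity for `‖form x‖ ≤ 1 / 4` and the projection onto the line for
`3 / 8 ≤ ‖form x‖`. -/
def collapse (x : E) : E := cutoff (L.form x) • L.proj x + L.form x • L.dir

lemma collapse_of_norm_form_le (hx : ‖L.form x‖ ≤ 1 / 4) : L.collapse x = x := by
  rw [collapse, cutoff.one_of_mem_closedBall (mem_closedBall_zero_iff.2 hx), one_smul,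
    proj_add_form_smul_dir]

lemma collapse_of_le_norm_form (hx : 3 / 8 ≤ ‖L.form x‖) :
    L.collapse x = L.form x • L.dir := by
  rw [collapse, cutoff.zero_of_le_dist (by simpa [cutoff] using hx), zero_smul, zero_add]

lemma contDiff_collapse : ContDiff ℝ 3 L.collapse := by
  have hform : ContDiff ℝ 3 L.form := (L.form.restrictScalars ℝ).contDiff
  have hproj : ContDiff ℝ 3 L.proj := (L.proj.restrictScalars ℝ).contDiff
  exact ((cutoff.contDiff.comp hform).smul hproj).add (hform.smul contDiff_const)

lemma norm_collapse_sub_le (x : E) : ‖L.collapse x - x‖ ≤ ‖L.proj x‖ := by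
  have hsub : L.collapse x - x = (cutoff (L.form x) - 1) • L.proj x := by
    nth_rw 2 [← L.proj_add_form_smul_dir x]
    rw [collapse, sub_smul, one_smul, add_sub_add_right_eq_sub]
  rw [hsub, norm_smul]
  refine mul_le_of_le_one_left (norm_nonneg _) ?_
  rw [Real.norm_eq_abs, abs_le]
  constructor <;> linarith [cutoff.nonneg (x := L.form x), cutoff.le_one (x := L.form x)]

/-- A closed neighbourhood of the unit disk in the line. -/
def slab : Set E := {x | ‖L.form x‖ ≤ 1 ∧ ‖L.proj x‖ ≤ r / 4}

lemma norm_smul_dir_lt {t : ℂ} (ht : ‖t‖ ≤ 1) : ‖t • L.dir‖ < r / 2 := by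
  rw [norm_smul]
  exact (mul_le_of_le_one_left (norm_nonneg _) ht).trans_lt L.norm_dir_lt

lemma norm_lt_of_mem_slab (hx : x ∈ L.slab) : ‖x‖ < 3 * r / 4 := by
  have h := norm_add_le (L.proj x) (L.form x • L.dir)
  rw [proj_add_form_smul_dir] at h
  linarith [hx.2, L.norm_smul_dir_lt hx.1]

lemma norm_collapse_lt_of_mem_slab (hx : x ∈ L.slab) : ‖L.collapse x‖ < 3 * r / 4 := by
  have h := norm_add_le (cutoff (L.form x) • L.proj x) (L.form x • L.dir)
  have hcut : ‖cutoff (L.form x) • L.proj x‖ ≤ ‖L.proj x‖ := by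
    rw [norm_smul, Real.norm_eq_abs, abs_of_nonneg cutoff.nonneg]
    exact mul_le_of_le_one_left (norm_nonneg _) cutoff.le_one
  rw [collapse]
  linarith [hx.2, L.norm_smul_dir_lt hx.1]

lemma isCompact_slab [ProperSpace E] : IsCompact L.slab :=
  (isCompact_closedBall (0 : E) (3 * r / 4)).of_isClosed_subset
    ((isClosed_le L.form.continuous.norm continuous_const).inter
      (isClosed_le L.proj.continuous.norm continuous_const))
    fun _ hx => mem_closedBall_zero_iff.2 (L.norm_lt_of_mem_slab hx).le

lemma contDiffAt_comp_collapse (hP : AnalyticOnNhd ℂ P (ball 0 r)) (hx : x ∈ L.slab) :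
    ContDiffAt ℝ 3 (P ∘ L.collapse) x := by
  have hmem : L.collapse x ∈ ball (0 : E) r :=
    mem_ball_zero_iff.2 (by linarith [L.norm_collapse_lt_of_mem_slab hx, L.radius_pos])
  exact ((hP _ hmem).contDiffAt.restrict_scalars ℝ).comp x L.contDiff_collapse.contDiffAt

lemma exists_le_norm_apply_smul_dir (hP : AnalyticOnNhd ℂ P (ball 0 r)) :
    ∃ c > 0, ∀ t : ℂ, 1 / 4 ≤ ‖t‖ → ‖t‖ ≤ 1 → c ≤ ‖P (t • L.dir)‖ := by
  have hannulus : ∀ t : ℂ, t ∈ closedBall (0 : ℂ) 1 \ ball 0 (1 / 4) ↔ 1 / 4 ≤ ‖t‖ ∧ ‖t‖ ≤ 1 := by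
    simp [and_comm]
  have hcont : ContinuousOn (fun t : ℂ => ‖P (t • L.dir)‖) (closedBall 0 1 \ ball 0 (1 / 4)) := by
    refine (hP.continuousOn.comp (by fun_prop) fun t ht => ?_).norm
    rw [mem_ball_zero_iff]
    linarith [L.norm_smul_dir_lt ((hannulus t).1 ht).2, L.radius_pos]
  obtain ⟨t, ht, hmin⟩ := ((isCompact_closedBall (0 : ℂ) 1).diff isOpen_ball).exists_isMinOn
    ⟨1, by rw [hannulus]; norm_num⟩ hcont
  refine ⟨‖P (t • L.dir)‖, norm_pos_iff.2 (L.apply_smul_dir_ne_zero t ?_ ((hannulus t).1 ht).2),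
    fun u hu hu' => hmin ((hannulus u).2 ⟨hu, hu'⟩)⟩
  rintro rfl
  exact ht.2 (mem_ball_self (by norm_num))

set_option maxSynthPendingDepth 3 in
lemma exists_bound_fderiv_comp_collapse [ProperSpace E] (hP : AnalyticOnNhd ℂ P (ball 0 r)) :
    ∃ B, ∀ x ∈ L.slab, ‖fderiv ℝ (P ∘ L.collapse) x‖ ≤ B ∧
      ‖fderiv ℝ (fderiv ℝ (P ∘ L.collapse)) x‖ ≤ B := by
  have hD : ∀ x ∈ L.slab, ContDiffAt ℝ 2 (fderiv ℝ (P ∘ L.collapse)) x := fun x hx =>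
    (L.contDiffAt_comp_collapse hP hx).fderiv_right (by norm_num)
  obtain ⟨B₁, hB₁⟩ := L.isCompact_slab.exists_bound_of_continuousOn
    fun x hx => (hD x hx).continuousAt.continuousWithinAt
  obtain ⟨B₂, hB₂⟩ := L.isCompact_slab.exists_bound_of_continuousOn
    fun x hx => ((hD x hx).fderiv_right (m := 1) (by norm_num)).continuousAt.continuousWithinAt
  exact ⟨max B₁ B₂, fun x hx => ⟨(hB₁ x hx).trans (le_max_left _ _),
    (hB₂ x hx).trans (le_max_right _ _)⟩⟩

/-- The union of the parallels to the line at distance less than `δ`, measured by `proj`. -/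
def cylinder (δ : ℝ) : Cylinder E where
  carrier := {x | ‖L.proj x‖ < δ}
  dir := L.dir
  form := L.form
  form_dir := L.form_dir
  isOpen := isOpen_lt L.proj.continuous.norm continuous_const
  add_smul_mem x hx t := by simpa only [mem_ofPred_eq, proj_add_smul_dir] using hx

lemma tube_cylinder_subset_slab {δ : ℝ} (hδ : δ ≤ r / 4) : (L.cylinder δ).tube 1 ⊆ L.slab :=
  fun _ hx => ⟨le_of_lt hx.2, (le_of_lt hx.1).trans hδ⟩

lemma norm_comp_collapse_sub_le {B c ε : ℝ} (hB : 0 ≤ B) (hε0 : 0 < ε) (hε : ε ≤ 1)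
    (hlip : ∀ x ∈ ball (0 : E) (3 * r / 4), ∀ y ∈ ball (0 : E) (3 * r / 4),
      ‖P y - P x‖ ≤ B * ‖y - x‖)
    (hc : ∀ t : ℂ, 1 / 4 ≤ ‖t‖ → ‖t‖ ≤ 1 → c ≤ ‖P (t • L.dir)‖) (hx : x ∈ L.slab)
    (hxδ : B * ‖L.proj x‖ ≤ ε * (c / 2)) : ‖P (L.collapse x) - P x‖ ≤ ε * ‖P x‖ := by
  rcases le_total ‖L.form x‖ (1 / 4) with hinner | houter
  · rw [L.collapse_of_norm_form_le hinner, sub_self, norm_zero]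
    positivity
  have hxr := mem_ball_zero_iff.2 (L.norm_lt_of_mem_slab hx)
  have hline : ‖P (L.form x • L.dir) - P x‖ ≤ B * ‖L.proj x‖ := by
    rw [proj_apply, norm_sub_rev x]
    exact hlip x hxr _ (mem_ball_zero_iff.2
      (by linarith [L.norm_smul_dir_lt hx.1, L.radius_pos]))
  have hhalf : c / 2 ≤ ‖P x‖ := by
    have hc0 : 0 ≤ ε * (c / 2) := (by positivity : 0 ≤ B * ‖L.proj x‖).trans hxδ
    have := mul_le_of_le_one_left (nonneg_of_mul_nonneg_right hc0 hε0) hε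
    linarith [hc _ houter hx.1, norm_sub_norm_le (P (L.form x • L.dir)) (P x)]
  calc ‖P (L.collapse x) - P x‖ ≤ B * ‖L.collapse x - x‖ :=
        hlip x hxr _ (mem_ball_zero_iff.2 (L.norm_collapse_lt_of_mem_slab hx))
    _ ≤ B * ‖L.proj x‖ := by
        gcongr
        exact L.norm_collapse_sub_le x
    _ ≤ ε * (c / 2) := hxδ
    _ ≤ ε * ‖P x‖ := by gcongr

lemma fderiv_comp_collapse_apply_eq_zero (hP : AnalyticOnNhd ℂ P (ball 0 r)) (hx : ‖L.form x‖ ≤ 1)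
    (hx2 : 1 / 2 ≤ ‖L.form x‖) {w : E} (hw : L.form w = 0) :
    fderiv ℝ (P ∘ L.collapse) x w = 0 := by
  have hform : HasFDerivAt (fun y => L.form y • L.dir)
      ((L.form.smulRight L.dir).restrictScalars ℝ) x :=
    ((L.form.smulRight L.dir).restrictScalars ℝ).hasFDerivAt
  have hmem : L.form x • L.dir ∈ ball (0 : E) r :=
    mem_ball_zero_iff.2 (by linarith [L.norm_smul_dir_lt hx, L.radius_pos])
  have hev : P ∘ L.collapse =ᶠ[𝓝 x] P ∘ fun y => L.form y • L.dir := by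
    filter_upwards [L.form.continuous.norm.continuousAt.eventually
      (lt_mem_nhds (show 3 / 8 < ‖L.form x‖ by linarith))] with y hy
    rw [Function.comp_apply, L.collapse_of_le_norm_form hy.le, Function.comp_apply]
  rw [hev.fderiv_eq,
    (((hP _ hmem).differentiableAt.restrictScalars ℝ).hasFDerivAt.comp x hform).fderiv]
  simp [hw]

set_option maxSynthPendingDepth 3 in
lemma exists_collapsedGerm [ProperSpace E] (hP : AnalyticOnNhd ℂ P (ball 0 r)) {ε : ℝ}
    (hε0 : 0 < ε) (hε : ε ≤ 1) :
    ∃ δ > 0, Nonempty (CollapsedGerm P (ball 0 r) (L.cylinder δ) ε) := by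
  have hr := L.radius_pos
  obtain ⟨B₁, hB₁, hPB, hPlip⟩ := exists_bound_and_lipschitz hP (show 7 * r / 8 < r by linarith)
  obtain ⟨B₂, hB₂⟩ := L.exists_bound_fderiv_comp_collapse hP
  obtain ⟨c, hc0, hc⟩ := L.exists_le_norm_apply_smul_dir hP
  set δ := min (r / 4) (ε * (c / 2) / B₁)
  have hslab : (L.cylinder δ).tube 1 ⊆ L.slab := L.tube_cylinder_subset_slab (min_le_left _ _)
  have hball : ∀ x ∈ (L.cylinder δ).tube 1, ball x (r / 8) ⊆ ball 0 (7 * r / 8) := fun x hx =>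
    ball_subset_ball' (by rw [dist_zero_right]; linarith [L.norm_lt_of_mem_slab (hslab hx)])
  have hself : ∀ x ∈ (L.cylinder δ).tube 1, x ∈ ball (0 : E) (7 * r / 8) := fun x hx =>
    hball x hx (mem_ball_self (by positivity))
  have hinner : ball (0 : E) (3 * r / 4) ⊆ ball 0 (7 * r / 8) := ball_subset_ball (by linarith)
  refine ⟨δ, by positivity, ⟨{
    toFun := P ∘ L.collapse
    bound := max B₁ B₂
    radius := r / 8
    bound_pos := lt_max_of_lt_left hB₁
    radius_pos := by positivity
    ball_subset := fun x hx => (hball x hx).trans (ball_subset_ball (by linarith))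
    norm_germ_le := fun x hx => le_max_of_le_left (hPB x (hself x hx)).1
    norm_fderiv_germ_le := fun x hx => le_max_of_le_left (hPB x (hself x hx)).2
    norm_germ_sub_le := fun x hx y hy => (hPlip x (hself x hx) y (hball x hx hy)).trans
      (by gcongr; exact le_max_left _ _)
    contDiffAt := fun x hx => (L.contDiffAt_comp_collapse hP (hslab hx)).of_le (by norm_num)
    norm_fderiv_le := fun x hx => le_max_of_le_right (hB₂ x (hslab hx)).1
    norm_fderiv_fderiv_le := fun x hx => le_max_of_le_right (hB₂ x (hslab hx)).2
    norm_sub_le := fun x hx => L.norm_comp_collapse_sub_le hB₁.le hε0 hε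
      (fun y hy z hz => hPlip y (hinner hy) z (hinner hz)) hc (hslab hx) ?_
    collar := fun x hx hx2 w hw =>
      L.fderiv_comp_collapse_apply_eq_zero hP (le_of_lt hx.2) hx2 hw }⟩⟩
  calc B₁ * ‖L.proj x‖ ≤ B₁ * (ε * (c / 2) / B₁) := by
        gcongr
        exact (le_of_lt hx.1).trans (min_le_right _ _)
    _ = ε * (c / 2) := mul_div_cancel₀ _ hB₁.ne'

end TransverseLine

end TransverseLine

/-! ### The theorem for covers by cones -/

lemma nonempty_transverseLine {E : Type*} [NormedAddCommGroup E] [NormedSpace ℂ E] {P : E → ℂ}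
    {r : ℝ} (hP : AnalyticOnNhd ℂ P (ball 0 r)) (hP0 : P 0 = 0) {x : E} (hx : x ∈ ball 0 r)
    (hPx : P x ≠ 0) : Nonempty (TransverseLine P r) := by
  have hline := eventually_nhdsNE_ne_zero_line hP hx hPx
  simp only [zero_add, sub_zero, eventually_nhdsWithin_iff] at hline
  obtain ⟨η, hη, hne⟩ := Metric.eventually_nhds_iff.1 hline
  obtain ⟨e, he, heη⟩ : ∃ e : ℝ, 0 < e ∧ e < min η (1 / 2) := exists_between (by positivity)
  have hnorm : ‖(e : ℂ)‖ = e := by simp [he.le]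
  have he0 : (e : ℂ) ≠ 0 := ofReal_ne_zero.2 he.ne'
  obtain ⟨form, hform⟩ := SeparatingDual.exists_eq_one (R := ℂ)
    (smul_ne_zero he0 (fun h : x = 0 => hPx (h ▸ hP0)))
  refine ⟨⟨(e : ℂ) • x, form, hform, ?_, fun t ht ht1 => ?_⟩⟩
  · rw [norm_smul, hnorm]
    have := pos_of_mem_ball hx
    calc e * ‖x‖ ≤ 1 / 2 * ‖x‖ := by
          gcongr
          exact (heη.trans_le (min_le_right _ _)).le
      _ < r / 2 := by linarith [mem_ball_zero_iff.1 hx]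
  · rw [smul_smul]
    refine hne ?_ (mul_ne_zero ht he0)
    rw [dist_zero_right, norm_mul, hnorm]
    exact (mul_le_of_le_one_left he.le ht1).trans_lt (heη.trans_le (min_le_left _ _))

theorem ExpCompatible.exists_hasCommonGevreyExpansion {d : ℕ} {ι : Type*} [Finite ι]
    {P : (Fin d → ℂ) → ℂ} {U : ι → Set ℂ} {f : ι → (Fin d → ℂ) → ℂ} {r s γ C M : ℝ}
    (hf : ExpCompatible P (fun i => ball 0 r ∩ P ⁻¹' U i) f s γ C M)
    (hP : AnalyticOnNhd ℂ P (ball 0 r)) (hP0 : P 0 = 0) (hPne : ∃ x ∈ ball 0 r, P x ≠ 0)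
    (hU : ∀ i, IsOpen (U i)) (hcone : ∀ i, ∀ c : ℝ, 0 < c → ∀ τ ∈ U i, c • τ ∈ U i)
    (hU0 : ∀ i, 0 ∉ U i) (hcover : ∀ τ ≠ 0, ∃ i, τ ∈ U i) :
    ∃ ρ > 0, ρ ≤ r ∧
      HasCommonGevreyExpansion s P (fun i => ball 0 r ∩ P ⁻¹' U i) f (ball 0 ρ) := by
  cases nonempty_fintype ι
  obtain ⟨x, hx, hPx⟩ := hPne
  obtain ⟨φ⟩ := nonempty_conicPartition hU hcone hcover
  obtain ⟨L⟩ := nonempty_transverseLine hP hP0 hx hPx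
  obtain ⟨ε, hε0, hε⟩ : ∃ ε : ℝ, 0 < ε ∧ ε < min (1 / 2) (φ.margin / 8) :=
    exists_between (lt_min one_half_pos (div_pos φ.margin_pos (by norm_num)))
  have hε2 : ε ≤ 1 / 2 := (hε.trans_le (min_le_left _ _)).le
  have hεφ : 8 * ε ≤ φ.margin := by linarith [hε.trans_le (min_le_right _ _)]
  obtain ⟨δ, hδ, ⟨X⟩⟩ := L.exists_collapsedGerm hP hε0 (hε2.trans (by norm_num))
  have h0 : (0 : Fin d → ℂ) ∈ (L.cylinder δ).tube (1 / 2) := by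
    simpa [Cylinder.tube, TransverseLine.cylinder] using hδ
  obtain ⟨ρ, hρ, hρZ⟩ := Metric.isOpen_iff.1 ((L.cylinder δ).isOpen_tube (1 / 2)) 0 h0
  refine ⟨min ρ r, lt_min hρ (pos_of_mem_ball hx), min_le_right _ _,
    (X.scaledPartition φ hε0 hε2 hεφ).hasCommonGevreyExpansion hf
      (fun i y hy hy2 hPy w hw => X.dbar_fderiv_comp_eq_zero hε2 φ hy hy2 hPy hw)
      (fun y hy => hP y (X.ball_subset y hy (mem_ball_self X.radius_pos)))
      X.bound_pos.le X.norm_germ_le X.norm_fderiv_germ_le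
      (fun i y hy hPy => hU0 i (hPy ▸ hy.1.2)) isOpen_ball
      ((ball_subset_ball (min_le_left _ _)).trans hρZ) fun p hp h => hPx ?_⟩
  exact hP.eqOn_zero_of_preconnected_of_eventuallyEq_zero (convex_ball _ _).isPreconnected
    (ball_subset_ball (min_le_right _ _) hp) h hx

lemma HasCommonGevreyExpansion.congr {E ι : Type*} [NormedAddCommGroup E] [NormedSpace ℂ E] {s : ℝ}
    {P : E → ℂ} {S S' : ι → Set E} {f f' : ι → E → ℂ} {V : Set E}
    (h : HasCommonGevreyExpansion s P S f V) (hS : ∀ i, S' i ⊆ S i)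
    (hf : ∀ i, EqOn (f i) (f' i) (S' i)) : HasCommonGevreyExpansion s P S' f' V := by
  obtain ⟨g, b, hb, hg, hgb, hfg⟩ := h
  exact ⟨g, b, hb, hg, hgb, fun i N x hx => hf i hx.1 ▸ hfg i N x ⟨hS i hx.1, hx.2⟩⟩

/-! ### Sectors of a germ -/

section Extension

variable {d : ℕ} {ι : Type*} {P Q : (Fin d → ℂ) → ℂ} {S : ι → Set (Fin d → ℂ)}
  {f : ι → (Fin d → ℂ) → ℂ} {s γ C M : ℝ}

lemma continuousAt_expFlat {τ : ℝ} (hτ : 0 < τ) : ContinuousAt (expFlat s γ) τ :=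
  (continuousAt_const.div (continuousAt_id.rpow_const (.inl hτ.ne'))
    (Real.rpow_pos_of_pos hτ _).ne').rexp

theorem ExpCompatible.exists_extension
    (hf : ExpCompatible P (fun i => S i ∩ {x | Q x ≠ 0}) f s γ C M)
    (hS : ∀ i, IsOpen (S i)) (hP : ∀ i, ∀ x ∈ S i, ContinuousAt P x)
    (hPne : ∀ i, ∀ x ∈ S i, P x ≠ 0) (hQ : AnalyticOnNhd ℂ Q univ)
    (hQne : ∀ x, ¬ ∀ᶠ y in 𝓝 x, Q y = 0) :
    ∃ F, ExpCompatible P S F s γ C M ∧ ∀ i, ∀ x ∈ S i, Q x ≠ 0 → F i x = f i x := by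
  have hext := fun i => exists_analyticOnNhd_extension (hS i) (hQ.mono (subset_univ _))
    (fun x _ => hQne x) (hf.analyticOnNhd i) fun x hx hQx => hf.norm_le i x ⟨hx, hQx⟩
  choose F hF hFf hFM using hext
  refine ⟨F, ⟨hf.order_pos, hf.rate_pos, hf.const_pos, hf.bound_pos, hF, hFM, ?_⟩, hFf⟩
  rintro i j x ⟨hxi, hxj⟩
  by_contra! hlt
  have hdiff : ContinuousAt (fun y => ‖F i y - F j y‖) x :=
    ((hF i x hxi).continuousAt.sub (hF j x hxj).continuousAt).norm
  have hflat : ContinuousAt (fun y => C * expFlat s γ ‖P y‖) x :=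
    continuousAt_const.mul ((continuousAt_expFlat (norm_pos_iff.2 (hPne i x hxi))).comp_of_eq
      (hP i x hxi).norm rfl)
  obtain ⟨y, hQy, hlt', hyi, hyj⟩ := ((not_eventually.1 (hQne x)).and_eventually
    ((hflat.eventually_lt hdiff hlt).and
      (((hS i).eventually_mem hxi).and ((hS j).eventually_mem hxj)))).exists
  rw [hFf i y hyi hQy, hFf j y hyj hQy] at hlt'
  exact hlt'.not_ge (hf.norm_sub_le i j y ⟨⟨hyi, hQy⟩, hyj, hQy⟩)

end Extension

/-- The open sector of nonzero complex numbers having an argument in `(a, b)`. -/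
def sector (a b : ℝ) : Set ℂ := Complex.exp '' {z | z.im ∈ Ioo a b}

lemma isOpen_sector (a b : ℝ) : IsOpen (sector a b) :=
  Complex.isOpenMap_exp _ (isOpen_Ioo.preimage Complex.continuous_im)

lemma zero_notMem_sector (a b : ℝ) : 0 ∉ sector a b := by
  rintro ⟨z, -, hz⟩
  exact Complex.exp_ne_zero z hz

lemma smul_mem_sector {a b c : ℝ} (hc : 0 < c) {τ : ℂ} (h : τ ∈ sector a b) :
    c • τ ∈ sector a b := by
  obtain ⟨z, hz, rfl⟩ := h
  refine ⟨Real.log c + z, by simpa using hz, ?_⟩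
  rw [Complex.exp_add, ← Complex.ofReal_exp, Real.exp_log hc, Complex.real_smul]

lemma mem_sector_iff {a b : ℝ} {τ : ℂ} :
    τ ∈ sector a b ↔ τ ≠ 0 ∧ ∃ θ ∈ Ioo a b, τ = (‖τ‖ : ℂ) * Complex.exp (θ * I) := by
  constructor
  · intro h
    refine ⟨fun h0 => zero_notMem_sector a b (h0 ▸ h), ?_⟩
    obtain ⟨z, hz, rfl⟩ := h
    refine ⟨z.im, hz, ?_⟩
    rw [Complex.norm_exp, Complex.ofReal_exp, ← Complex.exp_add, Complex.re_add_im]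
  · rintro ⟨h0, θ, hθ, h⟩
    refine ⟨Real.log ‖τ‖ + θ * I, by simpa using hθ, ?_⟩
    rw [Complex.exp_add, ← Complex.ofReal_exp, Real.exp_log (norm_pos_iff.2 h0), ← h]

section Polydisk

variable {d : ℕ} {P : (Fin d → ℂ) → ℂ} {r : ℝ}

lemma polydisk_eq_ball (d : ℕ) {ρ : ℝ} (hρ : 0 < ρ) : polydisk d ρ = ball 0 ρ := by
  ext x
  rw [mem_ball_zero_iff, pi_norm_lt_iff hρ]
  rfl

/-- The product of the coordinates, whose zero set is the union of the coordinate hyperplanes. -/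
def coordProd (x : Fin d → ℂ) : ℂ := ∏ i, x i

lemma coordProd_ne_zero_iff {x : Fin d → ℂ} : coordProd x ≠ 0 ↔ ∀ i, x i ≠ 0 := by
  simp [coordProd, Finset.prod_ne_zero_iff]

lemma analyticOnNhd_coordProd : AnalyticOnNhd ℂ (coordProd (d := d)) univ := fun x _ =>
  Finset.analyticAt_fun_prod _ fun i _ => (ContinuousLinearMap.proj (R := ℂ) i).analyticAt x

lemma not_eventually_coordProd_eq_zero (x : Fin d → ℂ) : ¬ ∀ᶠ y in 𝓝 x, coordProd y = 0 := fun h =>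
  coordProd_ne_zero_iff.2 (fun _ => one_ne_zero)
    (analyticOnNhd_coordProd.eqOn_zero_of_preconnected_of_eventuallyEq_zero isPreconnected_univ
      (mem_univ x) h (mem_univ 1))

lemma PSector_eq (P : (Fin d → ℂ) → ℂ) (a b : ℝ) (hr : 0 < r) :
    PSector d P a b r = (ball 0 r ∩ P ⁻¹' sector a b) ∩ {x | coordProd x ≠ 0} := by
  ext x
  rw [← polydisk_eq_ball d hr]
  simp only [PSector, polydisk, mem_inter_iff, mem_ofPred_eq, mem_preimage, mem_sector_iff,
    coordProd_ne_zero_iff, norm_pos_iff, forall_and]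
  tauto

lemma exists_apply_smul_eq_smul {E : Type*} [NormedAddCommGroup E] [NormedSpace ℂ E] {P : E → ℂ}
    (hP : AnalyticOnNhd ℂ P (ball 0 r)) (hP0 : P 0 = 0) {x : E} (hx : x ∈ ball 0 r)
    (hPx : P x ≠ 0) (τ : ℂ) : ∃ c : ℝ, 0 < c ∧ ∃ t : ℂ, t • x ∈ ball 0 r ∧ P (t • x) = c • τ := by
  have h0 : (0 : ℂ) • x ∈ ball 0 r := by simpa using pos_of_mem_ball hx
  have han : AnalyticAt ℂ (fun t : ℂ => P (t • x)) 0 :=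
    (hP _ h0).comp_of_eq (analyticAt_id.smul analyticAt_const) rfl
  have hopen : 𝓝 (P ((0 : ℂ) • x)) ≤ map (fun t : ℂ => P (t • x)) (𝓝 0) := by
    refine han.eventually_constant_or_nhds_le_map_nhds.resolve_left fun hconst => ?_
    obtain ⟨t, ht, htc⟩ := ((eventually_nhdsNE_ne_zero_line hP hx hPx).and
      (hconst.filter_mono nhdsWithin_le_nhds)).exists
    simp only [zero_add, sub_zero] at ht
    exact ht (by simpa [hP0] using htc)
  have hball : ∀ᶠ t : ℂ in 𝓝 0, t • x ∈ ball (0 : E) r :=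
    (show Continuous fun t : ℂ => t • x by fun_prop).continuousAt.eventually
      (isOpen_ball.mem_nhds h0)
  have himage : (fun t : ℂ => P (t • x)) '' {t | t • x ∈ ball 0 r} ∈ 𝓝 (0 : ℂ) := by
    simpa [hP0] using hopen (image_mem_map hball)
  have hray : Tendsto (fun c : ℝ => c • τ) (𝓝[>] 0) (𝓝 0) :=
    (Continuous.tendsto' (by fun_prop) 0 0 (zero_smul ℝ τ)).mono_left nhdsWithin_le_nhds
  obtain ⟨c, ⟨t, ht, htc⟩, hc⟩ := ((hray.eventually himage).and self_mem_nhdsWithin).exists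
  exact ⟨c, hc, t, ht, htc⟩

lemma exists_apply_ne_zero_and_coordProd_ne_zero (hP : AnalyticOnNhd ℂ P (ball 0 r))
    (hPne : ∃ x ∈ ball 0 r, P x ≠ 0) : ∃ x ∈ ball 0 r, P x ≠ 0 ∧ coordProd x ≠ 0 := by
  obtain ⟨x, hx, hPx⟩ := hPne
  have hfreq := not_eventually.1 (not_eventually_coordProd_eq_zero x)
  obtain ⟨y, hy, hyr, hPy⟩ := (hfreq.and_eventually
    ((isOpen_ball.eventually_mem hx).and ((hP x hx).continuousAt.eventually_ne hPx))).exists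
  exact ⟨y, hyr, hPy, hy⟩

lemma exists_mem_sector {ι : Type*} {a b : ι → ℝ} (hr : 0 < r)
    (hP : AnalyticOnNhd ℂ P (ball 0 r)) (hP0 : P 0 = 0) (hPne : ∃ x ∈ ball 0 r, P x ≠ 0)
    (hcover : {x ∈ ball 0 r | P x ≠ 0 ∧ ∀ i, x i ≠ 0} ⊆ ⋃ j, PSector d P (a j) (b j) r)
    {τ : ℂ} (hτ : τ ≠ 0) : ∃ j, τ ∈ sector (a j) (b j) := by
  obtain ⟨x, hx, hPx, hxi⟩ := exists_apply_ne_zero_and_coordProd_ne_zero hP hPne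
  obtain ⟨c, hc, t, ht, htτ⟩ := exists_apply_smul_eq_smul hP hP0 hx hPx τ
  have hPt : P (t • x) ≠ 0 := htτ ▸ smul_ne_zero hc.ne' hτ
  have ht0 : t ≠ 0 := fun h => hPt (by rw [h, zero_smul, hP0])
  obtain ⟨j, hj⟩ := mem_iUnion.1
    (hcover ⟨ht, hPt, fun i => smul_ne_zero ht0 (coordProd_ne_zero_iff.1 hxi i)⟩)
  rw [PSector_eq P _ _ hr] at hj
  have hmem := smul_mem_sector (inv_pos.2 hc) hj.1.2
  rw [htτ, inv_smul_smul₀ hc.ne'] at hmem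
  exact ⟨j, hmem⟩

end Polydisk

end RamisSibuya

open RamisSibuya

/-- **Ramis–Sibuya theorem for asymptotics with respect to a germ** (Theorem 7.17).
If `P`-sectors `Π_j` cover `{x ∈ D(0;r) : P(x) ≠ 0, all x_i ≠ 0}`, the `f_j` are bounded
holomorphic on `Π_j`, and the pairwise differences are exponentially small of order `1/s`
in `|P|`, then the `f_j` have a common `P`-`s`-Gevrey asymptotic expansion. -/
theorem ramis_sibuya_for_germ_asymptotics
    (d : ℕ) (hd : 1 ≤ d) (s : ℝ) (hs : 0 < s) (r : ℝ) (hr : 0 < r)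
    (P : (Fin d → ℂ) → ℂ) (hP : AnalyticOnNhd ℂ P (polydisk d r))
    (hP0 : P 0 = 0) (hPne : ∃ x ∈ polydisk d r, P x ≠ 0)
    (m : ℕ) (hm : 1 ≤ m) (a b : Fin m → ℝ)
    (hab : ∀ j, a j < b j) (h2π : ∀ j, b j ≤ a j + 2 * Real.pi)
    (hcover : {x ∈ polydisk d r | P x ≠ 0 ∧ ∀ i, x i ≠ 0} ⊆
      ⋃ j, PSector d P (a j) (b j) r)
    (f : Fin m → (Fin d → ℂ) → ℂ)
    (hfA : ∀ j, AnalyticOnNhd ℂ (f j) (PSector d P (a j) (b j) r))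
    (hfB : ∀ j, ∃ M, ∀ x ∈ PSector d P (a j) (b j) r, ‖f j x‖ ≤ M)
    (γ C : ℝ) (hγ : 0 < γ) (hC : 0 < C)
    (hdiff : ∀ j₁ j₂ : Fin m,
      ∀ x ∈ PSector d P (a j₁) (b j₁) r ∩ PSector d P (a j₂) (b j₂) r,
      ‖f j₁ x - f j₂ x‖ ≤
        C * Real.exp (-γ / ‖P x‖ ^ (1 / s))) :
    ∃ ρ > 0, ρ ≤ r ∧ ∃ g : ℕ → (Fin d → ℂ) → ℂ, ∃ K A : ℝ, 0 < K ∧ 0 < A ∧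
      (∀ n, AnalyticOnNhd ℂ (g n) (polydisk d ρ)) ∧
      (∀ n : ℕ, ∀ x ∈ polydisk d ρ,
        ‖g n x‖ ≤ K * A ^ n * Real.Gamma (s * n + 1)) ∧
      ∀ j : Fin m, ∀ N : ℕ, ∀ x ∈ PSector d P (a j) (b j) r ∩ polydisk d ρ,
        ‖f j x - ∑ n ∈ Finset.range N, g n x * P x ^ n‖ ≤
          K * A ^ N * Real.Gamma (s * N + 1) * ‖P x‖ ^ N := by
  have hball := polydisk_eq_ball d hr
  rw [hball] at hP hPne hcover
  obtain ⟨M, hM, hfM⟩ : ∃ M > 0, ∀ j, ∀ x ∈ PSector d P (a j) (b j) r, ‖f j x‖ ≤ M := by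
    choose M hM using hfB
    obtain ⟨M', hM'⟩ := (finite_range M).bddAbove
    exact ⟨max 1 M', lt_max_of_lt_left one_pos, fun j x hx =>
      (hM j x hx).trans (le_max_of_le_right (hM' (mem_range_self j)))⟩
  have hf : ExpCompatible P (fun j => PSector d P (a j) (b j) r) f s γ C M :=
    ⟨hs, hγ, hC, hM, hfA, hfM, hdiff⟩
  simp only [PSector_eq P _ _ hr] at hf ⊢
  obtain ⟨F, hF, hFf⟩ := hf.exists_extension
    (fun j => hP.continuousOn.isOpen_inter_preimage Metric.isOpen_ball (isOpen_sector _ _))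
    (fun j x hx => (hP x hx.1).continuousAt)
    (fun j x hx hPx => zero_notMem_sector (a j) (b j) (hPx ▸ hx.2))
    analyticOnNhd_coordProd not_eventually_coordProd_eq_zero
  obtain ⟨ρ, hρ, hρr, hexp⟩ := hF.exists_hasCommonGevreyExpansion hP hP0 hPne
    (fun j => isOpen_sector _ _) (fun j c hc τ => smul_mem_sector hc)
    (fun j => zero_notMem_sector _ _) (fun τ => exists_mem_sector hr hP hP0 hPne hcover)
  obtain ⟨g, u, ⟨K, A, hK, hA, hu⟩, hg, hgu, hfg⟩ :=
    hexp.congr (fun j => inter_subset_left) fun j x hx => hFf j x hx.1 hx.2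
  rw [← polydisk_eq_ball d hρ] at hg hgu hfg
  exact ⟨ρ, hρ, hρr, g, K, A, hK, hA, hg, fun n x hx => (hgu n x hx).trans (hu n),
    fun j N x hx => (hfg j N x hx).trans (by gcongr; exact hu N)⟩
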